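/- Theorem 1 (Inner bound). Suppose there are finite sets 𝒯,𝒰₁,𝒰₂ and a pmf of the form p(x₁,x₂,z,t,u₁,u₂,y) = q(x₁,x₂,z) p(t) p(u₁|x₁,t) p(u₂|x₂,t) p(y|u₁,u₂,z,t) satisfying ∑_{u₁,u₂} p(x₁,x₂,z,u₁,u₂,y|t) = q(x₁,x₂,z,y) for every t, such that R₁ ≥ I(U₁;X₁|U₂,Z,T), R₂ ≥ I(U₂;X₂|U₁,Z,T), R₁+R₂ ≥ I(U₁,U₂;X₁,X₂|Z,T), R₁+R₀₁ ≥ I(U₁;X₁,X₂,Y|Z,T) − I(U₁;U₂|Z,T), R₂+R₀₂ ≥ I(U₂;X₁,X₂,Y|Z,T) − I(U₁;U₂|Z,T), R₁+R₂+R₀₁ ≥ I(U₁;X₁,X₂,Y|Z,T) + I(U₂;X₂|U₁,Z,T), R₁+R₂+R₀₂ ≥ I(U₂;X₁,X₂,Y|Z,T) + I(U₁;X₁|U₂,Z,T), and R₁+R₂+R₀₁+R₀₂ ≥ I(U₁,U₂;X₁,X₂,Y|Z,T). Then the rate tuple (R₁,R₂,R₀₁,R₀₂) lies in R_MAC-coord.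 -/

import Mathlib

/-!
The proof follows the method of output statistics of random binning.

Bin the auxiliary sequences: `U₁` is mapped at random to a triple `(s₁, f₁, m₁)` and `U₂` to
`(s₂, f₂, m₂)`. Here `sᵢ` plays the role of shared randomness, `fᵢ` is an auxiliary index to be
frozen later, and `mᵢ` is the message. Under the target law `fullLaw` of
`(X₁, X₂, Z, T, U₁, U₂, Y)` three things hold with small error if the bin rates are suitable.

* Given `(T, Xᵢ)` the pair `(sᵢ, fᵢ)` is nearly uniform (`binning_one`), so an encoder that is
  handed uniform `(sᵢ, fᵢ)` and draws `mᵢ` from the conditional law of the bin index produces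
  nearly the target law (`binEnc`, `binOut_bound`).
* Given `(T, Z)` and all six indices, `(U₁, U₂)` can be recovered (`slepian_wolf`), so the decoder
  can generate `Y` from its channel.
* Given `(T, X₁, X₂, Z, Y)` the pair `(f₁, f₂)` is nearly uniform (`binning_two`), hence freezing
  `(f₁, f₂)`, the bin maps and the value of `T` at good values does not disturb the law of
  `(X₁, X₂, Z, Y)`, which by hypothesis does not depend on `T`.

The lemma `one_shot` combines these into a bound for arbitrary alphabets, in which the error terms
are tail probabilities of conditional information densities plus powers of the numbers of bins.
For product laws the tails decay exponentially by a Chernoff bound (`upTail_iid`, `loTail_iid`).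
The rate conditions of the theorem are, by Fourier–Motzkin elimination and submodularity of
entropy, what is needed for suitable bin rates to exist at rates `Rᵢ + ε`
(`rateFacts`, `RateFacts.exists_bins`). The rate of the bin index `sᵢ` may be smaller than that of
the shared randomness; surplus randomness is removed by reduction modulo the number of bins
(`exists_share`). Letting `ε` tend to `0` gives membership in the closure.
-/

open Finset

/-- A probability mass function on a finite type. -/
def IsPMF {α : Type*} [Fintype α] (p : α → ℝ) : Prop :=
  (∀ a, 0 ≤ p a) ∧ ∑ a, p a = 1

/-- Marginal (pushforward) of a pmf `p` on `Ω` under the map `f`. -/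
noncomputable def marg {Ω β : Type*} [Fintype Ω] [DecidableEq β]
    (p : Ω → ℝ) (f : Ω → β) (b : β) : ℝ :=
  ∑ ω : Ω, if f ω = b then p ω else 0

/-- Shannon entropy (in bits) of a pmf given as a function. -/
noncomputable def entPMF {β : Type*} [Fintype β] (r : β → ℝ) : ℝ :=
  -∑ b : β, r b * Real.logb 2 (r b)

/-- Entropy (in bits) of the random variable `f` under the joint pmf `p`. -/
noncomputable def ent {Ω β : Type*} [Fintype Ω] [Fintype β] [DecidableEq β]
    (p : Ω → ℝ) (f : Ω → β) : ℝ :=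
  entPMF (fun b => marg p f b)

/-- Conditional entropy `H(f | g)`. -/
noncomputable def condEnt {Ω β γ : Type*} [Fintype Ω] [Fintype β] [Fintype γ]
    [DecidableEq β] [DecidableEq γ] (p : Ω → ℝ) (f : Ω → β) (g : Ω → γ) : ℝ :=
  ent p (fun ω => (f ω, g ω)) - ent p g

/-- Mutual information `I(f ; g)`. -/
noncomputable def mi {Ω β γ : Type*} [Fintype Ω] [Fintype β] [Fintype γ]
    [DecidableEq β] [DecidableEq γ] (p : Ω → ℝ) (f : Ω → β) (g : Ω → γ) : ℝ :=
  ent p f + ent p g - ent p (fun ω => (f ω, g ω))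

/-- Conditional mutual information `I(f ; g | h)`. -/
noncomputable def cmi {Ω β γ δ : Type*} [Fintype Ω] [Fintype β] [Fintype γ] [Fintype δ]
    [DecidableEq β] [DecidableEq γ] [DecidableEq δ]
    (p : Ω → ℝ) (f : Ω → β) (g : Ω → γ) (h : Ω → δ) : ℝ :=
  ent p (fun ω => (f ω, h ω)) + ent p (fun ω => (g ω, h ω))
    - ent p (fun ω => (f ω, g ω, h ω)) - ent p h

/-- Number of messages/shared-randomness values at rate `R` and blocklength `n`. -/
noncomputable def cnum (n : ℕ) (R : ℝ) : ℕ := Nat.ceil ((2 : ℝ) ^ ((n : ℝ) * R))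

/-- A `(2^{nR01}, 2^{nR02}, 2^{nR1}, 2^{nR2}, n)` code: two randomized encoders and a
randomized decoder. -/
structure MACCode (X1 X2 Z Y : Type) [Fintype X1] [Fintype X2] [Fintype Z] [Fintype Y]
    (n : ℕ) (R1 R2 R01 R02 : ℝ) where
  enc1 : Fin (cnum n R01) → (Fin n → X1) → Fin (cnum n R1) → ℝ
  enc2 : Fin (cnum n R02) → (Fin n → X2) → Fin (cnum n R2) → ℝ
  dec : Fin (cnum n R01) → Fin (cnum n R02) → Fin (cnum n R1) → Fin (cnum n R2) →
      (Fin n → Z) → (Fin n → Y) → ℝ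
  enc1_pmf : ∀ s x, IsPMF (enc1 s x)
  enc2_pmf : ∀ s x, IsPMF (enc2 s x)
  dec_pmf : ∀ s1 s2 m1 m2 z, IsPMF (dec s1 s2 m1 m2 z)

/-- The `(X₁,X₂,Z)`-marginal of `q`. -/
noncomputable def margXXZ {X1 X2 Z Y : Type} [Fintype Y] (q : X1 × X2 × Z × Y → ℝ) :
    X1 × X2 × Z → ℝ :=
  fun a => ∑ y : Y, q (a.1, a.2.1, a.2.2, y)

/-- The joint pmf on `(X₁ⁿ, X₂ⁿ, Zⁿ, Yⁿ)` induced by a code, with sources i.i.d. `q3`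
and the shared randomness uniform and independent of everything else. -/
noncomputable def inducedPMF {X1 X2 Z Y : Type} [Fintype X1] [Fintype X2] [Fintype Z] [Fintype Y]
    (q3 : X1 × X2 × Z → ℝ) {n : ℕ} {R1 R2 R01 R02 : ℝ}
    (C : MACCode X1 X2 Z Y n R1 R2 R01 R02) :
    ((Fin n → X1) × (Fin n → X2) × (Fin n → Z) × (Fin n → Y)) → ℝ :=
  fun w =>
    ∑ s1 : Fin (cnum n R01), ∑ s2 : Fin (cnum n R02),
      ∑ m1 : Fin (cnum n R1), ∑ m2 : Fin (cnum n R2),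
        ((cnum n R01 : ℝ) * (cnum n R02 : ℝ))⁻¹ *
          (∏ i : Fin n, q3 (w.1 i, w.2.1 i, w.2.2.1 i)) *
          C.enc1 s1 w.1 m1 * C.enc2 s2 w.2.1 m2 *
          C.dec s1 s2 m1 m2 w.2.2.1 w.2.2.2

/-- The `n`-fold i.i.d. product of `q` on sequences. -/
noncomputable def iidPMF {X1 X2 Z Y : Type} (q : X1 × X2 × Z × Y → ℝ) (n : ℕ) :
    ((Fin n → X1) × (Fin n → X2) × (Fin n → Z) × (Fin n → Y)) → ℝ :=
  fun w => ∏ i : Fin n, q (w.1 i, w.2.1 i, w.2.2.1 i, w.2.2.2 i)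

/-- Total variation distance between two pmfs on a finite type. -/
noncomputable def tvDist {α : Type*} [Fintype α] (p q : α → ℝ) : ℝ :=
  (1 / 2 : ℝ) * ∑ a : α, |p a - q a|

/-- Achievability of a rate tuple `(R₁, R₂, R₀₁, R₀₂)` for the distribution `q`. -/
def Achievable {X1 X2 Z Y : Type} [Fintype X1] [Fintype X2] [Fintype Z] [Fintype Y]
    (q : X1 × X2 × Z × Y → ℝ) (R1 R2 R01 R02 : ℝ) : Prop :=
  ∃ C : (n : ℕ) → MACCode X1 X2 Z Y n R1 R2 R01 R02,
    Filter.Tendsto (fun n => tvDist (inducedPMF (margXXZ q) (C n)) (iidPMF q n))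
      Filter.atTop (nhds 0)

/-- The rate region `R_MAC-coord`: the closure of the set of achievable rate tuples. -/
def RMACcoord {X1 X2 Z Y : Type} [Fintype X1] [Fintype X2] [Fintype Z] [Fintype Y]
    (q : X1 × X2 × Z × Y → ℝ) : Set (ℝ × ℝ × ℝ × ℝ) :=
  closure {r : ℝ × ℝ × ℝ × ℝ | Achievable q r.1 r.2.1 r.2.2.1 r.2.2.2}

section Proj

variable {X1 X2 Z T U1 U2 Y : Type*}

/-- Coordinate projections on the single-letter joint alphabet
`X₁ × X₂ × Z × T × U₁ × U₂ × Y`. -/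
def vX1 : X1 × X2 × Z × T × U1 × U2 × Y → X1 := fun ω => ω.1
def vX2 : X1 × X2 × Z × T × U1 × U2 × Y → X2 := fun ω => ω.2.1
def vZ : X1 × X2 × Z × T × U1 × U2 × Y → Z := fun ω => ω.2.2.1
def vT : X1 × X2 × Z × T × U1 × U2 × Y → T := fun ω => ω.2.2.2.1
def vU1 : X1 × X2 × Z × T × U1 × U2 × Y → U1 := fun ω => ω.2.2.2.2.1
def vU2 : X1 × X2 × Z × T × U1 × U2 × Y → U2 := fun ω => ω.2.2.2.2.2.1
def vY : X1 × X2 × Z × T × U1 × U2 × Y → Y := fun ω => ω.2.2.2.2.2.2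

end Proj

/-! ### Indicators, averages and random hash families -/

/-- The real-valued indicator of a proposition, with no decidability instance attached. -/
noncomputable def ind (P : Prop) : ℝ := by
  classical exact if P then 1 else 0

lemma ind_of {P : Prop} (h : P) : ind P = 1 := by simp [ind, h]

lemma ind_not {P : Prop} (h : ¬P) : ind P = 0 := by simp [ind, h]

lemma ind_nonneg (P : Prop) : 0 ≤ ind P := by unfold ind; split_ifs <;> norm_num

lemma ind_le_one (P : Prop) : ind P ≤ 1 := by unfold ind; split_ifs <;> norm_num

lemma ind_mul_ind (P Q : Prop) : ind P * ind Q = ind (P ∧ Q) := by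
  by_cases hP : P <;> by_cases hQ : Q <;> simp [ind, hP, hQ]

lemma ind_congr {P Q : Prop} (h : P ↔ Q) : ind P = ind Q := by rw [propext h]

lemma ind_mono {P Q : Prop} (h : P → Q) : ind P ≤ ind Q := by
  by_cases hP : P
  · rw [ind_of hP, ind_of (h hP)]
  · rw [ind_not hP]; exact ind_nonneg Q

lemma ind_add_ind_not (P : Prop) : ind P + ind (¬P) = 1 := by
  by_cases hP : P <;> simp [ind, hP]

lemma ind_sq (P : Prop) : ind P * ind P = ind P := by
  by_cases hP : P <;> simp [ind, hP]

lemma sum_ind_mul {K : Type*} [Fintype K] (a : K) (f : K → ℝ) :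
    ∑ k, ind (a = k) * f k = f a := by
  classical
  rw [Finset.sum_eq_single a]
  · simp [ind]
  · intro b _ hb; rw [ind_not (fun h => hb h.symm), zero_mul]
  · simp

lemma sum_ind_mul' {K : Type*} [Fintype K] (a : K) (f : K → ℝ) :
    ∑ k, ind (k = a) * f k = f a := by
  rw [← sum_ind_mul a f]
  exact sum_congr rfl fun k _ => by rw [ind_congr eq_comm]

lemma sum_ind {K : Type*} [Fintype K] (a : K) : ∑ k, ind (a = k) = 1 := by
  simpa using sum_ind_mul a (fun _ => (1 : ℝ))

lemma prod_ind {ι : Type*} [Fintype ι] (P : ι → Prop) : ∏ i, ind (P i) = ind (∀ i, P i) := by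
  by_cases h : ∀ i, P i
  · rw [ind_of h]; exact prod_eq_one fun i _ => ind_of (h i)
  · rw [ind_not h]
    push Not at h
    obtain ⟨i, hi⟩ := h
    exact prod_eq_zero (mem_univ i) (ind_not hi)

/-- Some point does at least as well as the average. -/
lemma exists_le_of_avg {I : Type*} [Fintype I] {μ : I → ℝ} (hμ : IsPMF μ) {f : I → ℝ} {ε : ℝ}
    (h : ∑ i, μ i * f i ≤ ε) : ∃ i, f i ≤ ε := by
  by_contra! hc
  have h1 : ∃ i ∈ (univ : Finset I), μ i ≠ 0 := by
    by_contra! h0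
    have := hμ.2
    rw [sum_eq_zero h0] at this
    norm_num at this
  obtain ⟨i, -, hi⟩ := h1
  have h2 : ∑ i, μ i * ε < ∑ i, μ i * f i :=
    sum_lt_sum (fun j _ => mul_le_mul_of_nonneg_left (hc j).le (hμ.1 j))
      ⟨i, mem_univ i, mul_lt_mul_of_pos_left (hc i) (lt_of_le_of_ne (hμ.1 i) hi.symm)⟩
  rw [← sum_mul, hμ.2, one_mul] at h2
  linarith

/-- The first moment is at most the square root of the second one. -/
lemma avg_abs_le_sqrt {I : Type*} [Fintype I] {μ : I → ℝ} (hμ : IsPMF μ) (f : I → ℝ) {v : ℝ}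
    (hv : 0 ≤ v) (h : ∑ i, μ i * f i ^ 2 ≤ v ^ 2) : ∑ i, μ i * |f i| ≤ v := by
  set m := ∑ i, μ i * |f i| with hm
  have h0 : 0 ≤ ∑ i, μ i * (|f i| - m) ^ 2 :=
    sum_nonneg fun i _ => mul_nonneg (hμ.1 i) (sq_nonneg _)
  have h1 : ∑ i, μ i * (|f i| - m) ^ 2 = ∑ i, μ i * f i ^ 2 - m ^ 2 := by
    have : ∀ i, μ i * (|f i| - m) ^ 2 = μ i * f i ^ 2 - 2 * m * (μ i * |f i|) + m ^ 2 * μ i := by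
      intro i; rw [← sq_abs (f i)]; ring
    simp_rw [this]
    rw [sum_add_distrib, sum_sub_distrib, ← mul_sum, ← mul_sum, hμ.2, ← hm]; ring
  exact abs_le_of_sq_le_sq' (by linarith) hv |>.2

lemma IsPMF.prod {I J : Type*} [Fintype I] [Fintype J] {μ : I → ℝ} {ν : J → ℝ}
    (hμ : IsPMF μ) (hν : IsPMF ν) : IsPMF (fun x : I × J => μ x.1 * ν x.2) := by
  refine ⟨fun x => mul_nonneg (hμ.1 _) (hν.1 _), ?_⟩
  rw [Fintype.sum_prod_type]
  simp only [← mul_sum, hν.2, mul_one, hμ.2]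

/-- A random function `h φ : A → K`, `φ ∼ μ`, whose values are uniform on `K` and pairwise
independent. -/
def PairUnif {Φ A K : Type*} [Fintype Φ] [Fintype K] (μ : Φ → ℝ) (h : Φ → A → K) : Prop :=
  IsPMF μ ∧ (∀ a k, ∑ φ, μ φ * ind (h φ a = k) = (Fintype.card K : ℝ)⁻¹) ∧
    ∀ a a', a ≠ a' → ∀ k k', ∑ φ, μ φ * (ind (h φ a = k) * ind (h φ a' = k')) =
      ((Fintype.card K : ℝ)⁻¹) ^ 2

/-- A uniformly random function is such a family. -/
lemma exists_pairUnif (A K : Type) [Fintype A] [Fintype K] [Nonempty K] :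
    ∃ (Φ : Type) (_ : Fintype Φ) (μ : Φ → ℝ) (h : Φ → A → K), PairUnif μ h := by
  classical
  have hK : (Fintype.card K : ℝ) ≠ 0 := by exact_mod_cast Fintype.card_ne_zero
  set c : ℝ := (Fintype.card K : ℝ)⁻¹ with hc
  have hsum1 : ∑ _k : K, c = 1 := by simp [hc, hK]
  -- the probability of prescribed constraints factors over the points of `A`
  have key : ∀ P : A → K → Prop, ∑ φ : A → K, (∏ _a : A, c) * ind (∀ a, P a (φ a)) =
      ∏ a, ∑ k, c * ind (P a k) := by
    intro P
    rw [Fintype.prod_sum]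
    refine sum_congr rfl fun φ _ => ?_
    rw [prod_mul_distrib, prod_ind]
  refine ⟨A → K, inferInstance, fun _ => ∏ _a : A, c, fun φ => φ, ⟨?_, ?_⟩, ?_, ?_⟩
  · intro _; exact prod_nonneg fun _ _ => by positivity
  · have := key (fun _ _ => True)
    simpa [ind_of trivial, hsum1, ind] using this
  · intro a k
    have := key (fun b l => b = a → l = k)
    have e1 : ∀ φ : A → K, ind (∀ b, b = a → φ b = k) = ind (φ a = k) := fun φ =>
      ind_congr (by simp)
    simp_rw [e1] at this
    rw [this, prod_eq_single a]
    · have e2 : ∀ l : K, c * ind (a = a → l = k) = ind (l = k) * c := fun l => by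
        rw [mul_comm]; congr 1; exact ind_congr (by simp)
      exact (sum_congr rfl fun l _ => e2 l).trans (sum_ind_mul' k _)
    · intro b _ hb
      simp only [hb, false_imp_iff, ind_of trivial, mul_one, hsum1]
    · simp
  · intro a a' haa k k'
    have := key (fun b l => (b = a → l = k) ∧ (b = a' → l = k'))
    have e1 : ∀ φ : A → K, ind (∀ b, (b = a → φ b = k) ∧ (b = a' → φ b = k')) =
        ind (φ a = k) * ind (φ a' = k') := fun φ => by
      rw [ind_mul_ind]
      refine ind_congr ⟨fun h => ⟨(h a).1 rfl, (h a').2 rfl⟩, ?_⟩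
      rintro ⟨h1, h2⟩ b
      exact ⟨fun h => h ▸ h1, fun h => h ▸ h2⟩
    simp_rw [e1] at this
    rw [this, Fintype.prod_eq_mul a a' haa]
    · have e2 : ∀ l : K, c * ind ((a = a → l = k) ∧ (a = a' → l = k')) = ind (l = k) * c :=
        fun l => by rw [mul_comm]; congr 1; exact ind_congr (by simp [haa])
      have e3 : ∀ l : K, c * ind ((a' = a → l = k) ∧ (a' = a' → l = k')) = ind (l = k') * c :=
        fun l => by rw [mul_comm]; congr 1; exact ind_congr (by simp [haa.symm])
      rw [sq]
      exact congrArg₂ (· * ·) ((sum_congr rfl fun l _ => e2 l).trans (sum_ind_mul' k _))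
        ((sum_congr rfl fun l _ => e3 l).trans (sum_ind_mul' k' _))
    · rintro b ⟨hb, hb'⟩
      simp only [hb, hb', false_imp_iff, and_self, ind_of trivial, mul_one, hsum1]

/-- Forgetting the second coordinate of a hash value. -/
lemma PairUnif.fst {Φ A K M : Type*} [Fintype Φ] [Fintype K] [Fintype M] [Nonempty M]
    {μ : Φ → ℝ} {h : Φ → A → K × M} (H : PairUnif μ h) : PairUnif μ (fun φ a => (h φ a).1) := by
  have hM : (Fintype.card M : ℝ) ≠ 0 := by exact_mod_cast Fintype.card_ne_zero
  have e : ∀ (x : K × M) (k : K), ind (x.1 = k) = ∑ m, ind (x = (k, m)) := by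
    intro x k
    have : ∀ m, ind (x = (k, m)) = ind (x.2 = m) * ind (x.1 = k) := fun m => by
      rw [ind_mul_ind]; exact ind_congr (by rw [Prod.ext_iff, and_comm])
    simp_rw [this, ← sum_mul, sum_ind, one_mul]
  refine ⟨H.1, fun a k => ?_, fun a a' haa k k' => ?_⟩
  · simp_rw [e, mul_sum]
    rw [sum_comm]
    simp_rw [H.2.1]
    simp [Fintype.card_prod]
  · simp_rw [e, sum_mul_sum, mul_sum]
    rw [sum_comm]
    have : ∀ m, ∑ φ, ∑ m', μ φ * (ind (h φ a = (k, m)) * ind (h φ a' = (k', m'))) =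
        ∑ m' : M, ((Fintype.card (K × M) : ℝ)⁻¹) ^ 2 := fun m => by
      rw [sum_comm]; exact sum_congr rfl fun m' _ => H.2.2 a a' haa _ _
    simp_rw [this]
    simp [Fintype.card_prod]; field_simp

/-- Forgetting the first coordinate of a hash value. -/
lemma PairUnif.snd {Φ A K M : Type*} [Fintype Φ] [Fintype K] [Fintype M] [Nonempty K]
    {μ : Φ → ℝ} {h : Φ → A → K × M} (H : PairUnif μ h) : PairUnif μ (fun φ a => (h φ a).2) := by
  have H' : PairUnif μ (fun φ a => (h φ a).swap) := by
    have e : ∀ (x : K × M) (k : M × K), ind (x.swap = k) = ind (x = k.swap) := fun x k =>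
      ind_congr ⟨fun h => by rw [← h, Prod.swap_swap], fun h => by rw [h, Prod.swap_swap]⟩
    refine ⟨H.1, fun a k => ?_, fun a a' haa k k' => ?_⟩
    · simp_rw [e, H.2.1]; simp [mul_comm]
    · simp_rw [e, H.2.2 a a' haa]; simp [mul_comm]
  exact H'.fst

/-- The probability that two points both receive the value `k`. -/
lemma PairUnif.second {Φ A K : Type*} [Fintype Φ] [Fintype K] [Nonempty K]
    {μ : Φ → ℝ} {h : Φ → A → K} (H : PairUnif μ h) (a a' : A) (k : K) :
    ∑ φ, μ φ * (ind (h φ a = k) * ind (h φ a' = k)) =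
      ((Fintype.card K : ℝ)⁻¹) ^ 2 * (1 + ((Fintype.card K : ℝ) - 1) * ind (a = a')) := by
  have hK : (Fintype.card K : ℝ) ≠ 0 := by exact_mod_cast Fintype.card_ne_zero
  by_cases haa : a = a'
  · subst haa
    simp_rw [ind_sq, H.2.1, ind_of trivial]
    field_simp; simp
  · rw [H.2.2 a a' haa, ind_not haa]; ring

/-- The collision probability of two points. -/
lemma PairUnif.coll {Φ A K : Type*} [Fintype Φ] [Fintype K] [Nonempty K]
    {μ : Φ → ℝ} {h : Φ → A → K} (H : PairUnif μ h) (a a' : A) (haa : a ≠ a') :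
    ∑ φ, μ φ * ind (h φ a' = h φ a) = (Fintype.card K : ℝ)⁻¹ := by
  have hK : (Fintype.card K : ℝ) ≠ 0 := by exact_mod_cast Fintype.card_ne_zero
  have e : ∀ φ, ind (h φ a' = h φ a) = ∑ k, ind (h φ a = k) * ind (h φ a' = k) := fun φ => by
    rw [sum_ind_mul]
  simp_rw [e, mul_sum]
  rw [sum_comm]
  simp_rw [H.2.2 a a' haa]
  simp; field_simp

/-! ### Statistics of random binning -/

/-- Exact variance of the mass that falls into one pair of bins when two sources are binned
independently. -/
lemma bin_variance {Φ Ψ A B K L : Type*} [Fintype Φ] [Fintype Ψ] [Fintype A] [Fintype B]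
    [Fintype K] [Fintype L] [Nonempty K] [Nonempty L]
    {μ : Φ → ℝ} {h : Φ → A → K} (H : PairUnif μ h) {ν : Ψ → ℝ} {g : Ψ → B → L}
    (G : PairUnif ν g) (c : A → B → ℝ) (k : K) (l : L) :
    ∑ x : Φ × Ψ, μ x.1 * ν x.2 *
        (∑ a, ∑ b, c a b * (ind (h x.1 a = k) * ind (g x.2 b = l)) -
          (∑ a, ∑ b, c a b) * ((Fintype.card K : ℝ)⁻¹ * (Fintype.card L : ℝ)⁻¹)) ^ 2 =
      ((Fintype.card K : ℝ)⁻¹ * (Fintype.card L : ℝ)⁻¹) ^ 2 *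
        (((Fintype.card K : ℝ) - 1) * ((Fintype.card L : ℝ) - 1) * ∑ a, ∑ b, c a b ^ 2 +
          ((Fintype.card K : ℝ) - 1) * ∑ a, (∑ b, c a b) ^ 2 +
          ((Fintype.card L : ℝ) - 1) * ∑ b, (∑ a, c a b) ^ 2) := by
  set κ := (Fintype.card K : ℝ)⁻¹ with hκ
  set l' := (Fintype.card L : ℝ)⁻¹ with hl'
  set M := (Fintype.card K : ℝ) - 1 with hM
  set N := (Fintype.card L : ℝ) - 1 with hN
  -- the centred indicator of the event that the pair `u` lands in the bins `(k, l)`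
  let J : Φ × Ψ → A × B → ℝ := fun x u => ind (h x.1 u.1 = k) * ind (g x.2 u.2 = l)
  have hcov : ∀ u v : A × B, ∑ x : Φ × Ψ, μ x.1 * ν x.2 * ((J x u - κ * l') * (J x v - κ * l')) =
      (κ * l') ^ 2 * (M * N * (ind (u.1 = v.1) * ind (u.2 = v.2)) + M * ind (u.1 = v.1) +
        N * ind (u.2 = v.2)) := by
    intro u v
    have e : ∀ x : Φ × Ψ, μ x.1 * ν x.2 * ((J x u - κ * l') * (J x v - κ * l')) =
        (μ x.1 * (ind (h x.1 u.1 = k) * ind (h x.1 v.1 = k))) *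
          (ν x.2 * (ind (g x.2 u.2 = l) * ind (g x.2 v.2 = l))) -
        κ * l' * ((μ x.1 * ind (h x.1 u.1 = k)) * (ν x.2 * ind (g x.2 u.2 = l))) -
        κ * l' * ((μ x.1 * ind (h x.1 v.1 = k)) * (ν x.2 * ind (g x.2 v.2 = l))) +
        (κ * l') ^ 2 * (μ x.1 * ν x.2) := by
      intro x; simp only [J]; ring
    simp_rw [e]
    rw [sum_add_distrib, sum_sub_distrib, sum_sub_distrib, ← mul_sum, ← mul_sum, ← mul_sum]
    simp only [Fintype.sum_prod_type]
    simp_rw [← sum_mul_sum, H.second, G.second, H.2.1, G.2.1, H.1.2, G.1.2]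
    rw [← hκ, ← hl', ← hM, ← hN]; ring
  have hX : ∀ x : Φ × Ψ, (∑ a, ∑ b, c a b * (ind (h x.1 a = k) * ind (g x.2 b = l)) -
      (∑ a, ∑ b, c a b) * (κ * l')) = ∑ u : A × B, c u.1 u.2 * (J x u - κ * l') := by
    intro x
    rw [Fintype.sum_prod_type]
    simp only [mul_sub, sum_sub_distrib, sum_mul, J]
  have h2 : ∀ x : Φ × Ψ, μ x.1 * ν x.2 * (∑ u : A × B, c u.1 u.2 * (J x u - κ * l')) ^ 2 =
      ∑ u : A × B, ∑ v : A × B, c u.1 u.2 * c v.1 v.2 *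
        (μ x.1 * ν x.2 * ((J x u - κ * l') * (J x v - κ * l'))) := by
    intro x
    rw [sq, sum_mul_sum, mul_sum]
    refine sum_congr rfl fun u _ => ?_
    rw [mul_sum]
    exact sum_congr rfl fun v _ => by ring
  simp_rw [hX, h2]
  rw [sum_comm]
  have h3 : ∀ u : A × B, ∑ x : Φ × Ψ, ∑ v : A × B, c u.1 u.2 * c v.1 v.2 *
        (μ x.1 * ν x.2 * ((J x u - κ * l') * (J x v - κ * l'))) =
      (κ * l') ^ 2 * (M * N * c u.1 u.2 ^ 2 + M * (c u.1 u.2 * ∑ b, c u.1 b) +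
        N * (c u.1 u.2 * ∑ a, c a u.2)) := by
    intro u
    rw [sum_comm]
    simp_rw [← mul_sum, hcov]
    have e : ∀ v : A × B, c u.1 u.2 * c v.1 v.2 * ((κ * l') ^ 2 *
        (M * N * (ind (u.1 = v.1) * ind (u.2 = v.2)) + M * ind (u.1 = v.1) +
        N * ind (u.2 = v.2))) = (κ * l') ^ 2 * (M * N * c u.1 u.2 *
          (ind (u.1 = v.1) * (ind (u.2 = v.2) * c v.1 v.2)) +
          M * c u.1 u.2 * (ind (u.1 = v.1) * c v.1 v.2) +
          N * c u.1 u.2 * (ind (u.2 = v.2) * c v.1 v.2)) := fun v => by ring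
    simp_rw [e]
    rw [← mul_sum, sum_add_distrib, sum_add_distrib, ← mul_sum, ← mul_sum, ← mul_sum]
    simp only [Fintype.sum_prod_type]
    simp_rw [← mul_sum, sum_ind_mul]
    ring
  simp_rw [h3]
  rw [← mul_sum, sum_add_distrib, sum_add_distrib, ← mul_sum, ← mul_sum, ← mul_sum]
  simp only [Fintype.sum_prod_type]
  congr 2
  · congr 2
    refine sum_congr rfl fun a _ => ?_
    rw [← sum_mul, sq]
  · congr 1
    rw [sum_comm]
    refine sum_congr rfl fun a _ => ?_
    rw [← sum_mul, sq]

/-- **Random binning of two correlated sources.** If on the good set `G` the conditional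
probabilities of `(a, b)`, `a` and `b` given `w` are at most `γ12`, `γ1` and `γ2`, then the pair of
bin indices is, on average over the binning, nearly uniform and independent of `w`. The bin counts
enter through `card - 1`, so a single bin costs nothing. -/
lemma binning_two {Φ Ψ A B K L W : Type*} [Fintype Φ] [Fintype Ψ] [Fintype A] [Fintype B]
    [Fintype K] [Fintype L] [Nonempty K] [Nonempty L] [Fintype W]
    {μ : Φ → ℝ} {h : Φ → A → K} (H : PairUnif μ h) {ν : Ψ → ℝ} {g : Ψ → B → L}
    (G : PairUnif ν g) (p : W → A → B → ℝ) (hp : ∀ w a b, 0 ≤ p w a b)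
    (S : W → A → B → Prop) (γ12 γ1 γ2 : ℝ) (h0 : 0 ≤ γ12) (h01 : 0 ≤ γ1) (h02 : 0 ≤ γ2)
    (hS12 : ∀ w a b, S w a b → p w a b ≤ γ12 * ∑ a, ∑ b, p w a b)
    (hS1 : ∀ w a b, S w a b → ∑ b, p w a b ≤ γ1 * ∑ a, ∑ b, p w a b)
    (hS2 : ∀ w a b, S w a b → ∑ a, p w a b ≤ γ2 * ∑ a, ∑ b, p w a b) :
    ∑ x : Φ × Ψ, μ x.1 * ν x.2 * ∑ w, ∑ k, ∑ l,
        |∑ a, ∑ b, p w a b * (ind (h x.1 a = k) * ind (g x.2 b = l)) -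
          (∑ a, ∑ b, p w a b) * ((Fintype.card K : ℝ)⁻¹ * (Fintype.card L : ℝ)⁻¹)| ≤
      2 * (∑ w, ∑ a, ∑ b, p w a b * ind (¬S w a b)) + (∑ w, ∑ a, ∑ b, p w a b) *
        √(((Fintype.card K : ℝ) - 1) * ((Fintype.card L : ℝ) - 1) * γ12 +
          ((Fintype.card K : ℝ) - 1) * γ1 + ((Fintype.card L : ℝ) - 1) * γ2) := by
  have hK1 : (1 : ℝ) ≤ Fintype.card K := by exact_mod_cast Fintype.card_pos
  have hL1 : (1 : ℝ) ≤ Fintype.card L := by exact_mod_cast Fintype.card_pos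
  set κ := (Fintype.card K : ℝ)⁻¹ with hκ
  set l' := (Fintype.card L : ℝ)⁻¹ with hl'
  set M := (Fintype.card K : ℝ) - 1 with hM
  set N := (Fintype.card L : ℝ) - 1 with hN
  have hM0 : 0 ≤ M := by linarith
  have hN0 : 0 ≤ N := by linarith
  have hκ0 : 0 ≤ κ := by positivity
  have hl0 : 0 ≤ l' := by positivity
  have hKκ : (Fintype.card K : ℝ) * κ = 1 := by rw [hκ]; field_simp
  have hLl : (Fintype.card L : ℝ) * l' = 1 := by rw [hl']; field_simp
  set V := M * N * γ12 + M * γ1 + N * γ2 with hV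
  have hV0 : 0 ≤ V := by positivity
  have hμν := H.1.prod G.1
  let pg : W → A → B → ℝ := fun w a b => p w a b * ind (S w a b)
  let pb : W → A → B → ℝ := fun w a b => p w a b * ind (¬S w a b)
  have hpg : ∀ w a b, 0 ≤ pg w a b := fun w a b => mul_nonneg (hp _ _ _) (ind_nonneg _)
  have hpb : ∀ w a b, 0 ≤ pb w a b := fun w a b => mul_nonneg (hp _ _ _) (ind_nonneg _)
  have hpgp : ∀ w a b, pg w a b ≤ p w a b := fun w a b =>
    mul_le_of_le_one_right (hp _ _ _) (ind_le_one _)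
  have hsplit : ∀ w a b, p w a b = pg w a b + pb w a b := fun w a b => by
    simp only [pg, pb]; rw [← mul_add, ind_add_ind_not, mul_one]
  let P : W → ℝ := fun w => ∑ a, ∑ b, p w a b
  have hP0 : ∀ w, 0 ≤ P w := fun w => sum_nonneg fun a _ => sum_nonneg fun b _ => hp w a b
  -- the good part: second moment method
  have hgood : ∀ w k l, ∑ x : Φ × Ψ, μ x.1 * ν x.2 *
      |∑ a, ∑ b, pg w a b * (ind (h x.1 a = k) * ind (g x.2 b = l)) -
        (∑ a, ∑ b, pg w a b) * (κ * l')| ≤ κ * l' * (P w * √V) := by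
    intro w k l
    apply avg_abs_le_sqrt hμν
    · have := hP0 w; positivity
    rw [bin_variance H G, show (κ * l' * (P w * √V)) ^ 2 = (κ * l') ^ 2 * (P w ^ 2 * V) by
      rw [mul_pow, mul_pow (P w), Real.sq_sqrt hV0]]
    refine mul_le_mul_of_nonneg_left ?_ (sq_nonneg _)
    have b12 : ∑ a, ∑ b, pg w a b ^ 2 ≤ γ12 * P w ^ 2 := by
      have : ∀ a b, pg w a b ^ 2 ≤ γ12 * P w * p w a b := by
        intro a b
        by_cases hs : S w a b
        · simp only [pg, ind_of hs, mul_one, sq]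
          exact mul_le_mul_of_nonneg_right (hS12 w a b hs) (hp _ _ _)
        · simp only [pg, ind_not hs, mul_zero, zero_pow two_ne_zero]
          have := hP0 w; have := hp w a b; positivity
      calc _ ≤ ∑ a, ∑ b, γ12 * P w * p w a b :=
            sum_le_sum fun a _ => sum_le_sum fun b _ => this a b
        _ = γ12 * P w ^ 2 := by simp_rw [← mul_sum]; simp only [P]; ring
    have b1 : ∑ a, (∑ b, pg w a b) ^ 2 ≤ γ1 * P w ^ 2 := by
      have : ∀ a, (∑ b, pg w a b) ^ 2 ≤ γ1 * P w * ∑ b, p w a b := by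
        intro a
        have hle : ∑ b, pg w a b ≤ ∑ b, p w a b := sum_le_sum fun b _ => hpgp w a b
        have hge : 0 ≤ ∑ b, pg w a b := sum_nonneg fun b _ => hpg w a b
        by_cases hs : ∃ b, S w a b
        · obtain ⟨b, hs⟩ := hs
          rw [sq]
          exact mul_le_mul (hle.trans (hS1 w a b hs)) hle hge (mul_nonneg h01 (hP0 w))
        · push Not at hs
          have : ∑ b, pg w a b = 0 := sum_eq_zero fun b _ => by
            simp only [pg, ind_not (hs b), mul_zero]
          rw [this, zero_pow two_ne_zero]
          have := hP0 w; have : 0 ≤ ∑ b, p w a b := sum_nonneg fun b _ => hp w a b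
          positivity
      calc _ ≤ ∑ a, γ1 * P w * ∑ b, p w a b := sum_le_sum fun a _ => this a
        _ = γ1 * P w ^ 2 := by simp_rw [← mul_sum]; simp only [P]; ring
    have b2 : ∑ b, (∑ a, pg w a b) ^ 2 ≤ γ2 * P w ^ 2 := by
      have : ∀ b, (∑ a, pg w a b) ^ 2 ≤ γ2 * P w * ∑ a, p w a b := by
        intro b
        have hle : ∑ a, pg w a b ≤ ∑ a, p w a b := sum_le_sum fun a _ => hpgp w a b
        have hge : 0 ≤ ∑ a, pg w a b := sum_nonneg fun a _ => hpg w a b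
        by_cases hs : ∃ a, S w a b
        · obtain ⟨a, hs⟩ := hs
          rw [sq]
          exact mul_le_mul (hle.trans (hS2 w a b hs)) hle hge (mul_nonneg h02 (hP0 w))
        · push Not at hs
          have : ∑ a, pg w a b = 0 := sum_eq_zero fun a _ => by
            simp only [pg, ind_not (hs a), mul_zero]
          rw [this, zero_pow two_ne_zero]
          have := hP0 w; have : 0 ≤ ∑ a, p w a b := sum_nonneg fun a _ => hp w a b
          positivity
      calc _ ≤ ∑ b, γ2 * P w * ∑ a, p w a b := sum_le_sum fun b _ => this b
        _ = γ2 * P w ^ 2 := by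
          simp_rw [← mul_sum]; rw [sum_comm]; simp only [P]; ring
    calc _ ≤ M * N * (γ12 * P w ^ 2) + M * (γ1 * P w ^ 2) + N * (γ2 * P w ^ 2) := by gcongr
      _ = P w ^ 2 * V := by rw [hV]; ring
  -- the bad part: each of the two terms has total mass `P(¬S)`
  have hbad : ∀ (w : W) (x : Φ × Ψ), ∑ k, ∑ l,
      |∑ a, ∑ b, pb w a b * (ind (h x.1 a = k) * ind (g x.2 b = l)) -
        (∑ a, ∑ b, pb w a b) * (κ * l')| ≤ 2 * ∑ a, ∑ b, pb w a b := by
    intro w x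
    have hB0 : 0 ≤ ∑ a, ∑ b, pb w a b := sum_nonneg fun a _ => sum_nonneg fun b _ => hpb w a b
    have h1 : ∀ k l, |∑ a, ∑ b, pb w a b * (ind (h x.1 a = k) * ind (g x.2 b = l)) -
        (∑ a, ∑ b, pb w a b) * (κ * l')| ≤
        ∑ a, ∑ b, pb w a b * (ind (h x.1 a = k) * ind (g x.2 b = l)) +
        (∑ a, ∑ b, pb w a b) * (κ * l') := by
      intro k l
      refine (abs_sub _ _).trans (le_of_eq ?_)
      rw [abs_of_nonneg (sum_nonneg fun a _ => sum_nonneg fun b _ =>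
        mul_nonneg (hpb w a b) (mul_nonneg (ind_nonneg _) (ind_nonneg _))),
        abs_of_nonneg (by positivity)]
    have h2 : ∑ k, ∑ l, ∑ a, ∑ b, pb w a b * (ind (h x.1 a = k) * ind (g x.2 b = l)) =
        ∑ a, ∑ b, pb w a b := by
      calc _ = ∑ k, ∑ a, ∑ b, ∑ l, pb w a b * (ind (h x.1 a = k) * ind (g x.2 b = l)) := by
            refine sum_congr rfl fun k _ => ?_
            rw [sum_comm]; exact sum_congr rfl fun a _ => sum_comm
        _ = ∑ a, ∑ b, ∑ k, ∑ l, pb w a b * (ind (h x.1 a = k) * ind (g x.2 b = l)) := by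
            rw [sum_comm]; exact sum_congr rfl fun a _ => sum_comm
        _ = _ := by
            simp_rw [← mul_sum, sum_ind, mul_one, sum_ind, mul_one]
    calc _ ≤ ∑ k, ∑ l, (∑ a, ∑ b, pb w a b * (ind (h x.1 a = k) * ind (g x.2 b = l)) +
        (∑ a, ∑ b, pb w a b) * (κ * l')) := sum_le_sum fun k _ => sum_le_sum fun l _ => h1 k l
      _ = _ := by
        simp_rw [sum_add_distrib]
        rw [h2]
        simp only [sum_const, card_univ, nsmul_eq_mul]
        linear_combination (∑ a, ∑ b, pb w a b) * (hKκ * (Fintype.card L) * l' + hLl)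
  have htri : ∀ (x : Φ × Ψ) w, ∑ k, ∑ l,
      |∑ a, ∑ b, p w a b * (ind (h x.1 a = k) * ind (g x.2 b = l)) - P w * (κ * l')| ≤
      ∑ k, ∑ l, |∑ a, ∑ b, pg w a b * (ind (h x.1 a = k) * ind (g x.2 b = l)) -
        (∑ a, ∑ b, pg w a b) * (κ * l')| + 2 * ∑ a, ∑ b, pb w a b := by
    intro x w
    refine le_trans ?_ (add_le_add_right (hbad w x) _)
    simp_rw [← sum_add_distrib]
    refine sum_le_sum fun k _ => sum_le_sum fun l _ => ?_
    refine le_trans (le_of_eq ?_) (abs_add_le _ _)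
    congr 1
    simp only [P, hsplit w, add_mul, sum_add_distrib]
    ring
  calc _ ≤ ∑ x : Φ × Ψ, μ x.1 * ν x.2 * ∑ w, (∑ k, ∑ l,
        |∑ a, ∑ b, pg w a b * (ind (h x.1 a = k) * ind (g x.2 b = l)) -
        (∑ a, ∑ b, pg w a b) * (κ * l')| + 2 * ∑ a, ∑ b, pb w a b) := by
        refine sum_le_sum fun x _ => mul_le_mul_of_nonneg_left ?_ (hμν.1 x)
        exact sum_le_sum fun w _ => htri x w
    _ = 2 * (∑ w, ∑ a, ∑ b, pb w a b) + ∑ w, ∑ k, ∑ l, ∑ x : Φ × Ψ, μ x.1 * ν x.2 *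
        |∑ a, ∑ b, pg w a b * (ind (h x.1 a = k) * ind (g x.2 b = l)) -
        (∑ a, ∑ b, pg w a b) * (κ * l')| := by
        simp_rw [sum_add_distrib, mul_add, sum_add_distrib]
        rw [← sum_mul, hμν.2, one_mul, ← mul_sum, add_comm]
        congr 1
        simp_rw [mul_sum]
        rw [sum_comm]; refine sum_congr rfl fun w _ => ?_
        rw [sum_comm]; refine sum_congr rfl fun k _ => ?_
        rw [sum_comm]
    _ ≤ 2 * (∑ w, ∑ a, ∑ b, pb w a b) + ∑ w, ∑ _k : K, ∑ _l : L, κ * l' * (P w * √V) := by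
        refine add_le_add_right ?_ _
        exact sum_le_sum fun w _ => sum_le_sum fun k _ => sum_le_sum fun l _ => hgood w k l
    _ = _ := by
        simp only [sum_const, card_univ, nsmul_eq_mul]
        congr 1
        rw [sum_mul]
        refine sum_congr rfl fun w _ => ?_
        linear_combination (P w * √V) * (hKκ * (Fintype.card L) * l' + hLl)

/-- **Random binning of one source**: the special case of a trivial second source. -/
lemma binning_one {Φ A K W : Type*} [Fintype Φ] [Fintype A]
    [Fintype K] [Nonempty K] [Fintype W]
    {μ : Φ → ℝ} {h : Φ → A → K} (H : PairUnif μ h) (p : W → A → ℝ) (hp : ∀ w a, 0 ≤ p w a)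
    (S : W → A → Prop) (γ : ℝ) (h0 : 0 ≤ γ)
    (hS : ∀ w a, S w a → p w a ≤ γ * ∑ a, p w a) :
    ∑ x : Φ, μ x * ∑ w, ∑ k,
        |∑ a, p w a * ind (h x a = k) - (∑ a, p w a) * (Fintype.card K : ℝ)⁻¹| ≤
      2 * (∑ w, ∑ a, p w a * ind (¬S w a)) + (∑ w, ∑ a, p w a) *
        √(((Fintype.card K : ℝ) - 1) * γ) := by
  have G : PairUnif (fun _ : Unit => (1 : ℝ)) (fun (_ : Unit) (_ : Unit) => ()) := by
    refine ⟨⟨fun _ => zero_le_one, by simp⟩, fun a k => by simp [ind], fun a a' haa => ?_⟩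
    exact absurd (Subsingleton.elim a a') haa
  have := binning_two H G (fun w a (_ : Unit) => p w a) (fun w a _ => hp w a)
    (fun w a _ => S w a) γ γ 1 h0 h0 zero_le_one
    (by simpa using fun w a => hS w a) (by simpa using fun w a => hS w a)
    (fun w a b _ => by simp)
  simpa [Fintype.sum_prod_type, ind] using this

/-! ### Decoding two sources from their bin indices -/

/-- The threshold decoder: some pair of the candidate set `S` with the given bin indices, if there
is one. -/
noncomputable def binDec {A B K L : Type*} [Nonempty A] [Nonempty B] (h : A → K) (g : B → L)
    (S : A → B → Prop) (k : K) (l : L) : A × B := by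
  classical exact
    if H : ∃ u : A × B, S u.1 u.2 ∧ h u.1 = k ∧ g u.2 = l then H.choose else Classical.arbitrary _

lemma binDec_err {A B K L : Type*} [Fintype A] [Fintype B] [Nonempty A] [Nonempty B]
    (h : A → K) (g : B → L) (S : A → B → Prop) (a : A) (b : B) :
    ind (binDec h g S (h a) (g b) ≠ (a, b)) ≤ ind (¬S a b) +
      ∑ a', ∑ b', ind (S a' b') * (ind ((a', b') ≠ (a, b)) *
        (ind (h a' = h a) * ind (g b' = g b))) := by
  have hnn : ∀ a' b', 0 ≤ ind (S a' b') * (ind ((a', b') ≠ (a, b)) *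
        (ind (h a' = h a) * ind (g b' = g b))) := fun a' b' =>
    mul_nonneg (ind_nonneg _) (mul_nonneg (ind_nonneg _) (mul_nonneg (ind_nonneg _) (ind_nonneg _)))
  have hnn' : 0 ≤ ∑ a', ∑ b', ind (S a' b') * (ind ((a', b') ≠ (a, b)) *
        (ind (h a' = h a) * ind (g b' = g b))) :=
    sum_nonneg fun a' _ => sum_nonneg fun b' _ => hnn a' b'
  by_cases hs : S a b
  · by_cases hd : binDec h g S (h a) (g b) ≠ (a, b)
    · have hex : ∃ u : A × B, S u.1 u.2 ∧ h u.1 = h a ∧ g u.2 = g b := ⟨(a, b), hs, rfl, rfl⟩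
      obtain ⟨a', b', hab, h1, h2, h3⟩ : ∃ a' b', (a', b') ≠ (a, b) ∧ S a' b' ∧ h a' = h a ∧
          g b' = g b := by
        refine ⟨hex.choose.1, hex.choose.2, ?_, hex.choose_spec⟩
        simpa [binDec, hex] using hd
      rw [ind_of hd]
      calc (1 : ℝ) = ind (S a' b') * (ind ((a', b') ≠ (a, b)) *
            (ind (h a' = h a) * ind (g b' = g b))) := by
            rw [ind_of hab, ind_of h1, ind_of h2, ind_of h3]; norm_num
        _ ≤ ∑ b', ind (S a' b') * (ind ((a', b') ≠ (a, b)) *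
            (ind (h a' = h a) * ind (g b' = g b))) :=
            single_le_sum (f := fun b' => ind (S a' b') * (ind ((a', b') ≠ (a, b)) *
            (ind (h a' = h a) * ind (g b' = g b)))) (fun b' _ => hnn a' b') (mem_univ b')
        _ ≤ ∑ a', ∑ b', ind (S a' b') * (ind ((a', b') ≠ (a, b)) *
            (ind (h a' = h a) * ind (g b' = g b))) :=
            single_le_sum (f := fun a' => ∑ b', ind (S a' b') * (ind ((a', b') ≠ (a, b)) *
            (ind (h a' = h a) * ind (g b' = g b))))
            (fun a' _ => sum_nonneg fun b' _ => hnn a' b') (mem_univ a')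
        _ ≤ _ := le_add_of_nonneg_left (ind_nonneg _)
    · rw [ind_not hd]; exact add_nonneg (ind_nonneg _) hnn'
  · rw [ind_of hs]
    linarith [ind_le_one (binDec h g S (h a) (g b) ≠ (a, b))]

/-- A set on which a nonnegative function is a `κ`-fraction of its total has at most `1/κ`
elements. -/
lemma sum_ind_le_inv {A : Type*} [Fintype A] (S : A → Prop) (r : A → ℝ) (hr : ∀ a, 0 ≤ r a)
    {κ R : ℝ} (hκ : 0 < κ) (hR : ∑ a, r a ≤ R) (hpos : ∀ a, S a → 0 < r a)
    (hS : ∀ a, S a → κ * R ≤ r a) : ∑ a, ind (S a) ≤ κ⁻¹ := by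
  by_cases hex : ∃ a, S a
  · obtain ⟨a, ha⟩ := hex
    have hRpos : 0 < R := lt_of_lt_of_le (hpos a ha)
      ((single_le_sum (fun b _ => hr b) (mem_univ a)).trans hR)
    have h1 : (∑ a, ind (S a)) * (κ * R) ≤ R := by
      rw [sum_mul]
      refine le_trans (sum_le_sum fun a _ => ?_) hR
      by_cases h : S a
      · rw [ind_of h, one_mul]; exact hS a h
      · rw [ind_not h, zero_mul]; exact hr a
    rw [← mul_assoc] at h1
    have h2 : (∑ a, ind (S a)) * κ ≤ 1 := by
      by_contra! h
      nlinarith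
    rwa [← le_div_iff₀ hκ, one_div] at h2
  · push Not at hex
    rw [sum_eq_zero fun a _ => ind_not (hex a)]
    positivity

/-- **Slepian–Wolf decoding.** If on the candidate set the conditional probabilities of `a` given
`(b, w)`, `b` given `(a, w)` and `(a, b)` given `w` are at least `κ1`, `κ2` and `κ12`, then random
binning with enough bins lets the threshold decoder recover `(a, b)`. -/
lemma slepian_wolf {Φ Ψ A B K L W : Type*} [Fintype Φ] [Fintype Ψ] [Fintype A] [Fintype B]
    [Nonempty A] [Nonempty B]
    [Fintype K] [Fintype L] [Nonempty K] [Nonempty L] [Fintype W]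
    {μ : Φ → ℝ} {h : Φ → A → K} (H : PairUnif μ h) {ν : Ψ → ℝ} {g : Ψ → B → L}
    (G : PairUnif ν g) (r : W → A → B → ℝ) (hr : ∀ w a b, 0 ≤ r w a b)
    (S : W → A → B → Prop) (κ12 κ1 κ2 : ℝ) (h0 : 0 < κ12) (h01 : 0 < κ1) (h02 : 0 < κ2)
    (hS : ∀ w a b, S w a b → 0 < r w a b)
    (hS12 : ∀ w a b, S w a b → κ12 * ∑ a, ∑ b, r w a b ≤ r w a b)
    (hS1 : ∀ w a b, S w a b → κ1 * ∑ a, r w a b ≤ r w a b)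
    (hS2 : ∀ w a b, S w a b → κ2 * ∑ b, r w a b ≤ r w a b) :
    ∑ x : Φ × Ψ, μ x.1 * ν x.2 * ∑ w, ∑ a, ∑ b, r w a b *
        ind (binDec (h x.1) (g x.2) (S w) (h x.1 a) (g x.2 b) ≠ (a, b)) ≤
      (∑ w, ∑ a, ∑ b, r w a b * ind (¬S w a b)) + (∑ w, ∑ a, ∑ b, r w a b) *
        ((Fintype.card K : ℝ)⁻¹ * κ1⁻¹ + (Fintype.card L : ℝ)⁻¹ * κ2⁻¹ +
          (Fintype.card K : ℝ)⁻¹ * (Fintype.card L : ℝ)⁻¹ * κ12⁻¹) := by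
  set k' := (Fintype.card K : ℝ)⁻¹ with hk'
  set l' := (Fintype.card L : ℝ)⁻¹ with hl'
  have hk0 : 0 ≤ k' := by positivity
  have hl0 : 0 ≤ l' := by positivity
  have hμν := H.1.prod G.1
  -- the probability that a wrong pair collides with the right one
  have hcoll : ∀ a b a' b', ∑ x : Φ × Ψ, μ x.1 * ν x.2 * (ind ((a', b') ≠ (a, b)) *
        (ind (h x.1 a' = h x.1 a) * ind (g x.2 b' = g x.2 b))) ≤
        k' * ind (b' = b) + l' * ind (a' = a) + k' * l' := by
    intro a b a' b'
    by_cases hne : (a', b') = (a, b)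
    · rw [sum_eq_zero]
      · have := ind_nonneg (b' = b); have := ind_nonneg (a' = a); positivity
      · intro x _; rw [ind_not (not_not.2 hne)]; ring
    have e : ∑ x : Φ × Ψ, μ x.1 * ν x.2 * (ind ((a', b') ≠ (a, b)) *
        (ind (h x.1 a' = h x.1 a) * ind (g x.2 b' = g x.2 b))) =
        (∑ φ, μ φ * ind (h φ a' = h φ a)) * ∑ ψ, ν ψ * ind (g ψ b' = g ψ b) := by
      rw [sum_mul_sum, Fintype.sum_prod_type]
      refine sum_congr rfl fun φ _ => sum_congr rfl fun ψ _ => ?_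
      rw [ind_of hne]; ring
    rw [e]
    by_cases ha : a' = a
    · have hb : b' ≠ b := fun hb => hne (by rw [ha, hb])
      rw [G.coll b b' hb.symm, ← hl', ind_of ha, ind_not hb, ha]
      simp only [ind_of trivial, mul_one, H.1.2]
      have : 0 ≤ k' * l' := by positivity
      linarith
    · rw [H.coll a a' (Ne.symm ha), ← hk', ind_not ha]
      by_cases hb : b' = b
      · rw [ind_of hb, hb]
        simp only [ind_of trivial, mul_one, G.1.2]
        have : 0 ≤ k' * l' := by positivity
        linarith
      · rw [G.coll b b' (Ne.symm hb), ← hl', ind_not hb]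
        linarith
  -- the expected number of wrong candidates
  have hcand : ∀ w a b, ∑ x : Φ × Ψ, μ x.1 * ν x.2 *
      ∑ a', ∑ b', ind (S w a' b') * (ind ((a', b') ≠ (a, b)) *
        (ind (h x.1 a' = h x.1 a) * ind (g x.2 b' = g x.2 b))) ≤
      k' * κ1⁻¹ + l' * κ2⁻¹ + k' * l' * κ12⁻¹ := by
    intro w a b
    calc _ = ∑ a', ∑ b', ind (S w a' b') * ∑ x : Φ × Ψ, μ x.1 * ν x.2 *
            (ind ((a', b') ≠ (a, b)) *
            (ind (h x.1 a' = h x.1 a) * ind (g x.2 b' = g x.2 b))) := by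
          simp_rw [mul_sum]
          rw [sum_comm]; refine sum_congr rfl fun a' _ => ?_
          rw [sum_comm]; refine sum_congr rfl fun b' _ => ?_
          exact sum_congr rfl fun x _ => by ring
      _ ≤ ∑ a', ∑ b', ind (S w a' b') * (k' * ind (b' = b) + l' * ind (a' = a) + k' * l') :=
          sum_le_sum fun a' _ => sum_le_sum fun b' _ =>
            mul_le_mul_of_nonneg_left (hcoll a b a' b') (ind_nonneg _)
      _ = k' * ∑ a', ind (S w a' b) + l' * ∑ b', ind (S w a b') +
          k' * l' * ∑ u : A × B, ind (S w u.1 u.2) := by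
          have e : ∀ a' b', ind (S w a' b') * (k' * ind (b' = b) + l' * ind (a' = a) + k' * l') =
              k' * (ind (b' = b) * ind (S w a' b')) + l' * (ind (a' = a) * ind (S w a' b')) +
              k' * l' * ind (S w a' b') := fun a' b' => by ring
          simp_rw [e, sum_add_distrib, ← mul_sum, sum_ind_mul', Fintype.sum_prod_type]
      _ ≤ _ := by
          gcongr
          · exact sum_ind_le_inv _ (fun a' => r w a' b) (fun a' => hr w a' b) h01 le_rfl
              (fun a' => hS w a' b) (fun a' => hS1 w a' b)
          · exact sum_ind_le_inv _ (fun b' => r w a b') (fun b' => hr w a b') h02 le_rfl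
              (fun b' => hS w a b') (fun b' => hS2 w a b')
          · exact sum_ind_le_inv _ (fun u : A × B => r w u.1 u.2) (fun u => hr w u.1 u.2) h0
              (le_of_eq (Fintype.sum_prod_type _))
              (fun u => hS w u.1 u.2) (fun u => hS12 w u.1 u.2)
  calc _ ≤ ∑ x : Φ × Ψ, μ x.1 * ν x.2 * ∑ w, ∑ a, ∑ b, r w a b * (ind (¬S w a b) +
        ∑ a', ∑ b', ind (S w a' b') * (ind ((a', b') ≠ (a, b)) *
        (ind (h x.1 a' = h x.1 a) * ind (g x.2 b' = g x.2 b)))) :=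
        sum_le_sum fun x _ => mul_le_mul_of_nonneg_left (sum_le_sum fun w _ =>
          sum_le_sum fun a _ => sum_le_sum fun b _ =>
            mul_le_mul_of_nonneg_left (binDec_err _ _ _ a b) (hr w a b)) (hμν.1 x)
    _ = (∑ w, ∑ a, ∑ b, r w a b * ind (¬S w a b)) + ∑ w, ∑ a, ∑ b, r w a b *
        ∑ x : Φ × Ψ, μ x.1 * ν x.2 *
        ∑ a', ∑ b', ind (S w a' b') * (ind ((a', b') ≠ (a, b)) *
        (ind (h x.1 a' = h x.1 a) * ind (g x.2 b' = g x.2 b))) := by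
        simp_rw [mul_add, sum_add_distrib, mul_add, sum_add_distrib]
        rw [← sum_mul, hμν.2, one_mul]
        congr 1
        simp_rw [mul_sum (s := (univ : Finset (Φ × Ψ)))]
        simp_rw [mul_sum (s := (univ : Finset W))]
        rw [sum_comm]; refine sum_congr rfl fun w _ => ?_
        simp_rw [mul_sum (a := μ _ * ν _) (s := (univ : Finset A)) (f := fun a => ∑ b, r w a b * _)]
        rw [sum_comm]; refine sum_congr rfl fun a _ => ?_
        simp_rw [mul_sum (a := μ _ * ν _) (s := (univ : Finset B)) (f := fun b => r w a b * _)]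
        rw [sum_comm]; refine sum_congr rfl fun b _ => ?_
        exact sum_congr rfl fun x _ => by ring
    _ ≤ (∑ w, ∑ a, ∑ b, r w a b * ind (¬S w a b)) + ∑ w, ∑ a, ∑ b, r w a b *
        (k' * κ1⁻¹ + l' * κ2⁻¹ + k' * l' * κ12⁻¹) := by
        refine add_le_add_right ?_ _
        exact sum_le_sum fun w _ => sum_le_sum fun a _ => sum_le_sum fun b _ =>
          mul_le_mul_of_nonneg_left (hcand w a b) (hr w a b)
    _ = _ := by simp_rw [← sum_mul]

/-! ### The code built from a fixed binning -/

/-- Conditional probability that the bin index of `u ∼ K x` equals `k`. -/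
noncomputable def binMass {X U J : Type*} [Fintype U] (K : X → U → ℝ) (h : U → J) (x : X)
    (k : J) : ℝ := ∑ u, K x u * ind (h u = k)

lemma binMass_nonneg {X U J : Type*} [Fintype U] {K : X → U → ℝ} (hK : ∀ x, IsPMF (K x))
    (h : U → J) (x : X) (k : J) : 0 ≤ binMass K h x k :=
  sum_nonneg fun u _ => mul_nonneg ((hK x).1 u) (ind_nonneg _)

lemma sum_binMass {X U J : Type*} [Fintype U] [Fintype J] {K : X → U → ℝ}
    (hK : ∀ x, IsPMF (K x)) (h : U → J) (x : X) : ∑ k, binMass K h x k = 1 := by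
  unfold binMass
  rw [sum_comm]
  simp_rw [← mul_sum, sum_ind, mul_one, (hK x).2]

lemma sum_binMass_pair {X U J M : Type*} [Fintype U] [Fintype M] (K : X → U → ℝ)
    (h : U → J × M) (x : X) (j : J) :
    ∑ m, binMass K h x (j, m) = binMass K (fun u => (h u).1) x j := by
  unfold binMass
  rw [sum_comm]
  refine sum_congr rfl fun u _ => ?_
  rw [← mul_sum]
  congr 1
  have : ∀ m, ind (h u = (j, m)) = ind ((h u).2 = m) * ind ((h u).1 = j) := fun m => by
    rw [ind_mul_ind]; exact ind_congr (by rw [Prod.ext_iff, and_comm])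
  simp_rw [this, ← sum_mul, sum_ind, one_mul]

/-- The encoder: the conditional law of the message bin of `u ∼ K x` given that the other bin
index of `u` is `j`. On a null event it falls back on the unconditional law. -/
noncomputable def binEnc {X U J M : Type*} [Fintype U] (K : X → U → ℝ) (h : U → J × M) (j : J)
    (x : X) (m : M) : ℝ := by
  classical exact
    if binMass K (fun u => (h u).1) x j = 0 then binMass K (fun u => (h u).2) x m
    else binMass K h x (j, m) / binMass K (fun u => (h u).1) x j

lemma binEnc_pmf {X U J M : Type*} [Fintype U] [Fintype M] {K : X → U → ℝ}
    (hK : ∀ x, IsPMF (K x)) (h : U → J × M) (j : J) (x : X) : IsPMF (binEnc K h j x) := by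
  by_cases h0 : binMass K (fun u => (h u).1) x j = 0
  · have e : binEnc K h j x = binMass K (fun u => (h u).2) x := by
      funext m; simp [binEnc, h0]
    rw [e]
    exact ⟨binMass_nonneg hK _ x, sum_binMass hK _ x⟩
  · have e : ∀ m, binEnc K h j x m = binMass K h x (j, m) / binMass K (fun u => (h u).1) x j := by
      intro m; simp [binEnc, h0]
    refine ⟨fun m => ?_, ?_⟩
    · rw [e]; exact div_nonneg (binMass_nonneg hK _ _ _) (binMass_nonneg hK _ _ _)
    · simp_rw [e, ← sum_div, sum_binMass_pair, div_self h0]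

lemma binMass_mul_binEnc {X U J M : Type*} [Fintype U] [Fintype M] {K : X → U → ℝ}
    (hK : ∀ x, IsPMF (K x)) (h : U → J × M) (j : J) (x : X) (m : M) :
    binMass K (fun u => (h u).1) x j * binEnc K h j x m = binMass K h x (j, m) := by
  by_cases h0 : binMass K (fun u => (h u).1) x j = 0
  · rw [h0, zero_mul]
    rw [← sum_binMass_pair, sum_eq_zero_iff_of_nonneg fun m _ => binMass_nonneg hK _ _ _] at h0
    exact (h0 m (mem_univ m)).symm
  · simp only [binEnc, h0, if_false]
    field_simp

/-- Replacing the true law `A1 × A2` of the bin indices by another product law `P1 × P2` changes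
the output by at most the distances between the factors. -/
lemma replace_index_law {J1 J2 M1 M2 Y : Type*} [Fintype J1] [Fintype J2] [Fintype M1]
    [Fintype M2] [Fintype Y] (P1 A1 : J1 → ℝ) (P2 A2 : J2 → ℝ) (e1 : J1 → M1 → ℝ)
    (e2 : J2 → M2 → ℝ) (D : J1 → J2 → M1 → M2 → Y → ℝ) (hA1 : IsPMF A1) (hP2 : IsPMF P2)
    (he1 : ∀ j, IsPMF (e1 j)) (he2 : ∀ j, IsPMF (e2 j))
    (hD : ∀ j1 j2 m1 m2, IsPMF (D j1 j2 m1 m2)) :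
    ∑ j1, ∑ j2, ∑ y, |∑ m1, ∑ m2, P1 j1 * P2 j2 * (e1 j1 m1 * e2 j2 m2 * D j1 j2 m1 m2 y) -
        ∑ m1, ∑ m2, A1 j1 * A2 j2 * (e1 j1 m1 * e2 j2 m2 * D j1 j2 m1 m2 y)| ≤
      ∑ j, |P1 j - A1 j| + ∑ j, |P2 j - A2 j| := by
  have h1 : ∀ j1 j2, ∑ y, |∑ m1, ∑ m2, P1 j1 * P2 j2 * (e1 j1 m1 * e2 j2 m2 * D j1 j2 m1 m2 y) -
        ∑ m1, ∑ m2, A1 j1 * A2 j2 * (e1 j1 m1 * e2 j2 m2 * D j1 j2 m1 m2 y)| ≤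
        |P1 j1 - A1 j1| * P2 j2 + A1 j1 * |P2 j2 - A2 j2| := by
    intro j1 j2
    have hT : ∀ y, 0 ≤ ∑ m1, ∑ m2, e1 j1 m1 * e2 j2 m2 * D j1 j2 m1 m2 y := fun y =>
      sum_nonneg fun m1 _ => sum_nonneg fun m2 _ =>
        mul_nonneg (mul_nonneg ((he1 _).1 _) ((he2 _).1 _)) ((hD _ _ _ _).1 _)
    have hsum : ∑ y, ∑ m1, ∑ m2, e1 j1 m1 * e2 j2 m2 * D j1 j2 m1 m2 y = 1 := by
      rw [sum_comm]
      have : ∀ m1, ∑ y, ∑ m2, e1 j1 m1 * e2 j2 m2 * D j1 j2 m1 m2 y = e1 j1 m1 := by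
        intro m1
        rw [sum_comm]
        simp_rw [← mul_sum, (hD _ _ _ _).2, mul_one, ← mul_sum, (he2 _).2, mul_one]
      simp_rw [this, (he1 _).2]
    calc _ = ∑ y, |P1 j1 * P2 j2 - A1 j1 * A2 j2| *
          ∑ m1, ∑ m2, e1 j1 m1 * e2 j2 m2 * D j1 j2 m1 m2 y := by
          refine sum_congr rfl fun y _ => ?_
          simp_rw [← mul_sum]
          rw [← sub_mul, abs_mul, abs_of_nonneg (hT y)]
      _ = |(P1 j1 - A1 j1) * P2 j2 + A1 j1 * (P2 j2 - A2 j2)| := by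
          rw [← mul_sum, hsum, mul_one]; congr 1; ring
      _ ≤ _ := by
          refine (abs_add_le _ _).trans (le_of_eq ?_)
          rw [abs_mul, abs_mul, abs_of_nonneg (hP2.1 j2), abs_of_nonneg (hA1.1 j1)]
  refine (sum_le_sum fun j1 _ => sum_le_sum fun j2 _ => h1 j1 j2).trans (le_of_eq ?_)
  simp_rw [sum_add_distrib, ← mul_sum, hP2.2, mul_one]
  rw [← sum_mul, hA1.2, one_mul]

/-- Summing a function of the bin index against its law, with the `F`-part of the index fixed. -/
lemma sum_binMass_mul {X U S F M : Type*} [Fintype U] [Fintype S] [Fintype F] [Fintype M]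
    (K : X → U → ℝ) (h : U → (S × F) × M) (x : X) (f : F) (g : (S × F) × M → ℝ) :
    ∑ s, ∑ m, binMass K h x ((s, f), m) * g ((s, f), m) =
      ∑ u, K x u * ind ((h u).1.2 = f) * g (h u) := by
  unfold binMass
  simp_rw [sum_mul]
  have e : ∀ u s m, K x u * ind (h u = ((s, f), m)) * g ((s, f), m) =
      K x u * ind ((h u).1.2 = f) * g (h u) * (ind ((h u).1.1 = s) * ind ((h u).2 = m)) := by
    intro u s m
    by_cases hu : h u = ((s, f), m)
    · rw [hu]; simp [ind]
    · rw [ind_not hu]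
      by_cases h1 : (h u).1.2 = f
      · rw [ind_mul_ind, ind_not (P := _ ∧ _)]
        · ring
        · rintro ⟨h2, h3⟩; exact hu (Prod.ext (Prod.ext h2 h1) h3)
      · rw [ind_not h1]; ring
  simp_rw [e]
  calc _ = ∑ s, ∑ u, ∑ m, K x u * ind ((h u).1.2 = f) * g (h u) *
        (ind ((h u).1.1 = s) * ind ((h u).2 = m)) := sum_congr rfl fun s _ => sum_comm
    _ = ∑ u, ∑ s, ∑ m, K x u * ind ((h u).1.2 = f) * g (h u) *
        (ind ((h u).1.1 = s) * ind ((h u).2 = m)) := sum_comm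
    _ = _ := by simp_rw [← mul_sum, sum_ind, mul_one, sum_ind, mul_one]

/-- Replacing the decoded pair by the true one costs twice the error probability. -/
lemma replace_decoded {X1 X2 U1 U2 Y S1 F1 M1 S2 F2 M2 : Type*} [Fintype U1] [Fintype U2]
    [Fintype Y] [Fintype S1] [Fintype F1] [Fintype M1] [Fintype S2] [Fintype F2] [Fintype M2]
    {K1 : X1 → U1 → ℝ} {K2 : X2 → U2 → ℝ} (hK1 : ∀ x, IsPMF (K1 x)) (hK2 : ∀ x, IsPMF (K2 x))
    (KY : U1 × U2 → Y → ℝ) (hKY : ∀ u, IsPMF (KY u)) (h1 : U1 → (S1 × F1) × M1)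
    (h2 : U2 → (S2 × F2) × M2) (d : (S1 × F1) × M1 → (S2 × F2) × M2 → U1 × U2) (x1 : X1)
    (x2 : X2) :
    ∑ f1, ∑ f2, ∑ y, |∑ s1, ∑ m1, binMass K1 h1 x1 ((s1, f1), m1) * ∑ s2, ∑ m2,
          binMass K2 h2 x2 ((s2, f2), m2) * KY (d ((s1, f1), m1) ((s2, f2), m2)) y -
        ∑ u1, ∑ u2, K1 x1 u1 * K2 x2 u2 * KY (u1, u2) y *
          (ind ((h1 u1).1.2 = f1) * ind ((h2 u2).1.2 = f2))| ≤
      2 * ∑ u1, ∑ u2, K1 x1 u1 * K2 x2 u2 * ind (d (h1 u1) (h2 u2) ≠ (u1, u2)) := by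
  have e : ∀ f1 f2 y, |∑ s1, ∑ m1, binMass K1 h1 x1 ((s1, f1), m1) * ∑ s2, ∑ m2,
          binMass K2 h2 x2 ((s2, f2), m2) * KY (d ((s1, f1), m1) ((s2, f2), m2)) y -
        ∑ u1, ∑ u2, K1 x1 u1 * K2 x2 u2 * KY (u1, u2) y *
          (ind ((h1 u1).1.2 = f1) * ind ((h2 u2).1.2 = f2))| ≤
      ∑ u1, ∑ u2, K1 x1 u1 * K2 x2 u2 * (ind ((h1 u1).1.2 = f1) * ind ((h2 u2).1.2 = f2)) *
        |KY (d (h1 u1) (h2 u2)) y - KY (u1, u2) y| := by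
    intro f1 f2 y
    have e1 : ∀ k1, ∑ s2, ∑ m2,
          binMass K2 h2 x2 ((s2, f2), m2) * KY (d k1 ((s2, f2), m2)) y =
        ∑ u2, K2 x2 u2 * ind ((h2 u2).1.2 = f2) * KY (d k1 (h2 u2)) y := fun k1 =>
      sum_binMass_mul K2 h2 x2 f2 (fun k2 => KY (d k1 k2) y)
    simp_rw [e1]
    rw [sum_binMass_mul K1 h1 x1 f1
      (fun k1 => ∑ u2, K2 x2 u2 * ind ((h2 u2).1.2 = f2) * KY (d k1 (h2 u2)) y)]
    rw [← sum_sub_distrib]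
    refine (abs_sum_le_sum_abs _ _).trans (sum_le_sum fun u1 _ => ?_)
    rw [mul_sum, ← sum_sub_distrib]
    refine (abs_sum_le_sum_abs _ _).trans (sum_le_sum fun u2 _ => le_of_eq ?_)
    rw [← abs_of_nonneg (mul_nonneg (mul_nonneg ((hK1 x1).1 u1) ((hK2 x2).1 u2))
      (mul_nonneg (ind_nonneg ((h1 u1).1.2 = f1)) (ind_nonneg ((h2 u2).1.2 = f2)))), ← abs_mul]
    congr 1
    ring
  have hY : ∀ u1 u2, ∑ y, |KY (d (h1 u1) (h2 u2)) y - KY (u1, u2) y| ≤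
      2 * ind (d (h1 u1) (h2 u2) ≠ (u1, u2)) := by
    intro u1 u2
    by_cases hd : d (h1 u1) (h2 u2) = (u1, u2)
    · rw [hd, ind_not (not_not.2 rfl)]; simp
    · rw [ind_of hd]
      calc _ ≤ ∑ y, (KY (d (h1 u1) (h2 u2)) y + KY (u1, u2) y) := sum_le_sum fun y _ => by
            refine (abs_sub _ _).trans (le_of_eq ?_)
            rw [abs_of_nonneg ((hKY _).1 _), abs_of_nonneg ((hKY _).1 _)]
        _ = 2 * 1 := by rw [sum_add_distrib, (hKY _).2, (hKY _).2]; norm_num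
  calc _ ≤ ∑ f1, ∑ f2, ∑ y, ∑ u1, ∑ u2, K1 x1 u1 * K2 x2 u2 *
        (ind ((h1 u1).1.2 = f1) * ind ((h2 u2).1.2 = f2)) *
        |KY (d (h1 u1) (h2 u2)) y - KY (u1, u2) y| :=
        sum_le_sum fun f1 _ => sum_le_sum fun f2 _ => sum_le_sum fun y _ => e f1 f2 y
    _ = ∑ f1, ∑ f2, ∑ u1, ∑ u2, ∑ y, K1 x1 u1 * K2 x2 u2 *
        (ind ((h1 u1).1.2 = f1) * ind ((h2 u2).1.2 = f2)) *
        |KY (d (h1 u1) (h2 u2)) y - KY (u1, u2) y| := by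
        refine sum_congr rfl fun f1 _ => sum_congr rfl fun f2 _ => ?_
        rw [sum_comm]; exact sum_congr rfl fun u1 _ => sum_comm
    _ = ∑ u1, ∑ u2, ∑ f1, ∑ f2, ∑ y, K1 x1 u1 * K2 x2 u2 *
        (ind ((h1 u1).1.2 = f1) * ind ((h2 u2).1.2 = f2)) *
        |KY (d (h1 u1) (h2 u2)) y - KY (u1, u2) y| := by
        calc _ = ∑ f1, ∑ u1, ∑ u2, ∑ f2, ∑ y, K1 x1 u1 * K2 x2 u2 *
                (ind ((h1 u1).1.2 = f1) * ind ((h2 u2).1.2 = f2)) *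
                |KY (d (h1 u1) (h2 u2)) y - KY (u1, u2) y| := by
                refine sum_congr rfl fun f1 _ => ?_
                rw [sum_comm]; exact sum_congr rfl fun u1 _ => sum_comm
          _ = _ := by rw [sum_comm]; exact sum_congr rfl fun u1 _ => sum_comm
    _ = ∑ u1, ∑ u2, K1 x1 u1 * K2 x2 u2 * ∑ y, |KY (d (h1 u1) (h2 u2)) y - KY (u1, u2) y| := by
        refine sum_congr rfl fun u1 _ => sum_congr rfl fun u2 _ => ?_
        simp_rw [← mul_sum, ← sum_mul, ← mul_sum, sum_ind, mul_one, sum_ind, mul_one]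
    _ ≤ ∑ u1, ∑ u2, K1 x1 u1 * K2 x2 u2 * (2 * ind (d (h1 u1) (h2 u2) ≠ (u1, u2))) :=
        sum_le_sum fun u1 _ => sum_le_sum fun u2 _ => mul_le_mul_of_nonneg_left (hY u1 u2)
          (mul_nonneg ((hK1 x1).1 u1) ((hK2 x2).1 u2))
    _ = _ := by
        simp_rw [mul_sum]
        exact sum_congr rfl fun u1 _ => sum_congr rfl fun u2 _ => by ring

/-- Output law of the binning code with indices `f1, f2` fixed and shared randomness `π1, π2`. -/
noncomputable def binOut {X1 X2 Z Y U1 U2 S1 F1 M1 S2 F2 M2 : Type*} [Fintype U1] [Fintype U2]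
    [Fintype S1] [Fintype M1] [Fintype S2] [Fintype M2]
    (q3 : X1 × X2 × Z → ℝ) (K1 : X1 → U1 → ℝ) (K2 : X2 → U2 → ℝ) (KY : U1 × U2 → Z → Y → ℝ)
    (h1 : U1 → (S1 × F1) × M1) (h2 : U2 → (S2 × F2) × M2)
    (d : (S1 × F1) × M1 → (S2 × F2) × M2 → Z → U1 × U2) (π1 : S1 → ℝ) (π2 : S2 → ℝ)
    (f1 : F1) (f2 : F2) (x : X1 × X2 × Z) (y : Y) : ℝ :=
  ∑ s1, ∑ s2, ∑ m1, ∑ m2, π1 s1 * π2 s2 * q3 x * binEnc K1 h1 (s1, f1) x.1 m1 *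
    binEnc K2 h2 (s2, f2) x.2.1 m2 * KY (d ((s1, f1), m1) ((s2, f2), m2) x.2.2) x.2.2 y

/-- Distance between the index law used by the code (shared randomness times a uniform index) and
an arbitrary law `A`, by passing through the uniform law. -/
lemma index_law_dist {S F : Type*} [Fintype S] [Fintype F] (π : S → ℝ) (ν : ℝ) (A : S × F → ℝ)
    (h0 : 0 ≤ ν) (h1 : (Fintype.card F : ℝ) * ν = 1) (h2 : ν = (Fintype.card F : ℝ)⁻¹) :
    ∑ j : S × F, |π j.1 * ν - A j| ≤ ∑ s, |π s - (Fintype.card S : ℝ)⁻¹| +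
      ∑ j : S × F, |A j - (Fintype.card (S × F) : ℝ)⁻¹| := by
  calc _ ≤ ∑ j : S × F, (|π j.1 - (Fintype.card S : ℝ)⁻¹| * ν +
        |A j - (Fintype.card (S × F) : ℝ)⁻¹|) := by
        refine sum_le_sum fun j _ => ?_
        rw [abs_sub_comm (A j), ← abs_of_nonneg h0, ← abs_mul, abs_of_nonneg h0]
        refine le_trans (le_of_eq ?_) (abs_add_le _ _)
        congr 1
        rw [Fintype.card_prod]; push_cast; rw [mul_inv, ← h2]; ring
    _ = _ := by
        rw [sum_add_distrib, Fintype.sum_prod_type]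
        congr 1
        refine sum_congr rfl fun s _ => ?_
        simp only [sum_const, card_univ, nsmul_eq_mul]
        linear_combination |π s - (Fintype.card S : ℝ)⁻¹| * h1

/-- Performance of the binning code, averaged over the indices `f1, f2`: it is controlled by the
non-uniformity of the bin indices given the sources, the decoding error probability, the dependence
between `(f1, f2)` and the target variables, and the non-uniformity of the shared randomness. -/
lemma binOut_bound {X1 X2 Z Y U1 U2 S1 F1 M1 S2 F2 M2 : Type*} [Fintype X1] [Fintype X2]
    [Fintype Z] [Fintype Y] [Fintype U1] [Fintype U2]
    [Fintype S1] [Fintype F1] [Fintype M1] [Fintype S2] [Fintype F2] [Fintype M2]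
    [Nonempty F1] [Nonempty F2]
    (q3 : X1 × X2 × Z → ℝ) (hq3 : IsPMF q3) (K1 : X1 → U1 → ℝ) (K2 : X2 → U2 → ℝ)
    (hK1 : ∀ x, IsPMF (K1 x)) (hK2 : ∀ x, IsPMF (K2 x))
    (KY : U1 × U2 → Z → Y → ℝ) (hKY : ∀ u z, IsPMF (KY u z))
    (h1 : U1 → (S1 × F1) × M1) (h2 : U2 → (S2 × F2) × M2)
    (d : (S1 × F1) × M1 → (S2 × F2) × M2 → Z → U1 × U2) (π1 : S1 → ℝ) (π2 : S2 → ℝ)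
    (hπ2 : IsPMF π2) (q4 : X1 × X2 × Z → Y → ℝ) :
    ∑ f1, ∑ f2, (Fintype.card F1 : ℝ)⁻¹ * (Fintype.card F2 : ℝ)⁻¹ *
        ∑ x, ∑ y, |binOut q3 K1 K2 KY h1 h2 d π1 π2 f1 f2 x y - q4 x y| ≤
      (∑ x, q3 x * ∑ j, |binMass K1 (fun u => (h1 u).1) x.1 j - (Fintype.card (S1 × F1) : ℝ)⁻¹|) +
      (∑ x, q3 x * ∑ j, |binMass K2 (fun u => (h2 u).1) x.2.1 j -
        (Fintype.card (S2 × F2) : ℝ)⁻¹|) +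
      2 * (∑ x, q3 x * ∑ u1, ∑ u2, K1 x.1 u1 * K2 x.2.1 u2 *
        ind (d (h1 u1) (h2 u2) x.2.2 ≠ (u1, u2))) +
      (∑ x, ∑ y, ∑ f1, ∑ f2, |∑ u1, ∑ u2, q3 x * (K1 x.1 u1 * K2 x.2.1 u2 *
        KY (u1, u2) x.2.2 y) * (ind ((h1 u1).1.2 = f1) * ind ((h2 u2).1.2 = f2)) -
        q4 x y * ((Fintype.card F1 : ℝ)⁻¹ * (Fintype.card F2 : ℝ)⁻¹)|) +
      (∑ s, |π1 s - (Fintype.card S1 : ℝ)⁻¹|) + ∑ s, |π2 s - (Fintype.card S2 : ℝ)⁻¹| := by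
  have hF1 : (Fintype.card F1 : ℝ) ≠ 0 := by exact_mod_cast Fintype.card_ne_zero
  have hF2 : (Fintype.card F2 : ℝ) ≠ 0 := by exact_mod_cast Fintype.card_ne_zero
  set ν1 := (Fintype.card F1 : ℝ)⁻¹ with hν1
  set ν2 := (Fintype.card F2 : ℝ)⁻¹ with hν2
  have hν10 : 0 ≤ ν1 := by positivity
  have hν20 : 0 ≤ ν2 := by positivity
  have hFν1 : (Fintype.card F1 : ℝ) * ν1 = 1 := mul_inv_cancel₀ hF1
  have hFν2 : (Fintype.card F2 : ℝ) * ν2 = 1 := mul_inv_cancel₀ hF2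
  let P1 : S1 × F1 → ℝ := fun j => π1 j.1 * ν1
  let P2 : S2 × F2 → ℝ := fun j => π2 j.1 * ν2
  have hP2 : IsPMF P2 := hπ2.prod ⟨fun _ => hν20, by simp [hFν2]⟩
  let A1 : X1 → S1 × F1 → ℝ := fun x j => binMass K1 (fun u => (h1 u).1) x j
  let A2 : X2 → S2 × F2 → ℝ := fun x j => binMass K2 (fun u => (h2 u).1) x j
  let B : X1 × X2 × Z → F1 → F2 → Y → ℝ := fun x f1 f2 y =>
    ∑ s1, ∑ m1, binMass K1 h1 x.1 ((s1, f1), m1) * ∑ s2, ∑ m2,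
          binMass K2 h2 x.2.1 ((s2, f2), m2) * KY (d ((s1, f1), m1) ((s2, f2), m2) x.2.2) x.2.2 y
  let C : X1 × X2 × Z → F1 → F2 → Y → ℝ := fun x f1 f2 y =>
    ∑ u1, ∑ u2, K1 x.1 u1 * K2 x.2.1 u2 * KY (u1, u2) x.2.2 y *
          (ind ((h1 u1).1.2 = f1) * ind ((h2 u2).1.2 = f2))
  have T1 : ∀ x, ∑ f1, ∑ f2, ∑ y, |ν1 * ν2 * binOut q3 K1 K2 KY h1 h2 d π1 π2 f1 f2 x y -
      q3 x * B x f1 f2 y| ≤ q3 x * (∑ j, |P1 j - A1 x.1 j| + ∑ j, |P2 j - A2 x.2.1 j|) := by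
    intro x
    let e1 : S1 × F1 → M1 → ℝ := fun j m => binEnc K1 h1 j x.1 m
    let e2 : S2 × F2 → M2 → ℝ := fun j m => binEnc K2 h2 j x.2.1 m
    let D : S1 × F1 → S2 × F2 → M1 → M2 → Y → ℝ := fun j1 j2 m1 m2 y =>
      KY (d (j1, m1) (j2, m2) x.2.2) x.2.2 y
    have hr := replace_index_law P1 (A1 x.1) P2 (A2 x.2.1) e1 e2 D
      ⟨binMass_nonneg hK1 _ _, sum_binMass hK1 _ _⟩ hP2 (fun j => binEnc_pmf hK1 h1 j x.1)
      (fun j => binEnc_pmf hK2 h2 j x.2.1) (fun _ _ _ _ => hKY _ _)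
    have hpt : ∀ f1 f2 y, |ν1 * ν2 * binOut q3 K1 K2 KY h1 h2 d π1 π2 f1 f2 x y -
        q3 x * B x f1 f2 y| ≤ q3 x * ∑ s1, ∑ s2, |∑ m1, ∑ m2, P1 (s1, f1) * P2 (s2, f2) *
          (e1 (s1, f1) m1 * e2 (s2, f2) m2 * D (s1, f1) (s2, f2) m1 m2 y) -
        ∑ m1, ∑ m2, A1 x.1 (s1, f1) * A2 x.2.1 (s2, f2) *
          (e1 (s1, f1) m1 * e2 (s2, f2) m2 * D (s1, f1) (s2, f2) m1 m2 y)| := by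
      intro f1 f2 y
      have e : ν1 * ν2 * binOut q3 K1 K2 KY h1 h2 d π1 π2 f1 f2 x y - q3 x * B x f1 f2 y =
          q3 x * ∑ s1, ∑ s2, (∑ m1, ∑ m2, P1 (s1, f1) * P2 (s2, f2) *
          (e1 (s1, f1) m1 * e2 (s2, f2) m2 * D (s1, f1) (s2, f2) m1 m2 y) -
        ∑ m1, ∑ m2, A1 x.1 (s1, f1) * A2 x.2.1 (s2, f2) *
          (e1 (s1, f1) m1 * e2 (s2, f2) m2 * D (s1, f1) (s2, f2) m1 m2 y)) := by
        simp_rw [sum_sub_distrib]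
        rw [mul_sub]
        congr 1
        · unfold binOut
          simp_rw [mul_sum]
          refine sum_congr rfl fun s1 _ => sum_congr rfl fun s2 _ => sum_congr rfl fun m1 _ =>
            sum_congr rfl fun m2 _ => ?_
          simp only [P1, P2, e1, e2, D]; ring
        · congr 1
          refine sum_congr rfl fun s1 _ => ?_
          rw [sum_comm]
          refine sum_congr rfl fun m1 _ => ?_
          rw [mul_sum]
          refine sum_congr rfl fun s2 _ => ?_
          rw [mul_sum]
          refine sum_congr rfl fun m2 _ => ?_
          rw [← binMass_mul_binEnc hK1, ← binMass_mul_binEnc hK2]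
          simp only [A1, A2, e1, e2, D]; ring
      rw [e, abs_mul, abs_of_nonneg (hq3.1 x)]
      refine mul_le_mul_of_nonneg_left ?_ (hq3.1 x)
      refine (abs_sum_le_sum_abs _ _).trans (sum_le_sum fun s1 _ => ?_)
      exact abs_sum_le_sum_abs _ _
    refine (sum_le_sum fun f1 _ => sum_le_sum fun f2 _ => sum_le_sum fun y _ =>
      hpt f1 f2 y).trans ?_
    have hpull : ∀ E : F1 → F2 → Y → ℝ, ∑ f1, ∑ f2, ∑ y, q3 x * E f1 f2 y =
        q3 x * ∑ f1, ∑ f2, ∑ y, E f1 f2 y := fun E => by simp_rw [mul_sum]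
    rw [hpull]
    refine mul_le_mul_of_nonneg_left ?_ (hq3.1 x)
    refine le_trans (le_of_eq ?_) hr
    simp only [Fintype.sum_prod_type]
    calc _ = ∑ f1, ∑ f2, ∑ s1, ∑ s2, ∑ y, |∑ m1, ∑ m2, P1 (s1, f1) * P2 (s2, f2) *
          (e1 (s1, f1) m1 * e2 (s2, f2) m2 * D (s1, f1) (s2, f2) m1 m2 y) -
        ∑ m1, ∑ m2, A1 x.1 (s1, f1) * A2 x.2.1 (s2, f2) *
          (e1 (s1, f1) m1 * e2 (s2, f2) m2 * D (s1, f1) (s2, f2) m1 m2 y)| := by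
          refine sum_congr rfl fun f1 _ => sum_congr rfl fun f2 _ => ?_
          rw [sum_comm]; exact sum_congr rfl fun s1 _ => sum_comm
      _ = ∑ f1, ∑ s1, ∑ s2, ∑ f2, ∑ y, |∑ m1, ∑ m2, P1 (s1, f1) * P2 (s2, f2) *
          (e1 (s1, f1) m1 * e2 (s2, f2) m2 * D (s1, f1) (s2, f2) m1 m2 y) -
        ∑ m1, ∑ m2, A1 x.1 (s1, f1) * A2 x.2.1 (s2, f2) *
          (e1 (s1, f1) m1 * e2 (s2, f2) m2 * D (s1, f1) (s2, f2) m1 m2 y)| := by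
          refine sum_congr rfl fun f1 _ => ?_
          rw [sum_comm]; exact sum_congr rfl fun s1 _ => sum_comm
      _ = _ := sum_comm
  have T2 : ∀ x, ∑ f1, ∑ f2, ∑ y, |q3 x * B x f1 f2 y - q3 x * C x f1 f2 y| ≤
      q3 x * (2 * ∑ u1, ∑ u2, K1 x.1 u1 * K2 x.2.1 u2 *
        ind (d (h1 u1) (h2 u2) x.2.2 ≠ (u1, u2))) := by
    intro x
    simp_rw [← mul_sub, abs_mul, abs_of_nonneg (hq3.1 x), ← mul_sum]
    refine mul_le_mul_of_nonneg_left ?_ (hq3.1 x)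
    exact replace_decoded hK1 hK2 (fun u y => KY u x.2.2 y) (fun u => hKY u _) h1 h2
      (fun k1 k2 => d k1 k2 x.2.2) x.1 x.2.1
  have T3 : ∀ x, ∑ f1, ∑ f2, ∑ y, |q3 x * C x f1 f2 y - q4 x y * (ν1 * ν2)| =
      ∑ y, ∑ f1, ∑ f2, |∑ u1, ∑ u2, q3 x * (K1 x.1 u1 * K2 x.2.1 u2 *
        KY (u1, u2) x.2.2 y) * (ind ((h1 u1).1.2 = f1) * ind ((h2 u2).1.2 = f2)) -
        q4 x y * (ν1 * ν2)| := by
    intro x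
    calc _ = ∑ f1, ∑ y, ∑ f2, |q3 x * C x f1 f2 y - q4 x y * (ν1 * ν2)| :=
          sum_congr rfl fun f1 _ => sum_comm
      _ = ∑ y, ∑ f1, ∑ f2, |q3 x * C x f1 f2 y - q4 x y * (ν1 * ν2)| := sum_comm
      _ = _ := by
          refine sum_congr rfl fun y _ => sum_congr rfl fun f1 _ => sum_congr rfl fun f2 _ => ?_
          simp only [C, mul_sum, mul_assoc]
  calc _ = ∑ x, ∑ f1, ∑ f2, ∑ y, |ν1 * ν2 * binOut q3 K1 K2 KY h1 h2 d π1 π2 f1 f2 x y -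
        q4 x y * (ν1 * ν2)| := by
        simp_rw [mul_sum]
        rw [sum_comm' (t' := univ) (s' := fun _ => univ) (by simp), sum_comm]
        have : ∀ f1, ∑ f2, ∑ x, ∑ y, ν1 * ν2 *
            |binOut q3 K1 K2 KY h1 h2 d π1 π2 f1 f2 x y - q4 x y| =
            ∑ x, ∑ f2, ∑ y, ν1 * ν2 *
            |binOut q3 K1 K2 KY h1 h2 d π1 π2 f1 f2 x y - q4 x y| := fun f1 => sum_comm
        simp_rw [this]
        rw [sum_comm]
        refine sum_congr rfl fun x _ => sum_congr rfl fun f1 _ => sum_congr rfl fun f2 _ =>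
          sum_congr rfl fun y _ => ?_
        rw [← abs_of_nonneg (mul_nonneg hν10 hν20), ← abs_mul, abs_of_nonneg (mul_nonneg hν10 hν20)]
        congr 1; ring
    _ ≤ ∑ x, ∑ f1, ∑ f2, ∑ y, (|ν1 * ν2 * binOut q3 K1 K2 KY h1 h2 d π1 π2 f1 f2 x y -
        q3 x * B x f1 f2 y| + |q3 x * B x f1 f2 y - q3 x * C x f1 f2 y| +
        |q3 x * C x f1 f2 y - q4 x y * (ν1 * ν2)|) := by
        refine sum_le_sum fun x _ => sum_le_sum fun f1 _ => sum_le_sum fun f2 _ =>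
          sum_le_sum fun y _ => ?_
        refine (abs_sub_le _ (q3 x * C x f1 f2 y) _).trans (add_le_add_left ?_ _)
        exact abs_sub_le _ _ _
    _ ≤ ∑ x, (q3 x * ((∑ s, |π1 s - (Fintype.card S1 : ℝ)⁻¹| +
          ∑ j, |A1 x.1 j - (Fintype.card (S1 × F1) : ℝ)⁻¹|) +
          (∑ s, |π2 s - (Fintype.card S2 : ℝ)⁻¹| +
          ∑ j, |A2 x.2.1 j - (Fintype.card (S2 × F2) : ℝ)⁻¹|)) +
        q3 x * (2 * ∑ u1, ∑ u2, K1 x.1 u1 * K2 x.2.1 u2 *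
          ind (d (h1 u1) (h2 u2) x.2.2 ≠ (u1, u2))) +
        ∑ y, ∑ f1, ∑ f2, |∑ u1, ∑ u2, q3 x * (K1 x.1 u1 * K2 x.2.1 u2 *
        KY (u1, u2) x.2.2 y) * (ind ((h1 u1).1.2 = f1) * ind ((h2 u2).1.2 = f2)) -
        q4 x y * (ν1 * ν2)|) := by
        refine sum_le_sum fun x _ => ?_
        simp_rw [sum_add_distrib]
        refine add_le_add (add_le_add ((T1 x).trans ?_) (T2 x)) (T3 x).le
        refine mul_le_mul_of_nonneg_left ?_ (hq3.1 x)
        exact add_le_add (index_law_dist π1 ν1 (A1 x.1) hν10 hFν1 hν1)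
          (index_law_dist π2 ν2 (A2 x.2.1) hν20 hFν2 hν2)
    _ = _ := by
        simp_rw [mul_add, sum_add_distrib, ← sum_mul, hq3.2, one_mul]
        rw [mul_sum (a := (2 : ℝ))]
        simp_rw [mul_left_comm _ (2 : ℝ)]
        simp only [A1, A2]
        ring

/-! ### Marginals of a finite probability space, and random binning in terms of them -/

/-- Probability of the event `f = b` under `P`. -/
noncomputable def pm {Ω β : Type*} [Fintype Ω] (P : Ω → ℝ) (f : Ω → β) (b : β) : ℝ :=
  ∑ ω, P ω * ind (f ω = b)

lemma pm_nonneg {Ω β : Type*} [Fintype Ω] {P : Ω → ℝ} (hP : ∀ ω, 0 ≤ P ω) (f : Ω → β) (b : β) :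
    0 ≤ pm P f b := sum_nonneg fun ω _ => mul_nonneg (hP ω) (ind_nonneg _)

lemma sum_pm_mul {Ω β : Type*} [Fintype Ω] [Fintype β] (P : Ω → ℝ) (f : Ω → β) (F : β → ℝ) :
    ∑ b, pm P f b * F b = ∑ ω, P ω * F (f ω) := by
  unfold pm
  simp_rw [sum_mul]
  rw [sum_comm]
  refine sum_congr rfl fun ω _ => ?_
  simp_rw [mul_assoc, ← mul_sum, sum_ind_mul]

lemma sum_pm_right {Ω β γ : Type*} [Fintype Ω] [Fintype γ] (P : Ω → ℝ) (f : Ω → β) (g : Ω → γ)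
    (b : β) : ∑ c, pm P (fun ω => (f ω, g ω)) (b, c) = pm P f b := by
  unfold pm
  rw [sum_comm]
  refine sum_congr rfl fun ω _ => ?_
  have : ∀ c, ind ((f ω, g ω) = (b, c)) = ind (g ω = c) * ind (f ω = b) := fun c => by
    rw [ind_mul_ind]; exact ind_congr (by rw [Prod.ext_iff, and_comm])
  simp_rw [this, ← mul_sum, ← sum_mul, sum_ind, one_mul]

lemma pm_congr {Ω β γ : Type*} [Fintype Ω] (P : Ω → ℝ) {f : Ω → β} {g : Ω → γ} {b : β} {c : γ}
    (h : ∀ ω, f ω = b ↔ g ω = c) : pm P f b = pm P g c :=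
  sum_congr rfl fun ω _ => by rw [ind_congr (h ω)]

lemma le_pm {Ω β : Type*} [Fintype Ω] {P : Ω → ℝ} (hP : ∀ ω, 0 ≤ P ω) (f : Ω → β) (ω : Ω) :
    P ω ≤ pm P f (f ω) := by
  refine le_trans (le_of_eq ?_)
    (single_le_sum (fun i _ => mul_nonneg (hP i) (ind_nonneg (f i = f ω))) (mem_univ ω))
  rw [ind_of rfl, mul_one]

lemma ind_not_and_le (A B : Prop) : ind (¬(A ∧ B)) ≤ ind (¬A) + ind (¬B) := by
  by_cases hA : A <;> by_cases hB : B <;> simp [ind, hA, hB]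

/-- Probability that the conditional probability of `f` given `g` exceeds `γ`. -/
noncomputable def upTail {Ω β γ' : Type*} [Fintype Ω] (P : Ω → ℝ) (f : Ω → β) (g : Ω → γ')
    (γ : ℝ) : ℝ := ∑ ω, P ω * ind (¬ pm P f (f ω) ≤ γ * pm P g (g ω))

/-- Probability that the conditional probability of `f` given `g` falls below `κ`. -/
noncomputable def loTail {Ω β γ' : Type*} [Fintype Ω] (P : Ω → ℝ) (f : Ω → β) (g : Ω → γ')
    (κ : ℝ) : ℝ := ∑ ω, P ω * ind (¬ κ * pm P g (g ω) ≤ pm P f (f ω))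

/-- `binning_two` for random variables `w, a, b` on a common finite probability space. -/
lemma binning_two_rv {Ω Φ Ψ A B K L W : Type*} [Fintype Ω] [Fintype Φ] [Fintype Ψ] [Fintype A]
    [Fintype B] [Fintype K] [Fintype L] [Nonempty K] [Nonempty L] [Fintype W]
    {μ : Φ → ℝ} {h : Φ → A → K} (H : PairUnif μ h) {ν : Ψ → ℝ} {g : Ψ → B → L}
    (G : PairUnif ν g) {P : Ω → ℝ} (hP : IsPMF P) (w : Ω → W) (a : Ω → A) (b : Ω → B)
    (γ12 γ1 γ2 : ℝ) (h0 : 0 ≤ γ12) (h01 : 0 ≤ γ1) (h02 : 0 ≤ γ2) :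
    ∑ x : Φ × Ψ, μ x.1 * ν x.2 * ∑ v, ∑ k, ∑ l,
        |∑ ω, P ω * ind (w ω = v) * (ind (h x.1 (a ω) = k) * ind (g x.2 (b ω) = l)) -
          pm P w v * ((Fintype.card K : ℝ)⁻¹ * (Fintype.card L : ℝ)⁻¹)| ≤
      2 * (upTail P (fun ω => (w ω, a ω, b ω)) w γ12 + upTail P (fun ω => (w ω, a ω)) w γ1 +
        upTail P (fun ω => (w ω, b ω)) w γ2) +
        √(((Fintype.card K : ℝ) - 1) * ((Fintype.card L : ℝ) - 1) * γ12 +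
          ((Fintype.card K : ℝ) - 1) * γ1 + ((Fintype.card L : ℝ) - 1) * γ2) := by
  let p : W → A → B → ℝ := fun v a' b' => pm P (fun ω => (w ω, a ω, b ω)) (v, a', b')
  have hp : ∀ v a' b', 0 ≤ p v a' b' := fun _ _ _ => pm_nonneg hP.1 _ _
  have e1 : ∀ v a', ∑ b', p v a' b' = pm P (fun ω => (w ω, a ω)) (v, a') := fun v a' => by
    rw [← sum_pm_right P (fun ω => (w ω, a ω)) b]
    exact sum_congr rfl fun b' _ => pm_congr P fun ω => by simp [Prod.ext_iff, and_assoc]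
  have e2 : ∀ v b', ∑ a', p v a' b' = pm P (fun ω => (w ω, b ω)) (v, b') := fun v b' => by
    rw [← sum_pm_right P (fun ω => (w ω, b ω)) a]
    exact sum_congr rfl fun a' _ => pm_congr P fun ω => by simp [Prod.ext_iff]; tauto
  have e0 : ∀ v, ∑ a', ∑ b', p v a' b' = pm P w v := fun v => by
    simp_rw [e1]; exact sum_pm_right P w a v
  have hF : ∀ F : W → A → B → ℝ, ∑ v, ∑ a', ∑ b', p v a' b' * F v a' b' =
      ∑ ω, P ω * F (w ω) (a ω) (b ω) := fun F => by
    have := sum_pm_mul P (fun ω => (w ω, a ω, b ω)) (fun c => F c.1 c.2.1 c.2.2)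
    simpa only [Fintype.sum_prod_type] using this
  have hF' : ∀ v, ∀ F : A → B → ℝ, ∑ a', ∑ b', p v a' b' * F a' b' =
      ∑ ω, P ω * ind (w ω = v) * F (a ω) (b ω) := fun v F => by
    have := hF (fun v' a' b' => ind (v' = v) * F a' b')
    simp_rw [mul_left_comm _ (ind _), ← mul_sum, sum_ind_mul'] at this
    rw [this]
    exact sum_congr rfl fun ω _ => by ring
  have main := binning_two H G p hp
    (fun v a' b' => p v a' b' ≤ γ12 * pm P w v ∧ pm P (fun ω => (w ω, a ω)) (v, a') ≤ γ1 * pm P w v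
      ∧ pm P (fun ω => (w ω, b ω)) (v, b') ≤ γ2 * pm P w v) γ12 γ1 γ2 h0 h01 h02
    (fun v a' b' hS => by rw [e0]; exact hS.1) (fun v a' b' hS => by rw [e0, e1]; exact hS.2.1)
    (fun v a' b' hS => by rw [e0, e2]; exact hS.2.2)
  rw [hF] at main
  simp_rw [hF', e0] at main
  refine main.trans ?_
  have hmass : ∑ v, pm P w v = 1 := by
    have := sum_pm_mul P w (fun _ => 1)
    simpa [hP.2] using this
  rw [hmass, one_mul]
  refine add_le_add_left (mul_le_mul_of_nonneg_left ?_ zero_le_two) _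
  unfold upTail
  rw [← sum_add_distrib, ← sum_add_distrib]
  refine sum_le_sum fun ω _ => ?_
  rw [← mul_add, ← mul_add]
  refine mul_le_mul_of_nonneg_left ?_ (hP.1 ω)
  refine (ind_not_and_le _ _).trans ?_
  rw [add_assoc]
  exact add_le_add_right (ind_not_and_le _ _) _

/-- `binning_one` for random variables on a common finite probability space. -/
lemma binning_one_rv {Ω Φ A K W : Type*} [Fintype Ω] [Fintype Φ] [Fintype A]
    [Fintype K] [Nonempty K] [Fintype W]
    {μ : Φ → ℝ} {h : Φ → A → K} (H : PairUnif μ h) {P : Ω → ℝ} (hP : IsPMF P)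
    (w : Ω → W) (a : Ω → A) (γ : ℝ) (h0 : 0 ≤ γ) :
    ∑ x : Φ, μ x * ∑ v, ∑ k,
        |∑ ω, P ω * ind (w ω = v) * ind (h x (a ω) = k) - pm P w v * (Fintype.card K : ℝ)⁻¹| ≤
      2 * upTail P (fun ω => (w ω, a ω)) w γ + √(((Fintype.card K : ℝ) - 1) * γ) := by
  let p : W → A → ℝ := fun v a' => pm P (fun ω => (w ω, a ω)) (v, a')
  have e0 : ∀ v, ∑ a', p v a' = pm P w v := sum_pm_right P w a
  have hF : ∀ F : W → A → ℝ, ∑ v, ∑ a', p v a' * F v a' =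
      ∑ ω, P ω * F (w ω) (a ω) := fun F => by
    have := sum_pm_mul P (fun ω => (w ω, a ω)) (fun c => F c.1 c.2)
    simpa only [Fintype.sum_prod_type] using this
  have hF' : ∀ v, ∀ F : A → ℝ, ∑ a', p v a' * F a' =
      ∑ ω, P ω * ind (w ω = v) * F (a ω) := fun v F => by
    have := hF (fun v' a' => ind (v' = v) * F a')
    simp_rw [mul_left_comm _ (ind _), ← mul_sum, sum_ind_mul'] at this
    rw [this]
    exact sum_congr rfl fun ω _ => by ring
  have main := binning_one H p (fun _ _ => pm_nonneg hP.1 _ _)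
    (fun v a' => p v a' ≤ γ * pm P w v) γ h0 (fun v a' hS => by rw [e0]; exact hS)
  rw [hF] at main
  simp_rw [hF', e0] at main
  refine main.trans ?_
  have hmass : ∑ v, pm P w v = 1 := by
    have := sum_pm_mul P w (fun _ => 1)
    simpa [hP.2] using this
  rw [hmass, one_mul]
  exact le_of_eq rfl

/-- `slepian_wolf` for random variables on a common finite probability space. -/
lemma slepian_wolf_rv {Ω Φ Ψ A B K L W : Type*} [Fintype Ω] [Fintype Φ] [Fintype Ψ] [Fintype A]
    [Fintype B] [Nonempty A] [Nonempty B] [Fintype K] [Fintype L] [Nonempty K] [Nonempty L]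
    [Fintype W] {μ : Φ → ℝ} {h : Φ → A → K} (H : PairUnif μ h) {ν : Ψ → ℝ} {g : Ψ → B → L}
    (G : PairUnif ν g) {P : Ω → ℝ} (hP : IsPMF P) (w : Ω → W) (a : Ω → A) (b : Ω → B)
    (κ12 κ1 κ2 : ℝ) (h0 : 0 < κ12) (h01 : 0 < κ1) (h02 : 0 < κ2) :
    ∃ S : W → A → B → Prop, ∑ x : Φ × Ψ, μ x.1 * ν x.2 * ∑ ω, P ω *
        ind (binDec (h x.1) (g x.2) (S (w ω)) (h x.1 (a ω)) (g x.2 (b ω)) ≠ (a ω, b ω)) ≤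
      (loTail P (fun ω => (w ω, a ω, b ω)) w κ12 +
        loTail P (fun ω => (w ω, a ω, b ω)) (fun ω => (w ω, b ω)) κ1 +
        loTail P (fun ω => (w ω, a ω, b ω)) (fun ω => (w ω, a ω)) κ2) +
        ((Fintype.card K : ℝ)⁻¹ * κ1⁻¹ + (Fintype.card L : ℝ)⁻¹ * κ2⁻¹ +
          (Fintype.card K : ℝ)⁻¹ * (Fintype.card L : ℝ)⁻¹ * κ12⁻¹) := by
  let p : W → A → B → ℝ := fun v a' b' => pm P (fun ω => (w ω, a ω, b ω)) (v, a', b')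
  have hp : ∀ v a' b', 0 ≤ p v a' b' := fun _ _ _ => pm_nonneg hP.1 _ _
  have e1 : ∀ v a', ∑ b', p v a' b' = pm P (fun ω => (w ω, a ω)) (v, a') := fun v a' => by
    rw [← sum_pm_right P (fun ω => (w ω, a ω)) b]
    exact sum_congr rfl fun b' _ => pm_congr P fun ω => by simp [Prod.ext_iff, and_assoc]
  have e2 : ∀ v b', ∑ a', p v a' b' = pm P (fun ω => (w ω, b ω)) (v, b') := fun v b' => by
    rw [← sum_pm_right P (fun ω => (w ω, b ω)) a]
    exact sum_congr rfl fun a' _ => pm_congr P fun ω => by simp [Prod.ext_iff]; tauto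
  have e0 : ∀ v, ∑ a', ∑ b', p v a' b' = pm P w v := fun v => by
    simp_rw [e1]; exact sum_pm_right P w a v
  have hF : ∀ F : W → A → B → ℝ, ∑ v, ∑ a', ∑ b', p v a' b' * F v a' b' =
      ∑ ω, P ω * F (w ω) (a ω) (b ω) := fun F => by
    have := sum_pm_mul P (fun ω => (w ω, a ω, b ω)) (fun c => F c.1 c.2.1 c.2.2)
    simpa only [Fintype.sum_prod_type] using this
  let S : W → A → B → Prop := fun v a' b' => (κ12 * pm P w v ≤ p v a' b' ∧
      κ1 * pm P (fun ω => (w ω, b ω)) (v, b') ≤ p v a' b' ∧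
      κ2 * pm P (fun ω => (w ω, a ω)) (v, a') ≤ p v a' b') ∧ 0 < p v a' b'
  have main := slepian_wolf H G p hp S κ12 κ1 κ2 h0 h01 h02 (fun v a' b' hS => hS.2)
    (fun v a' b' hS => by rw [e0]; exact hS.1.1) (fun v a' b' hS => by rw [e2]; exact hS.1.2.1)
    (fun v a' b' hS => by rw [e1]; exact hS.1.2.2)
  refine ⟨S, ?_⟩
  simp_rw [hF, e0] at main
  refine main.trans ?_
  have hmass : ∑ v, pm P w v = 1 := by
    have := sum_pm_mul P w (fun _ => 1)
    simpa [hP.2] using this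
  rw [hmass, one_mul]
  refine add_le_add_left ?_ _
  unfold loTail
  rw [← sum_add_distrib, ← sum_add_distrib]
  refine sum_le_sum fun ω _ => ?_
  rw [← mul_add, ← mul_add]
  rcases (hP.1 ω).eq_or_lt with hz | hpos
  · rw [← hz]; simp
  refine mul_le_mul_of_nonneg_left ?_ (hP.1 ω)
  have hpp : 0 < p (w ω) (a ω) (b ω) :=
    hpos.trans_le (le_pm hP.1 (fun ω => (w ω, a ω, b ω)) ω)
  refine (ind_not_and_le _ _).trans ?_
  rw [ind_not (not_not.2 hpp), add_zero]
  refine (ind_not_and_le _ _).trans ?_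
  rw [add_assoc]
  exact add_le_add_right (ind_not_and_le _ _) _

/-! ### The one-shot coding theorem -/

/-- The joint law of `(X₁, X₂, Z, T, U₁, U₂, Y)` built from its factors. -/
noncomputable def fullLaw {X1 X2 Z T U1 U2 Y : Type*} (q3 : X1 × X2 × Z → ℝ) (pT : T → ℝ)
    (K1 : X1 → T → U1 → ℝ) (K2 : X2 → T → U2 → ℝ) (KY : U1 → U2 → Z → T → Y → ℝ)
    (ω : X1 × X2 × Z × T × U1 × U2 × Y) : ℝ :=
  q3 (vX1 ω, vX2 ω, vZ ω) * pT (vT ω) * K1 (vX1 ω) (vT ω) (vU1 ω) * K2 (vX2 ω) (vT ω) (vU2 ω) *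
    KY (vU1 ω) (vU2 ω) (vZ ω) (vT ω) (vY ω)

section OneShot

variable {X1 X2 Z T U1 U2 Y : Type*} [Fintype X1] [Fintype X2] [Fintype Z] [Fintype T]
  [Fintype U1] [Fintype U2] [Fintype Y]
  {q3 : X1 × X2 × Z → ℝ} {pT : T → ℝ} {K1 : X1 → T → U1 → ℝ} {K2 : X2 → T → U2 → ℝ}
  {KY : U1 → U2 → Z → T → Y → ℝ}

lemma sum_fullLaw_mul (F : T → X1 × X2 × Z → U1 → U2 → Y → ℝ) :
    ∑ ω, fullLaw q3 pT K1 K2 KY ω *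
        F (vT ω) (vX1 ω, vX2 ω, vZ ω) (vU1 ω) (vU2 ω) (vY ω) =
      ∑ t, pT t * ∑ x : X1 × X2 × Z, q3 x * ∑ u1, ∑ u2, ∑ y,
        K1 x.1 t u1 * K2 x.2.1 t u2 * KY u1 u2 x.2.2 t y * F t x u1 u2 y := by
  simp_rw [mul_sum]
  rw [sum_comm]
  simp only [Fintype.sum_prod_type, fullLaw, vX1, vX2, vZ, vT, vU1, vU2, vY]
  refine sum_congr rfl fun x1 _ => sum_congr rfl fun x2 _ => sum_congr rfl fun z _ =>
    sum_congr rfl fun t _ => sum_congr rfl fun u1 _ => sum_congr rfl fun u2 _ =>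
    sum_congr rfl fun y _ => ?_
  ring

lemma sum_fullLaw_12 (hKY : ∀ u1 u2 z t, IsPMF (KY u1 u2 z t))
    (F : T → X1 × X2 × Z → U1 → U2 → ℝ) :
    ∑ ω, fullLaw q3 pT K1 K2 KY ω * F (vT ω) (vX1 ω, vX2 ω, vZ ω) (vU1 ω) (vU2 ω) =
      ∑ t, pT t * ∑ x : X1 × X2 × Z, q3 x * ∑ u1, ∑ u2, K1 x.1 t u1 * K2 x.2.1 t u2 *
        F t x u1 u2 := by
  rw [sum_fullLaw_mul (fun t x u1 u2 _ => F t x u1 u2)]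
  simp_rw [← sum_mul, ← mul_sum, (hKY _ _ _ _).2, mul_one]

lemma sum_fullLaw_1 (hK2 : ∀ x t, IsPMF (K2 x t)) (hKY : ∀ u1 u2 z t, IsPMF (KY u1 u2 z t))
    (F : T → X1 × X2 × Z → U1 → ℝ) :
    ∑ ω, fullLaw q3 pT K1 K2 KY ω * F (vT ω) (vX1 ω, vX2 ω, vZ ω) (vU1 ω) =
      ∑ t, pT t * ∑ x : X1 × X2 × Z, q3 x * ∑ u1, K1 x.1 t u1 * F t x u1 := by
  rw [sum_fullLaw_12 hKY (fun t x u1 _ => F t x u1)]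
  simp_rw [← sum_mul, ← mul_sum, (hK2 _ _).2, mul_one]

lemma sum_fullLaw_2 (hK1 : ∀ x t, IsPMF (K1 x t)) (hKY : ∀ u1 u2 z t, IsPMF (KY u1 u2 z t))
    (F : T → X1 × X2 × Z → U2 → ℝ) :
    ∑ ω, fullLaw q3 pT K1 K2 KY ω * F (vT ω) (vX1 ω, vX2 ω, vZ ω) (vU2 ω) =
      ∑ t, pT t * ∑ x : X1 × X2 × Z, q3 x * ∑ u2, K2 x.2.1 t u2 * F t x u2 := by
  rw [sum_fullLaw_12 hKY (fun t x _ u2 => F t x u2)]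
  simp_rw [mul_assoc, ← mul_sum, ← sum_mul, (hK1 _ _).2, one_mul]

lemma fullLaw_pmf (hq3 : IsPMF q3) (hpT : IsPMF pT) (hK1 : ∀ x t, IsPMF (K1 x t))
    (hK2 : ∀ x t, IsPMF (K2 x t)) (hKY : ∀ u1 u2 z t, IsPMF (KY u1 u2 z t)) :
    IsPMF (fullLaw q3 pT K1 K2 KY) := by
  refine ⟨fun ω => ?_, ?_⟩
  · unfold fullLaw
    exact mul_nonneg (mul_nonneg (mul_nonneg (mul_nonneg (hq3.1 _) (hpT.1 _)) ((hK1 _ _).1 _))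
      ((hK2 _ _).1 _)) ((hKY _ _ _ _).1 _)
  · have := sum_fullLaw_1 (q3 := q3) (pT := pT) (K1 := K1) hK2 hKY (fun _ _ _ => 1)
    simpa [(hK1 _ _).2, hq3.2, hpT.2] using this

/-- The non-uniformity of one encoder's bin index given its own source and `T`, in the two forms
needed: for the joint law, and averaged over `T` and the sources. -/
lemma binMass_avg {Ω X X' U J : Type*} [Fintype Ω] [Fintype X] [Fintype X'] [Fintype U] [Fintype J]
    {P : Ω → ℝ} {q : X → ℝ} (hq : IsPMF q) (hpT : IsPMF pT) {K : X' → T → U → ℝ}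
    (hK : ∀ x t, IsPMF (K x t)) (π : X → X') (t : Ω → T) (x : Ω → X') (u : Ω → U)
    (hP : ∀ F : T → X' → U → ℝ, ∑ ω, P ω * F (t ω) (x ω) (u ω) =
      ∑ s, pT s * ∑ ξ, q ξ * ∑ v, K (π ξ) s v * F s (π ξ) v) (h : U → J) (c : ℝ) :
    ∑ v, ∑ k, |∑ ω, P ω * ind ((t ω, x ω) = v) * ind (h (u ω) = k) -
        pm P (fun ω => (t ω, x ω)) v * c| =
      ∑ s, pT s * ∑ ξ, q ξ * ∑ j, |binMass (fun x => K x s) h (π ξ) j - c| := by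
  have key : ∀ s ξ', ∀ F : U → ℝ, ∑ ω, P ω * ind ((t ω, x ω) = (s, ξ')) * F (u ω) =
      pT s * (pm q π ξ' * ∑ v, K ξ' s v * F v) := by
    intro s ξ' F
    have h1 := hP (fun s' ξ'' v => ind ((s', ξ'') = (s, ξ')) * F v)
    simp_rw [← mul_assoc] at h1
    rw [h1]
    have e : ∀ s' ξ'', ind ((s', ξ'') = (s, ξ')) = ind (s' = s) * ind (ξ'' = ξ') := fun s' ξ'' => by
      rw [ind_mul_ind]; exact ind_congr (by rw [Prod.ext_iff])
    simp_rw [e]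
    have e2 : ∀ s', pT s' * ∑ ξ, q ξ * ∑ v, K (π ξ) s' v * (ind (s' = s) * ind (π ξ = ξ')) * F v =
        ind (s' = s) * (pT s' * ∑ ξ, q ξ * (ind (π ξ = ξ') * ∑ v, K (π ξ) s' v * F v)) := by
      intro s'
      simp_rw [mul_sum]
      exact sum_congr rfl fun _ _ => sum_congr rfl fun _ _ => by ring
    simp_rw [e2, sum_ind_mul']
    congr 1
    unfold pm
    rw [sum_mul]
    refine sum_congr rfl fun ξ _ => ?_
    rw [mul_assoc]
    congr 1
    by_cases hh : π ξ = ξ'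
    · rw [hh]
    · rw [ind_not hh, zero_mul, zero_mul]
  have key0 : ∀ s ξ', pm P (fun ω => (t ω, x ω)) (s, ξ') = pT s * pm q π ξ' := fun s ξ' => by
    have := key s ξ' (fun _ => 1)
    simp_rw [mul_one, (hK _ _).2, mul_one] at this
    exact this
  rw [Fintype.sum_prod_type]
  refine sum_congr rfl fun s _ => ?_
  have e3 : ∀ ξ', ∑ k, |∑ ω, P ω * ind ((t ω, x ω) = (s, ξ')) * ind (h (u ω) = k) -
        pm P (fun ω => (t ω, x ω)) (s, ξ') * c| =
      pT s * (pm q π ξ' * ∑ j, |binMass (fun x => K x s) h ξ' j - c|) := by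
    intro ξ'
    simp_rw [mul_sum]
    refine sum_congr rfl fun k _ => ?_
    rw [key s ξ' (fun v => ind (h v = k)), key0, ← mul_assoc, ← mul_assoc, mul_assoc _ _ c,
      ← mul_assoc, ← mul_sub, abs_mul,
      abs_of_nonneg (mul_nonneg (hpT.1 s) (pm_nonneg hq.1 _ _))]
    rfl
  simp_rw [e3, ← mul_sum]
  rw [sum_pm_mul q π]

end OneShot

/-- **One-shot coding theorem.** For any bin alphabets and thresholds there is a binning code whose
output law is close to the target: the error consists of the probabilities that the relevant
conditional probabilities violate the thresholds, of bin counts times thresholds, and of the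
non-uniformity of the shared randomness. -/
lemma one_shot {X1 X2 Z T U1 U2 Y S1 F1 M1 S2 F2 M2 : Type}
    [Fintype X1] [Fintype X2] [Fintype Z] [Fintype T]
    [Fintype U1] [Fintype U2] [Fintype Y] [Nonempty U1] [Nonempty U2]
    [Fintype S1] [Fintype F1] [Fintype M1] [Fintype S2] [Fintype F2] [Fintype M2]
    [Nonempty S1] [Nonempty F1] [Nonempty M1] [Nonempty S2] [Nonempty F2] [Nonempty M2]
    {q3 : X1 × X2 × Z → ℝ} {pT : T → ℝ} {K1 : X1 → T → U1 → ℝ} {K2 : X2 → T → U2 → ℝ}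
    {KY : U1 → U2 → Z → T → Y → ℝ}
    (hq3 : IsPMF q3) (hpT : IsPMF pT) (hK1 : ∀ x t, IsPMF (K1 x t))
    (hK2 : ∀ x t, IsPMF (K2 x t)) (hKY : ∀ u1 u2 z t, IsPMF (KY u1 u2 z t))
    (q4 : X1 × X2 × Z → Y → ℝ)
    (hcons : ∀ t x y, ∑ u1, ∑ u2, q3 x * (K1 x.1 t u1 * K2 x.2.1 t u2 * KY u1 u2 x.2.2 t y) =
      q4 x y)
    (π1 : S1 → ℝ) (π2 : S2 → ℝ) (hπ2 : IsPMF π2)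
    {β1 β2 γ12 γ1 γ2 κ12 κ1 κ2 : ℝ} (hβ1 : 0 ≤ β1) (hβ2 : 0 ≤ β2) (hγ12 : 0 ≤ γ12) (hγ1 : 0 ≤ γ1)
    (hγ2 : 0 ≤ γ2) (hκ12 : 0 < κ12) (hκ1 : 0 < κ1) (hκ2 : 0 < κ2)
    {P : X1 × X2 × Z × T × U1 × U2 × Y → ℝ} (hPdef : P = fullLaw q3 pT K1 K2 KY) :
    ∃ (t : T) (h1 : U1 → (S1 × F1) × M1) (h2 : U2 → (S2 × F2) × M2)
      (d : (S1 × F1) × M1 → (S2 × F2) × M2 → Z → U1 × U2) (f1 : F1) (f2 : F2),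
      ∑ x, ∑ y, |binOut q3 (fun x => K1 x t) (fun x => K2 x t) (fun u z => KY u.1 u.2 z t)
        h1 h2 d π1 π2 f1 f2 x y - q4 x y| ≤
      (2 * upTail P (fun ω => ((vT ω, vX1 ω), vU1 ω)) (fun ω => (vT ω, vX1 ω)) β1 +
        √(((Fintype.card (S1 × F1) : ℝ) - 1) * β1)) +
      (2 * upTail P (fun ω => ((vT ω, vX2 ω), vU2 ω)) (fun ω => (vT ω, vX2 ω)) β2 +
        √(((Fintype.card (S2 × F2) : ℝ) - 1) * β2)) +
      2 * ((loTail P (fun ω => ((vT ω, vZ ω), vU1 ω, vU2 ω)) (fun ω => (vT ω, vZ ω)) κ12 +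
        loTail P (fun ω => ((vT ω, vZ ω), vU1 ω, vU2 ω)) (fun ω => ((vT ω, vZ ω), vU2 ω)) κ1 +
        loTail P (fun ω => ((vT ω, vZ ω), vU1 ω, vU2 ω)) (fun ω => ((vT ω, vZ ω), vU1 ω)) κ2) +
        ((Fintype.card ((S1 × F1) × M1) : ℝ)⁻¹ * κ1⁻¹ +
          (Fintype.card ((S2 × F2) × M2) : ℝ)⁻¹ * κ2⁻¹ +
          (Fintype.card ((S1 × F1) × M1) : ℝ)⁻¹ * (Fintype.card ((S2 × F2) × M2) : ℝ)⁻¹ * κ12⁻¹)) +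
      (2 * (upTail P (fun ω => ((vT ω, (vX1 ω, vX2 ω, vZ ω), vY ω), vU1 ω, vU2 ω))
          (fun ω => (vT ω, (vX1 ω, vX2 ω, vZ ω), vY ω)) γ12 +
        upTail P (fun ω => ((vT ω, (vX1 ω, vX2 ω, vZ ω), vY ω), vU1 ω))
          (fun ω => (vT ω, (vX1 ω, vX2 ω, vZ ω), vY ω)) γ1 +
        upTail P (fun ω => ((vT ω, (vX1 ω, vX2 ω, vZ ω), vY ω), vU2 ω))
          (fun ω => (vT ω, (vX1 ω, vX2 ω, vZ ω), vY ω)) γ2) +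
        √(((Fintype.card F1 : ℝ) - 1) * ((Fintype.card F2 : ℝ) - 1) * γ12 +
          ((Fintype.card F1 : ℝ) - 1) * γ1 + ((Fintype.card F2 : ℝ) - 1) * γ2)) +
      (∑ s, |π1 s - (Fintype.card S1 : ℝ)⁻¹|) + ∑ s, |π2 s - (Fintype.card S2 : ℝ)⁻¹| := by
  have hPpmf : IsPMF P := hPdef ▸ fullLaw_pmf hq3 hpT hK1 hK2 hKY
  obtain ⟨Φ, _, μ, h, H⟩ := exists_pairUnif U1 ((S1 × F1) × M1)
  obtain ⟨Ψ, _, ν, g, G⟩ := exists_pairUnif U2 ((S2 × F2) × M2)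
  -- the four random coding estimates
  have B1 := binning_one_rv H.fst hPpmf (fun ω => (vT ω, vX1 ω)) vU1 β1 hβ1
  have B2 := binning_one_rv G.fst hPpmf (fun ω => (vT ω, vX2 ω)) vU2 β2 hβ2
  obtain ⟨S, B3⟩ := slepian_wolf_rv H G hPpmf (fun ω => (vT ω, vZ ω)) vU1 vU2 κ12 κ1 κ2 hκ12 hκ1 hκ2
  have B4 := binning_two_rv H.fst.snd G.fst.snd hPpmf
    (fun ω => (vT ω, (vX1 ω, vX2 ω, vZ ω), vY ω)) vU1 vU2 γ12 γ1 γ2 hγ12 hγ1 hγ2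
  -- each of them rewritten as an average over `T`
  have A1 : ∀ φ, _ := fun φ => binMass_avg (P := P) hq3 hpT hK1 Prod.fst vT vX1 vU1
    (fun F => by
      rw [hPdef]; exact sum_fullLaw_1 hK2 hKY (fun t x u => F t x.1 u))
    (fun u => (h φ u).1) (Fintype.card (S1 × F1) : ℝ)⁻¹
  have A2 : ∀ ψ, _ := fun ψ => binMass_avg (P := P) hq3 hpT hK2 (fun x => x.2.1) vT vX2 vU2
    (fun F => by
      rw [hPdef]; exact sum_fullLaw_2 hK1 hKY (fun t x u => F t x.2.1 u))
    (fun u => (g ψ u).1) (Fintype.card (S2 × F2) : ℝ)⁻¹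
  let d : Φ → Ψ → T → (S1 × F1) × M1 → (S2 × F2) × M2 → Z → U1 × U2 := fun φ ψ t k1 k2 z =>
    binDec (h φ) (g ψ) (S (t, z)) k1 k2
  have A3 : ∀ φ ψ, ∑ ω, P ω *
        ind (binDec (h φ) (g ψ) (S (vT ω, vZ ω)) (h φ (vU1 ω)) (g ψ (vU2 ω)) ≠ (vU1 ω, vU2 ω)) =
      ∑ t, pT t * ∑ x : X1 × X2 × Z, q3 x * ∑ u1, ∑ u2, K1 x.1 t u1 * K2 x.2.1 t u2 *
        ind (d φ ψ t (h φ u1) (g ψ u2) x.2.2 ≠ (u1, u2)) := fun φ ψ => by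
    rw [hPdef]
    exact sum_fullLaw_12 hKY (fun t x u1 u2 => ind (d φ ψ t (h φ u1) (g ψ u2) x.2.2 ≠ (u1, u2)))
  set c := (Fintype.card F1 : ℝ)⁻¹ * (Fintype.card F2 : ℝ)⁻¹ with hc
  have key : ∀ t x y, ∀ F : U1 → U2 → ℝ,
      ∑ ω, P ω * ind ((vT ω, (vX1 ω, vX2 ω, vZ ω), vY ω) = (t, x, y)) * F (vU1 ω) (vU2 ω) =
      pT t * ∑ u1, ∑ u2, q3 x * (K1 x.1 t u1 * K2 x.2.1 t u2 * KY u1 u2 x.2.2 t y) * F u1 u2 := by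
    intro t x y F
    have h1 := sum_fullLaw_mul (q3 := q3) (pT := pT) (K1 := K1) (K2 := K2) (KY := KY)
      (fun t' x' u1 u2 y' => ind ((t', x', y') = (t, x, y)) * F u1 u2)
    simp_rw [← mul_assoc] at h1
    rw [hPdef, h1]
    have e : ∀ t' x' y', ind (((t', x', y') : T × (X1 × X2 × Z) × Y) = (t, x, y)) =
        ind (t' = t) * (ind (x' = x) * ind (y' = y)) := fun t' x' y' => by
      rw [ind_mul_ind, ind_mul_ind]; exact ind_congr (by simp [Prod.ext_iff])
    have e2 : ∀ t' x', ∑ u1, ∑ u2, ∑ y', K1 x'.1 t' u1 * K2 x'.2.1 t' u2 * KY u1 u2 x'.2.2 t' y' *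
        (ind (t' = t) * (ind (x' = x) * ind (y' = y))) * F u1 u2 =
        ind (t' = t) * (ind (x' = x) * ∑ u1, ∑ u2, K1 x'.1 t' u1 * K2 x'.2.1 t' u2 *
          KY u1 u2 x'.2.2 t' y * F u1 u2) := by
      intro t' x'
      simp_rw [mul_sum]
      refine sum_congr rfl fun u1 _ => sum_congr rfl fun u2 _ => ?_
      rw [← sum_ind_mul' y (fun y' => ind (t' = t) * (ind (x' = x) * (K1 x'.1 t' u1 *
        K2 x'.2.1 t' u2 * KY u1 u2 x'.2.2 t' y' * F u1 u2)))]
      exact sum_congr rfl fun y' _ => by ring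
    simp_rw [e, e2, mul_left_comm (q3 _) (ind (_ = t)), ← mul_sum, mul_left_comm (pT _) (ind _),
      sum_ind_mul', mul_left_comm (q3 _) (ind _), sum_ind_mul']
    congr 1
    simp_rw [mul_sum]
    exact sum_congr rfl fun _ _ => sum_congr rfl fun _ _ => by ring
  have key0 : ∀ t x y, pm P (fun ω => (vT ω, (vX1 ω, vX2 ω, vZ ω), vY ω)) (t, x, y) =
      pT t * q4 x y := fun t x y => by
    have := key t x y (fun _ _ => 1)
    simp_rw [mul_one, hcons] at this
    exact this
  have A4 : ∀ φ ψ, ∑ v : T × (X1 × X2 × Z) × Y, ∑ k, ∑ l,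
        |∑ ω, P ω * ind ((vT ω, (vX1 ω, vX2 ω, vZ ω), vY ω) = v) *
          (ind ((h φ (vU1 ω)).1.2 = k) * ind ((g ψ (vU2 ω)).1.2 = l)) -
          pm P (fun ω => (vT ω, (vX1 ω, vX2 ω, vZ ω), vY ω)) v * c| =
      ∑ t, pT t * ∑ x, ∑ y, ∑ f1, ∑ f2, |∑ u1, ∑ u2, q3 x * (K1 x.1 t u1 * K2 x.2.1 t u2 *
        KY u1 u2 x.2.2 t y) * (ind ((h φ u1).1.2 = f1) * ind ((g ψ u2).1.2 = f2)) -
        q4 x y * c| := by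
    intro φ ψ
    rw [Fintype.sum_prod_type]
    refine sum_congr rfl fun t _ => ?_
    rw [Fintype.sum_prod_type]
    simp_rw [mul_sum]
    refine sum_congr rfl fun x _ => sum_congr rfl fun y _ => sum_congr rfl fun f1 _ =>
      sum_congr rfl fun f2 _ => ?_
    rw [key t x y (fun u1 u2 => ind ((h φ u1).1.2 = f1) * ind ((g ψ u2).1.2 = f2)), key0,
      mul_assoc, ← mul_sub, abs_mul, abs_of_nonneg (hpT.1 t)]
  simp_rw [A1] at B1
  simp_rw [A2] at B2
  simp_rw [A3] at B3
  simp_rw [A4] at B4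
  -- the error of the code attached to one realisation of `T` and of the binnings
  let E1 : Φ → T → ℝ := fun φ t => ∑ x, q3 x * ∑ j, |binMass (fun x => K1 x t)
    (fun u => (h φ u).1) x.1 j - (Fintype.card (S1 × F1) : ℝ)⁻¹|
  let E2 : Ψ → T → ℝ := fun ψ t => ∑ x, q3 x * ∑ j, |binMass (fun x => K2 x t)
    (fun u => (g ψ u).1) x.2.1 j - (Fintype.card (S2 × F2) : ℝ)⁻¹|
  let E3 : Φ → Ψ → T → ℝ := fun φ ψ t => ∑ x, q3 x * ∑ u1, ∑ u2, K1 x.1 t u1 * K2 x.2.1 t u2 *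
        ind (d φ ψ t (h φ u1) (g ψ u2) x.2.2 ≠ (u1, u2))
  let E4 : Φ → Ψ → T → ℝ := fun φ ψ t => ∑ x, ∑ y, ∑ f1, ∑ f2, |∑ u1, ∑ u2,
    q3 x * (K1 x.1 t u1 * K2 x.2.1 t u2 *
        KY u1 u2 x.2.2 t y) * (ind ((h φ u1).1.2 = f1) * ind ((g ψ u2).1.2 = f2)) -
        q4 x y * c|
  set D1 := ∑ s, |π1 s - (Fintype.card S1 : ℝ)⁻¹|
  set D2 := ∑ s, |π2 s - (Fintype.card S2 : ℝ)⁻¹|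
  have havg : ∑ i : (Φ × Ψ) × T, μ i.1.1 * ν i.1.2 * pT i.2 *
      (E1 i.1.1 i.2 + E2 i.1.2 i.2 + 2 * E3 i.1.1 i.1.2 i.2 + E4 i.1.1 i.1.2 i.2 + D1 + D2) =
      (∑ φ, μ φ * ∑ t, pT t * E1 φ t) + (∑ ψ, ν ψ * ∑ t, pT t * E2 ψ t) +
      2 * (∑ x : Φ × Ψ, μ x.1 * ν x.2 * ∑ t, pT t * E3 x.1 x.2 t) +
      (∑ x : Φ × Ψ, μ x.1 * ν x.2 * ∑ t, pT t * E4 x.1 x.2 t) + D1 + D2 := by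
    have e1 : ∑ i : (Φ × Ψ) × T, μ i.1.1 * ν i.1.2 * pT i.2 * E1 i.1.1 i.2 =
        ∑ φ, μ φ * ∑ t, pT t * E1 φ t := by
      simp_rw [Fintype.sum_prod_type, mul_assoc, ← mul_sum, ← sum_mul, G.1.2, one_mul]
    have e2 : ∑ i : (Φ × Ψ) × T, μ i.1.1 * ν i.1.2 * pT i.2 * E2 i.1.2 i.2 =
        ∑ ψ, ν ψ * ∑ t, pT t * E2 ψ t := by
      simp_rw [Fintype.sum_prod_type, mul_assoc, ← mul_sum, ← sum_mul, H.1.2, one_mul]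
    have e3 : ∀ E : Φ → Ψ → T → ℝ, ∑ i : (Φ × Ψ) × T, μ i.1.1 * ν i.1.2 * pT i.2 *
        E i.1.1 i.1.2 i.2 = ∑ x : Φ × Ψ, μ x.1 * ν x.2 * ∑ t, pT t * E x.1 x.2 t := fun E => by
      rw [Fintype.sum_prod_type]
      simp_rw [mul_assoc, ← mul_sum]
    have e4 : ∑ i : (Φ × Ψ) × T, μ i.1.1 * ν i.1.2 * pT i.2 = 1 := ((H.1.prod G.1).prod hpT).2
    simp_rw [mul_add, sum_add_distrib, ← sum_mul, e4, one_mul, mul_left_comm _ (2 : ℝ), ← mul_sum]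
    rw [e1, e2, e3, e3]
  obtain ⟨⟨⟨φ, ψ⟩, t⟩, hbest⟩ := exists_le_of_avg ((H.1.prod G.1).prod hpT)
    (havg.le.trans (add_le_add (add_le_add (add_le_add (add_le_add (add_le_add B1 B2)
      (mul_le_mul_of_nonneg_left B3 zero_le_two)) B4) le_rfl) le_rfl))
  have hbd := binOut_bound q3 hq3 (fun x => K1 x t) (fun x => K2 x t) (fun x => hK1 x t)
    (fun x => hK2 x t) (fun u z => KY u.1 u.2 z t) (fun u z => hKY _ _ _ _) (h φ) (g ψ) (d φ ψ t)
    π1 π2 hπ2 q4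
  have hF1 : (Fintype.card F1 : ℝ) ≠ 0 := by exact_mod_cast Fintype.card_ne_zero
  have hF2 : (Fintype.card F2 : ℝ) ≠ 0 := by exact_mod_cast Fintype.card_ne_zero
  have hunif : IsPMF (fun _ : F1 × F2 => (Fintype.card F1 : ℝ)⁻¹ * (Fintype.card F2 : ℝ)⁻¹) := by
    refine ⟨fun _ => by positivity, ?_⟩
    simp; field_simp
  have hbd2 := hbd.trans hbest
  rw [← Fintype.sum_prod_type' (f := fun f1 f2 => (Fintype.card F1 : ℝ)⁻¹ *
    (Fintype.card F2 : ℝ)⁻¹ * ∑ x, ∑ y, |binOut q3 (fun x => K1 x t) (fun x => K2 x t)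
      (fun u z => KY u.1 u.2 z t) (h φ) (g ψ) (d φ ψ t) π1 π2 f1 f2 x y - q4 x y|)] at hbd2
  obtain ⟨⟨f1, f2⟩, hf⟩ := exists_le_of_avg hunif hbd2
  exact ⟨t, h φ, g ψ, d φ ψ t, f1, f2, hf⟩

/-! ### Entropy as an average, and its basic inequalities -/

/-- Entropy in bits of `f` under `P`, as the average of the self-information. -/
noncomputable def hh {Ω β : Type*} [Fintype Ω] (P : Ω → ℝ) (f : Ω → β) : ℝ :=
  -∑ ω, P ω * Real.logb 2 (pm P f (f ω))

lemma ent_eq_hh {Ω β : Type*} [Fintype Ω] [Fintype β] [DecidableEq β] (P : Ω → ℝ) (f : Ω → β) :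
    ent P f = hh P f := by
  have e : ∀ b, marg P f b = pm P f b := fun b => by
    unfold marg pm
    refine sum_congr rfl fun ω _ => ?_
    by_cases h : f ω = b
    · rw [if_pos h, ind_of h, mul_one]
    · rw [if_neg h, ind_not h, mul_zero]
  unfold ent entPMF hh
  simp_rw [e]
  rw [sum_pm_mul P f (fun b => Real.logb 2 (pm P f b))]

/-- Entropy depends only on the partition generated by the random variable. -/
lemma hh_congr {Ω β γ : Type*} [Fintype Ω] (P : Ω → ℝ) {f : Ω → β} {g : Ω → γ}
    (h : ∀ ω ω', f ω = f ω' ↔ g ω = g ω') : hh P f = hh P g := by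
  unfold hh
  congr 1
  refine sum_congr rfl fun ω _ => ?_
  rw [pm_congr P fun ω' => h ω' ω]

lemma pm_pos {Ω β : Type*} [Fintype Ω] {P : Ω → ℝ} (hP : ∀ ω, 0 ≤ P ω) (f : Ω → β) {ω : Ω}
    (h : 0 < P ω) : 0 < pm P f (f ω) := h.trans_le (le_pm hP f ω)

lemma hh_mono {Ω β γ : Type*} [Fintype Ω] {P : Ω → ℝ} (hP : ∀ ω, 0 ≤ P ω) (f : Ω → β)
    (g : Ω → γ) (h : ∀ ω ω', f ω = f ω' → g ω = g ω') : hh P g ≤ hh P f := by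
  unfold hh
  refine neg_le_neg (sum_le_sum fun ω _ => ?_)
  rcases (hP ω).eq_or_lt with hz | hpos
  · rw [← hz]; simp
  refine mul_le_mul_of_nonneg_left ?_ (hP ω)
  refine Real.logb_le_logb_of_le one_lt_two (pm_pos hP f hpos) ?_
  exact sum_le_sum fun ω' _ => mul_le_mul_of_nonneg_left (ind_mono (h ω' ω)) (hP ω')

/-- Non-negativity of conditional mutual information. -/
lemma hh_submodular {Ω α β γ : Type*} [Fintype Ω] [Fintype α] [Fintype β] [Fintype γ]
    {P : Ω → ℝ} (hP : IsPMF P) (f : Ω → α) (g : Ω → β) (h : Ω → γ) :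
    hh P (fun ω => (f ω, g ω, h ω)) + hh P h ≤
      hh P (fun ω => (f ω, h ω)) + hh P (fun ω => (g ω, h ω)) := by
  let A : α → γ → ℝ := fun a c => pm P (fun ω => (f ω, h ω)) (a, c)
  let B : β → γ → ℝ := fun b c => pm P (fun ω => (g ω, h ω)) (b, c)
  let C : γ → ℝ := pm P h
  let D : α × β × γ → ℝ := pm P (fun ω => (f ω, g ω, h ω))
  have hA0 : ∀ a c, 0 ≤ A a c := fun _ _ => pm_nonneg hP.1 _ _
  have hB0 : ∀ a c, 0 ≤ B a c := fun _ _ => pm_nonneg hP.1 _ _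
  have hC0 : ∀ c, 0 ≤ C c := fun _ => pm_nonneg hP.1 _ _
  have hD0 : ∀ c, 0 ≤ D c := fun _ => pm_nonneg hP.1 _ _
  have hAs : ∀ c, ∑ a, A a c = C c := fun c => by
    refine Eq.trans ?_ (sum_pm_right P h f c)
    exact sum_congr rfl fun a _ => pm_congr P fun ω => by simp [and_comm]
  have hBs : ∀ c, ∑ b, B b c = C c := fun c => by
    refine Eq.trans ?_ (sum_pm_right P h g c)
    exact sum_congr rfl fun a _ => pm_congr P fun ω => by simp [and_comm]
  have hCs : ∑ c, C c = 1 := by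
    have := sum_pm_mul P h (fun _ => 1)
    simpa [hP.2] using this
  let X : α × β × γ → ℝ := fun v => A v.1 v.2.2 * B v.2.1 v.2.2 / (D v * C v.2.2)
  have hX : ∑ ω, P ω * X (f ω, g ω, h ω) ≤ 1 := by
    rw [← sum_pm_mul P (fun ω => (f ω, g ω, h ω)) X]
    calc ∑ v, D v * X v ≤ ∑ v : α × β × γ, A v.1 v.2.2 * B v.2.1 v.2.2 / C v.2.2 := by
          refine sum_le_sum fun v _ => ?_
          rcases (hD0 v).eq_or_lt with hz | hpos
          · rw [← hz, zero_mul]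
            exact div_nonneg (mul_nonneg (hA0 _ _) (hB0 _ _)) (hC0 _)
          · refine le_of_eq ?_
            simp only [X]
            rw [← mul_div_assoc, mul_div_mul_left _ _ hpos.ne']
      _ = ∑ c, C c * C c / C c := by
          simp_rw [Fintype.sum_prod_type]
          rw [sum_congr rfl fun a _ => sum_comm, sum_comm]
          refine sum_congr rfl fun c _ => ?_
          simp_rw [← sum_div, ← mul_sum, ← sum_mul, hAs, hBs]
      _ = 1 := by
          rw [← hCs]
          exact sum_congr rfl fun c _ => by rw [mul_self_div_self]
  have hlog : 0 ≤ Real.log 2 := Real.log_nonneg one_le_two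
  have key : hh P (fun ω => (f ω, g ω, h ω)) + hh P h -
      hh P (fun ω => (f ω, h ω)) - hh P (fun ω => (g ω, h ω)) ≤
      (∑ ω, P ω * (X (f ω, g ω, h ω) - 1)) / Real.log 2 := by
    unfold hh
    rw [sum_div, sub_neg_eq_add, sub_neg_eq_add, ← neg_add, ← sum_add_distrib,
      ← sum_neg_distrib, ← sum_add_distrib, ← sum_add_distrib]
    refine sum_le_sum fun ω _ => ?_
    rcases (hP.1 ω).eq_or_lt with hz | hpos
    · rw [← hz]; simp
    have a0 : 0 < A (f ω) (h ω) := pm_pos hP.1 (fun ω => (f ω, h ω)) hpos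
    have b0 : 0 < B (g ω) (h ω) := pm_pos hP.1 (fun ω => (g ω, h ω)) hpos
    have c0 : 0 < C (h ω) := pm_pos hP.1 h hpos
    have d0 : 0 < D (f ω, g ω, h ω) := pm_pos hP.1 (fun ω => (f ω, g ω, h ω)) hpos
    have hx0 : 0 < X (f ω, g ω, h ω) := by simp only [X]; positivity
    have hle := Real.log_le_sub_one_of_pos hx0
    have hxe : Real.log (X (f ω, g ω, h ω)) = Real.log (A (f ω) (h ω)) +
        Real.log (B (g ω) (h ω)) - Real.log (D (f ω, g ω, h ω)) - Real.log (C (h ω)) := by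
      simp only [X]
      rw [Real.log_div (by positivity) (by positivity), Real.log_mul a0.ne' b0.ne',
        Real.log_mul d0.ne' c0.ne']
      ring
    calc _ = P ω * Real.log (X (f ω, g ω, h ω)) / Real.log 2 := by
          rw [hxe]; simp only [Real.logb, A, B, C, D]; ring
      _ ≤ _ := by
          exact div_le_div_of_nonneg_right (mul_le_mul_of_nonneg_left hle hpos.le) hlog
  have h2 : (∑ ω, P ω * (X (f ω, g ω, h ω) - 1)) / Real.log 2 ≤ 0 := by
    refine div_nonpos_of_nonpos_of_nonneg ?_ hlog
    simp_rw [mul_sub, mul_one, sum_sub_distrib, hP.2]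
    linarith
  linarith

/-! ### Exponential concentration of the information densities -/

/-- Chernoff bound: the upper tail of an i.i.d. average decays exponentially. -/
lemma chernoff {Ω : Type*} [Fintype Ω] {P : Ω → ℝ} (hP : IsPMF P) (g : Ω → ℝ) {δ : ℝ}
    (hδ : 0 < δ) : ∃ θ : ℝ, 0 ≤ θ ∧ θ < 1 ∧ ∀ n : ℕ, ∑ ω : Fin n → Ω, (∏ i, P (ω i)) *
      ind ((n : ℝ) * ((∑ a, P a * g a) + δ) < ∑ i, g (ω i)) ≤ θ ^ n := by
  set m := ∑ a, P a * g a with hm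
  let v : Ω → ℝ := fun a => g a - m - δ
  set M : ℝ := (∑ a, |v a|) + 1 + δ with hM
  have hsum0 : 0 ≤ ∑ a, |v a| := sum_nonneg fun _ _ => abs_nonneg _
  have hM0 : 0 < M := by positivity
  have hvM : ∀ a, |v a| ≤ M := fun a => by
    have := single_le_sum (f := fun a => |v a|) (fun i _ => abs_nonneg _) (mem_univ a)
    linarith
  set s : ℝ := δ / (2 * M ^ 2) with hs
  have hs0 : 0 < s := by positivity
  have hsM : s * M ≤ 1 := by
    rw [hs, div_mul_eq_mul_div, div_le_one (by positivity)]
    nlinarith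
  have hexp : ∀ a, Real.exp (s * v a) ≤ 1 + s * v a + s * δ / 2 := by
    intro a
    have h1 : |s * v a| ≤ 1 := by
      rw [abs_mul, abs_of_pos hs0]
      exact (mul_le_mul_of_nonneg_left (hvM a) hs0.le).trans hsM
    have h2 := (abs_le.1 (Real.abs_exp_sub_one_sub_id_le h1)).2
    have h3 : (s * v a) ^ 2 ≤ s * δ / 2 := by
      have : v a ^ 2 ≤ M ^ 2 := sq_le_sq' (abs_le.1 (hvM a)).1 (abs_le.1 (hvM a)).2
      calc (s * v a) ^ 2 = s * (s * v a ^ 2) := by ring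
        _ ≤ s * (s * M ^ 2) := by gcongr
        _ = s * δ / 2 := by rw [hs]; field_simp
    linarith
  refine ⟨∑ a, P a * Real.exp (s * v a), sum_nonneg fun a _ =>
    mul_nonneg (hP.1 a) (Real.exp_pos _).le, ?_, fun n => ?_⟩
  · calc ∑ a, P a * Real.exp (s * v a) ≤ ∑ a, P a * (1 + s * v a + s * δ / 2) :=
          sum_le_sum fun a _ => mul_le_mul_of_nonneg_left (hexp a) (hP.1 a)
      _ = ∑ a, ((1 - s * m - s * δ / 2) * P a + s * (P a * g a)) :=
          sum_congr rfl fun a _ => by simp only [v]; ring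
      _ = 1 - s * δ / 2 := by
          rw [sum_add_distrib, ← mul_sum, ← mul_sum, hP.2, ← hm]; ring
      _ < 1 := by have : 0 < s * δ / 2 := by positivity
                  linarith
  · calc _ ≤ ∑ ω : Fin n → Ω, ∏ i, (P (ω i) * Real.exp (s * v (ω i))) := by
          refine sum_le_sum fun ω _ => ?_
          rw [prod_mul_distrib]
          refine mul_le_mul_of_nonneg_left ?_ (prod_nonneg fun i _ => hP.1 _)
          rw [← Real.exp_sum]
          by_cases hh : (n : ℝ) * (m + δ) < ∑ i, g (ω i)
          · rw [ind_of hh]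
            refine Real.one_le_exp ?_
            rw [← mul_sum]
            refine mul_nonneg hs0.le ?_
            simp only [v, sum_sub_distrib, sum_const, card_univ, Fintype.card_fin, nsmul_eq_mul]
            linarith
          · rw [ind_not hh]; exact (Real.exp_pos _).le
      _ = _ := by
          rw [← Fintype.prod_sum (fun (_ : Fin n) a => P a * Real.exp (s * v a)), prod_const,
            card_univ, Fintype.card_fin]

/-- Marginal probabilities of an i.i.d. law are products. -/
lemma pm_iid {Ω Ω' β β' : Type*} [Fintype Ω] [Fintype Ω'] {n : ℕ} (e : Ω' ≃ (Fin n → Ω))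
    {P : Ω → ℝ} {P' : Ω' → ℝ} (hP' : ∀ ω, P' ω = ∏ i, P (e ω i)) {f : Ω → β} {f' : Ω' → β'}
    (hf : ∀ ω ω', f' ω = f' ω' ↔ ∀ i, f (e ω i) = f (e ω' i)) (ω : Ω') :
    pm P' f' (f' ω) = ∏ i, pm P f (f (e ω i)) := by
  unfold pm
  rw [Fintype.prod_sum, ← Equiv.sum_comp e]
  refine sum_congr rfl fun ω' _ => ?_
  rw [hP', prod_mul_distrib, prod_ind, ind_congr (hf ω' ω)]

/-- The probability that the conditional probability of `f` given `g` in an i.i.d. block exceeds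
its typical value by a factor `2 ^ (n δ)` decays exponentially. -/
lemma upTail_iid {Ω β γ : Type*} [Fintype Ω] {P : Ω → ℝ} (hP : IsPMF P) (f : Ω → β) (g : Ω → γ)
    {h δ : ℝ} (hδ : 0 < δ) (hh' : h = hh P f - hh P g) :
    ∃ θ : ℝ, 0 ≤ θ ∧ θ < 1 ∧ ∀ (n : ℕ) (Ω' β' γ' : Type) [Fintype Ω'] (e : Ω' ≃ (Fin n → Ω))
      (P' : Ω' → ℝ) (f' : Ω' → β') (g' : Ω' → γ'), (∀ ω, P' ω = ∏ i, P (e ω i)) →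
      (∀ ω ω', f' ω = f' ω' ↔ ∀ i, f (e ω i) = f (e ω' i)) →
      (∀ ω ω', g' ω = g' ω' ↔ ∀ i, g (e ω i) = g (e ω' i)) →
      upTail P' f' g' ((2 : ℝ) ^ (-((n : ℝ) * (h - δ)))) ≤ θ ^ n := by
  let G : Ω → ℝ := fun ω => Real.logb 2 (pm P f (f ω)) - Real.logb 2 (pm P g (g ω))
  obtain ⟨θ, h0, h1, hθ⟩ := chernoff hP G hδ
  refine ⟨θ, h0, h1, fun n Ω' β' γ' _ e P' f' g' hP' hf hg => le_trans ?_ (hθ n)⟩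
  have hmean : ∑ a, P a * G a = -h := by
    rw [hh']; unfold hh; simp only [G, mul_sub, sum_sub_distrib]; ring
  rw [hmean]
  unfold upTail
  rw [← Equiv.sum_comp e (fun ω : Fin n → Ω => (∏ i, P (ω i)) *
    ind ((n : ℝ) * (-h + δ) < ∑ i, G (ω i)))]
  refine sum_le_sum fun ω _ => ?_
  rw [← hP' ω]
  have hnn : 0 ≤ P' ω := by rw [hP']; exact prod_nonneg fun i _ => hP.1 _
  rcases hnn.eq_or_lt with hz | hpos
  · rw [← hz, zero_mul, zero_mul]
  refine mul_le_mul_of_nonneg_left (ind_mono fun hlt => ?_) hnn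
  rw [not_le, pm_iid e hP' hf, pm_iid e hP' hg] at hlt
  have hpi : ∀ i, 0 < P (e ω i) := fun i => by
    refine lt_of_le_of_ne (hP.1 _) fun hz => ?_
    rw [hP', prod_eq_zero (mem_univ i) hz.symm] at hpos
    exact lt_irrefl _ hpos
  have a0 : ∀ i, 0 < pm P f (f (e ω i)) := fun i => pm_pos hP.1 f (hpi i)
  have b0 : ∀ i, 0 < pm P g (g (e ω i)) := fun i => pm_pos hP.1 g (hpi i)
  have hb0 : 0 < ∏ i, pm P g (g (e ω i)) := prod_pos fun i _ => b0 i
  have h2 : (0 : ℝ) < 2 ^ (-((n : ℝ) * (h - δ))) := Real.rpow_pos_of_pos two_pos _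
  have := Real.logb_lt_logb one_lt_two (mul_pos h2 hb0) hlt
  rw [Real.logb_mul h2.ne' hb0.ne', Real.logb_rpow two_pos (by norm_num),
    Real.logb_prod _ _ fun i _ => (b0 i).ne', Real.logb_prod _ _ fun i _ => (a0 i).ne'] at this
  simp only [G, sum_sub_distrib]
  linarith

lemma loTail_eq_upTail {Ω β γ : Type*} [Fintype Ω] (P : Ω → ℝ) (f : Ω → β) (g : Ω → γ) {κ : ℝ}
    (hκ : 0 < κ) : loTail P f g κ = upTail P g f κ⁻¹ := by
  unfold loTail upTail
  refine sum_congr rfl fun ω _ => ?_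
  congr 1
  refine ind_congr (not_congr ?_)
  rw [inv_mul_eq_div, le_div_iff₀ hκ, mul_comm]

lemma loTail_iid {Ω β γ : Type*} [Fintype Ω] {P : Ω → ℝ} (hP : IsPMF P) (f : Ω → β) (g : Ω → γ)
    {h δ : ℝ} (hδ : 0 < δ) (hh' : h = hh P f - hh P g) :
    ∃ θ : ℝ, 0 ≤ θ ∧ θ < 1 ∧ ∀ (n : ℕ) (Ω' β' γ' : Type) [Fintype Ω'] (e : Ω' ≃ (Fin n → Ω))
      (P' : Ω' → ℝ) (f' : Ω' → β') (g' : Ω' → γ'), (∀ ω, P' ω = ∏ i, P (e ω i)) →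
      (∀ ω ω', f' ω = f' ω' ↔ ∀ i, f (e ω i) = f (e ω' i)) →
      (∀ ω ω', g' ω = g' ω' ↔ ∀ i, g (e ω i) = g (e ω' i)) →
      loTail P' f' g' ((2 : ℝ) ^ (-((n : ℝ) * (h + δ)))) ≤ θ ^ n := by
  obtain ⟨θ, h0, h1, hθ⟩ := upTail_iid hP g f (h := -h) hδ (by rw [hh']; ring)
  refine ⟨θ, h0, h1, fun n Ω' β' γ' _ e P' f' g' hP' hf hg => le_trans (le_of_eq ?_)
    (hθ n Ω' γ' β' e P' g' f' hP' hg hf)⟩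
  rw [loTail_eq_upTail _ _ _ (Real.rpow_pos_of_pos two_pos _), ← Real.rpow_neg zero_le_two]
  congr 2
  ring

/-! ### From the rate conditions to bin rates -/

/-- Submodularity of entropy for random variables described by the partitions they generate. -/
lemma hh_submodular_of {Ω α β γ ζ : Type*} [Fintype Ω] [Fintype α] [Fintype β] [Fintype γ]
    {P : Ω → ℝ} (hP : IsPMF P) (A : Ω → ζ) (B : Ω → γ) (C : Ω → α) (D : Ω → β)
    (hA : ∀ ω ω', A ω = A ω' ↔ C ω = C ω' ∧ D ω = D ω')
    (hC : ∀ ω ω', C ω = C ω' → B ω = B ω') (hD : ∀ ω ω', D ω = D ω' → B ω = B ω') :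
    hh P A + hh P B ≤ hh P C + hh P D := by
  have h := hh_submodular hP C D B
  rw [hh_congr P (f := fun ω => (C ω, D ω, B ω)) (g := A) (fun ω ω' => ?_),
    hh_congr P (f := fun ω => (C ω, B ω)) (g := C) (fun ω ω' => ?_),
    hh_congr P (f := fun ω => (D ω, B ω)) (g := D) (fun ω ω' => ?_)] at h
  · exact h
  · rw [Prod.mk.injEq]; exact ⟨fun h => h.1, fun h => ⟨h, hD _ _ h⟩⟩
  · rw [Prod.mk.injEq]; exact ⟨fun h => h.1, fun h => ⟨h, hC _ _ h⟩⟩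
  · rw [hA, Prod.mk.injEq, Prod.mk.injEq]
    exact ⟨fun h => ⟨h.1, h.2.1⟩, fun h => ⟨h.1, h.2, hC _ _ h.1⟩⟩

/-- Inequalities between conditional entropies from which bin rates can be chosen: `a` are the
entropies of `U₁`, `U₂`, `(U₁, U₂)` given `(X₁, X₂, Z, Y, T)`, `b` those given the own source and
`T`, and `c` those given `(Z, T)` and the other auxiliary variable. -/
structure RateFacts (a1 a2 a12 b1 b2 c1 c2 c12 R1 R2 R01 R02 : ℝ) : Prop where
  i1 : c1 - b1 ≤ R1
  i2 : c2 - b2 ≤ R2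
  i3 : c12 - b1 - b2 ≤ R1 + R2
  i4 : c1 - a1 ≤ R1 + R01
  i5 : c2 - a2 ≤ R2 + R02
  i6 : c12 - a1 - b2 ≤ R1 + R2 + R01
  i7 : c12 - a2 - b1 ≤ R1 + R2 + R02
  i8 : c12 - a12 ≤ R1 + R2 + R01 + R02
  a1_nonneg : 0 ≤ a1
  a2_nonneg : 0 ≤ a2
  a1_le : a1 ≤ b1
  a2_le : a2 ≤ b2
  a1_le' : a1 ≤ a12
  a2_le' : a2 ≤ a12
  a12_le : a12 ≤ a1 + a2
  c_le : c1 + c2 ≤ c12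

lemma rateFacts
    {X1 X2 Z Y T U1 U2 : Type}
    [Fintype X1] [Fintype X2] [Fintype Z] [Fintype Y]
    [Fintype T] [Fintype U1] [Fintype U2]
    [DecidableEq X1] [DecidableEq X2] [DecidableEq Z] [DecidableEq Y]
    [DecidableEq T] [DecidableEq U1] [DecidableEq U2]
    (p : X1 × X2 × Z × T × U1 × U2 × Y → ℝ) (hp : IsPMF p)
    (R1 R2 R01 R02 : ℝ)
    (h1 : cmi p vU1 vX1 (fun ω => (vU2 ω, vZ ω, vT ω)) ≤ R1)
    (h2 : cmi p vU2 vX2 (fun ω => (vU1 ω, vZ ω, vT ω)) ≤ R2)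
    (h3 : cmi p (fun ω => (vU1 ω, vU2 ω)) (fun ω => (vX1 ω, vX2 ω))
        (fun ω => (vZ ω, vT ω)) ≤ R1 + R2)
    (h4 : cmi p vU1 (fun ω => (vX1 ω, vX2 ω, vY ω)) (fun ω => (vZ ω, vT ω))
        - cmi p vU1 vU2 (fun ω => (vZ ω, vT ω)) ≤ R1 + R01)
    (h5 : cmi p vU2 (fun ω => (vX1 ω, vX2 ω, vY ω)) (fun ω => (vZ ω, vT ω))
        - cmi p vU1 vU2 (fun ω => (vZ ω, vT ω)) ≤ R2 + R02)
    (h6 : cmi p vU1 (fun ω => (vX1 ω, vX2 ω, vY ω)) (fun ω => (vZ ω, vT ω))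
        + cmi p vU2 vX2 (fun ω => (vU1 ω, vZ ω, vT ω)) ≤ R1 + R2 + R01)
    (h7 : cmi p vU2 (fun ω => (vX1 ω, vX2 ω, vY ω)) (fun ω => (vZ ω, vT ω))
        + cmi p vU1 vX1 (fun ω => (vU2 ω, vZ ω, vT ω)) ≤ R1 + R2 + R02)
    (h8 : cmi p (fun ω => (vU1 ω, vU2 ω)) (fun ω => (vX1 ω, vX2 ω, vY ω))
        (fun ω => (vZ ω, vT ω)) ≤ R1 + R2 + R01 + R02) :
    RateFacts
      (hh p (fun ω => ((vT ω, (vX1 ω, vX2 ω, vZ ω), vY ω), vU1 ω)) -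
        hh p (fun ω => (vT ω, (vX1 ω, vX2 ω, vZ ω), vY ω)))
      (hh p (fun ω => ((vT ω, (vX1 ω, vX2 ω, vZ ω), vY ω), vU2 ω)) -
        hh p (fun ω => (vT ω, (vX1 ω, vX2 ω, vZ ω), vY ω)))
      (hh p (fun ω => ((vT ω, (vX1 ω, vX2 ω, vZ ω), vY ω), vU1 ω, vU2 ω)) -
        hh p (fun ω => (vT ω, (vX1 ω, vX2 ω, vZ ω), vY ω)))
      (hh p (fun ω => ((vT ω, vX1 ω), vU1 ω)) - hh p (fun ω => (vT ω, vX1 ω)))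
      (hh p (fun ω => ((vT ω, vX2 ω), vU2 ω)) - hh p (fun ω => (vT ω, vX2 ω)))
      (hh p (fun ω => ((vT ω, vZ ω), vU1 ω, vU2 ω)) - hh p (fun ω => ((vT ω, vZ ω), vU2 ω)))
      (hh p (fun ω => ((vT ω, vZ ω), vU1 ω, vU2 ω)) - hh p (fun ω => ((vT ω, vZ ω), vU1 ω)))
      (hh p (fun ω => ((vT ω, vZ ω), vU1 ω, vU2 ω)) - hh p (fun ω => (vT ω, vZ ω)))
      R1 R2 R01 R02 := by
  simp only [cmi, ent_eq_hh] at h1 h2 h3 h4 h5 h6 h7 h8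
  -- bring every entropy to a fixed ordering of its variables
  have k1 : hh p (fun ω => (vU1 ω, vU2 ω, vZ ω, vT ω)) =
      hh p (fun ω => ((vT ω, vZ ω), vU1 ω, vU2 ω)) :=
    hh_congr p fun ω ω' => by simp only [Prod.mk.injEq]; tauto
  have k2 : hh p (fun ω => (vU2 ω, vU1 ω, vZ ω, vT ω)) =
      hh p (fun ω => ((vT ω, vZ ω), vU1 ω, vU2 ω)) :=
    hh_congr p fun ω ω' => by simp only [Prod.mk.injEq]; tauto
  have k3 : hh p (fun ω => (vU2 ω, vZ ω, vT ω)) = hh p (fun ω => ((vT ω, vZ ω), vU2 ω)) :=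
    hh_congr p fun ω ω' => by simp only [Prod.mk.injEq]; tauto
  have k4 : hh p (fun ω => (vU1 ω, vZ ω, vT ω)) = hh p (fun ω => ((vT ω, vZ ω), vU1 ω)) :=
    hh_congr p fun ω ω' => by simp only [Prod.mk.injEq]; tauto
  have k5 : hh p (fun ω => (vZ ω, vT ω)) = hh p (fun ω => (vT ω, vZ ω)) :=
    hh_congr p fun ω ω' => by simp only [Prod.mk.injEq]; tauto
  have k6 : hh p (fun ω => ((vU1 ω, vU2 ω), vZ ω, vT ω)) =
      hh p (fun ω => ((vT ω, vZ ω), vU1 ω, vU2 ω)) :=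
    hh_congr p fun ω ω' => by simp only [Prod.mk.injEq]; tauto
  have k7 : hh p (fun ω => ((vX1 ω, vX2 ω, vY ω), vZ ω, vT ω)) =
      hh p (fun ω => (vT ω, (vX1 ω, vX2 ω, vZ ω), vY ω)) :=
    hh_congr p fun ω ω' => by simp only [Prod.mk.injEq]; tauto
  have k8 : hh p (fun ω => (vU1 ω, (vX1 ω, vX2 ω, vY ω), vZ ω, vT ω)) =
      hh p (fun ω => ((vT ω, (vX1 ω, vX2 ω, vZ ω), vY ω), vU1 ω)) :=
    hh_congr p fun ω ω' => by simp only [Prod.mk.injEq]; tauto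
  have k9 : hh p (fun ω => (vU2 ω, (vX1 ω, vX2 ω, vY ω), vZ ω, vT ω)) =
      hh p (fun ω => ((vT ω, (vX1 ω, vX2 ω, vZ ω), vY ω), vU2 ω)) :=
    hh_congr p fun ω ω' => by simp only [Prod.mk.injEq]; tauto
  have k10 : hh p (fun ω => ((vU1 ω, vU2 ω), (vX1 ω, vX2 ω, vY ω), vZ ω, vT ω)) =
      hh p (fun ω => ((vT ω, (vX1 ω, vX2 ω, vZ ω), vY ω), vU1 ω, vU2 ω)) :=
    hh_congr p fun ω ω' => by simp only [Prod.mk.injEq]; tauto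
  rw [k1, k3] at h1
  rw [k2, k4] at h2
  rw [k6, k5] at h3
  rw [k1, k3, k4, k5, k7, k8] at h4
  rw [k1, k3, k4, k5, k7, k9] at h5
  rw [k2, k4, k5, k7, k8] at h6
  rw [k1, k3, k5, k7, k9] at h7
  rw [k6, k5, k7, k10] at h8
  -- conditioning on more variables than the own source and `T` reduces entropy
  have s1 := hh_submodular_of hp (fun ω => (vU1 ω, vX1 ω, vU2 ω, vZ ω, vT ω))
    (fun ω => (vT ω, vX1 ω)) (fun ω => ((vT ω, vX1 ω), vU1 ω))
    (fun ω => (vX1 ω, vU2 ω, vZ ω, vT ω)) (fun ω ω' => by simp only [Prod.mk.injEq]; tauto)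
    (fun ω ω' => by simp only [Prod.mk.injEq]; tauto)
    (fun ω ω' => by simp only [Prod.mk.injEq]; tauto)
  have s2 := hh_submodular_of hp (fun ω => (vU2 ω, vX2 ω, vU1 ω, vZ ω, vT ω))
    (fun ω => (vT ω, vX2 ω)) (fun ω => ((vT ω, vX2 ω), vU2 ω))
    (fun ω => (vX2 ω, vU1 ω, vZ ω, vT ω)) (fun ω ω' => by simp only [Prod.mk.injEq]; tauto)
    (fun ω ω' => by simp only [Prod.mk.injEq]; tauto)
    (fun ω ω' => by simp only [Prod.mk.injEq]; tauto)
  have s3 := hh_submodular_of hp (fun ω => ((vU1 ω, vU2 ω), (vX1 ω, vX2 ω), vZ ω, vT ω))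
    (fun ω => ((vX1 ω, vX2 ω), vZ ω, vT ω)) (fun ω => (vU1 ω, (vX1 ω, vX2 ω), vZ ω, vT ω))
    (fun ω => (vU2 ω, (vX1 ω, vX2 ω), vZ ω, vT ω)) (fun ω ω' => by simp only [Prod.mk.injEq]; tauto)
    (fun ω ω' => by simp only [Prod.mk.injEq]; tauto)
    (fun ω ω' => by simp only [Prod.mk.injEq]; tauto)
  have s4 := hh_submodular_of hp (fun ω => (vU1 ω, (vX1 ω, vX2 ω), vZ ω, vT ω))
    (fun ω => (vT ω, vX1 ω)) (fun ω => ((vT ω, vX1 ω), vU1 ω))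
    (fun ω => ((vX1 ω, vX2 ω), vZ ω, vT ω)) (fun ω ω' => by simp only [Prod.mk.injEq]; tauto)
    (fun ω ω' => by simp only [Prod.mk.injEq]; tauto)
    (fun ω ω' => by simp only [Prod.mk.injEq]; tauto)
  have s5 := hh_submodular_of hp (fun ω => (vU2 ω, (vX1 ω, vX2 ω), vZ ω, vT ω))
    (fun ω => (vT ω, vX2 ω)) (fun ω => ((vT ω, vX2 ω), vU2 ω))
    (fun ω => ((vX1 ω, vX2 ω), vZ ω, vT ω)) (fun ω ω' => by simp only [Prod.mk.injEq]; tauto)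
    (fun ω ω' => by simp only [Prod.mk.injEq]; tauto)
    (fun ω ω' => by simp only [Prod.mk.injEq]; tauto)
  have s6 := hh_submodular_of hp (fun ω => ((vT ω, (vX1 ω, vX2 ω, vZ ω), vY ω), vU1 ω))
    (fun ω => (vT ω, vX1 ω)) (fun ω => ((vT ω, vX1 ω), vU1 ω))
    (fun ω => (vT ω, (vX1 ω, vX2 ω, vZ ω), vY ω)) (fun ω ω' => by simp only [Prod.mk.injEq]; tauto)
    (fun ω ω' => by simp only [Prod.mk.injEq]; tauto)
    (fun ω ω' => by simp only [Prod.mk.injEq]; tauto)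
  have s7 := hh_submodular_of hp (fun ω => ((vT ω, (vX1 ω, vX2 ω, vZ ω), vY ω), vU2 ω))
    (fun ω => (vT ω, vX2 ω)) (fun ω => ((vT ω, vX2 ω), vU2 ω))
    (fun ω => (vT ω, (vX1 ω, vX2 ω, vZ ω), vY ω)) (fun ω ω' => by simp only [Prod.mk.injEq]; tauto)
    (fun ω ω' => by simp only [Prod.mk.injEq]; tauto)
    (fun ω ω' => by simp only [Prod.mk.injEq]; tauto)
  have s8 := hh_submodular_of hp (fun ω => ((vT ω, (vX1 ω, vX2 ω, vZ ω), vY ω), vU1 ω, vU2 ω))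
    (fun ω => (vT ω, (vX1 ω, vX2 ω, vZ ω), vY ω))
    (fun ω => ((vT ω, (vX1 ω, vX2 ω, vZ ω), vY ω), vU1 ω))
    (fun ω => ((vT ω, (vX1 ω, vX2 ω, vZ ω), vY ω), vU2 ω))
    (fun ω ω' => by simp only [Prod.mk.injEq]; tauto)
    (fun ω ω' => by simp only [Prod.mk.injEq]; tauto)
    (fun ω ω' => by simp only [Prod.mk.injEq]; tauto)
  have s9 := hh_submodular_of hp (fun ω => ((vT ω, vZ ω), vU1 ω, vU2 ω))
    (fun ω => (vT ω, vZ ω)) (fun ω => ((vT ω, vZ ω), vU1 ω)) (fun ω => ((vT ω, vZ ω), vU2 ω))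
    (fun ω ω' => by simp only [Prod.mk.injEq]; tauto)
    (fun ω ω' => by simp only [Prod.mk.injEq]; tauto)
    (fun ω ω' => by simp only [Prod.mk.injEq]; tauto)
  have m1 := hh_mono hp.1 (fun ω => ((vT ω, (vX1 ω, vX2 ω, vZ ω), vY ω), vU1 ω))
    (fun ω => (vT ω, (vX1 ω, vX2 ω, vZ ω), vY ω)) (fun ω ω' => by simp only [Prod.mk.injEq]; tauto)
  have m2 := hh_mono hp.1 (fun ω => ((vT ω, (vX1 ω, vX2 ω, vZ ω), vY ω), vU2 ω))
    (fun ω => (vT ω, (vX1 ω, vX2 ω, vZ ω), vY ω)) (fun ω ω' => by simp only [Prod.mk.injEq]; tauto)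
  have m3 := hh_mono hp.1 (fun ω => ((vT ω, (vX1 ω, vX2 ω, vZ ω), vY ω), vU1 ω, vU2 ω))
    (fun ω => ((vT ω, (vX1 ω, vX2 ω, vZ ω), vY ω), vU1 ω))
    (fun ω ω' => by simp only [Prod.mk.injEq]; tauto)
  have m4 := hh_mono hp.1 (fun ω => ((vT ω, (vX1 ω, vX2 ω, vZ ω), vY ω), vU1 ω, vU2 ω))
    (fun ω => ((vT ω, (vX1 ω, vX2 ω, vZ ω), vY ω), vU2 ω))
    (fun ω ω' => by simp only [Prod.mk.injEq]; tauto)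
  constructor <;> linarith

/-- Fourier–Motzkin step: if the rate conditions hold with room to spare, part of the shared
randomness (rates `r1, r2`) and extra bins (rates `f1, f2`) can be chosen so that the bins are
fine enough to decode, and coarse enough to be independent of what they must be independent of. -/
lemma RateFacts.exists_bins {a1 a2 a12 b1 b2 c1 c2 c12 R1 R2 R01 R02 ε : ℝ}
    (h : RateFacts a1 a2 a12 b1 b2 c1 c2 c12 R1 R2 R01 R02) (hε : 0 < ε) :
    ∃ δ r1 r2 f1 f2 : ℝ, 0 < δ ∧ r1 ≤ R01 + ε ∧ r2 ≤ R02 + ε ∧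
      r1 ≤ b1 - 2 * δ ∧ r2 ≤ b2 - 2 * δ ∧ f1 ≤ a1 - 2 * δ ∧ f2 ≤ a2 - 2 * δ ∧
      r1 + f1 ≤ b1 - 2 * δ ∧ r2 + f2 ≤ b2 - 2 * δ ∧ f1 + f2 ≤ a12 - 2 * δ ∧
      c1 + 2 * δ ≤ r1 + f1 + (R1 + ε) ∧ c2 + 2 * δ ≤ r2 + f2 + (R2 + ε) ∧
      c12 + 2 * δ ≤ r1 + f1 + (R1 + ε) + (r2 + f2 + (R2 + ε)) := by
  obtain ⟨i1, i2, i3, i4, i5, i6, i7, i8, j1, j2, j3, j4, j5, j6, j7, j8⟩ := h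
  -- any fixed large multiple of `δ` in `ε` leaves enough slack for the eliminations below
  obtain ⟨δ, hδ⟩ : ∃ δ, ε = 100 * δ := ⟨ε / 100, by ring⟩
  have hδ0 : 0 < δ := by linarith
  -- all rates are taken as large as their upper bounds allow, `f1` leaving room for `f2`
  set r1 := min (R01 + ε) (b1 - 2 * δ) with hr1
  set r2 := min (R02 + ε) (b2 - 2 * δ) with hr2
  set B1 := min (a1 - 2 * δ) (b1 - 2 * δ - r1) with hB1
  set B2 := min (a2 - 2 * δ) (b2 - 2 * δ - r2) with hB2
  set f1 := min B1 (a12 - 2 * δ - (c2 + 2 * δ - (R2 + ε) - r2)) with hf1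
  set f2 := min B2 (a12 - 2 * δ - f1) with hf2
  have hr1a : r1 ≤ R01 + ε := min_le_left _ _
  have hr1b : r1 ≤ b1 - 2 * δ := min_le_right _ _
  have hr2a : r2 ≤ R02 + ε := min_le_left _ _
  have hr2b : r2 ≤ b2 - 2 * δ := min_le_right _ _
  have hB1a : B1 ≤ a1 - 2 * δ := min_le_left _ _
  have hB1b : B1 ≤ b1 - 2 * δ - r1 := min_le_right _ _
  have hB2a : B2 ≤ a2 - 2 * δ := min_le_left _ _
  have hB2b : B2 ≤ b2 - 2 * δ - r2 := min_le_right _ _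
  have hf1a : f1 ≤ B1 := min_le_left _ _
  have hf1b : f1 ≤ a12 - 2 * δ - (c2 + 2 * δ - (R2 + ε) - r2) := min_le_right _ _
  have hf2a : f2 ≤ B2 := min_le_left _ _
  have hf2b : f2 ≤ a12 - 2 * δ - f1 := min_le_right _ _
  refine ⟨δ, r1, r2, f1, f2, hδ0, hr1a, hr2a, hr1b, hr2b, by linarith, by linarith, by linarith,
    by linarith, by linarith, ?_⟩
  have er1 : r1 = R01 + ε ∨ r1 = b1 - 2 * δ := min_choice _ _
  have er2 : r2 = R02 + ε ∨ r2 = b2 - 2 * δ := min_choice _ _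
  have eB1 : B1 = a1 - 2 * δ ∨ B1 = b1 - 2 * δ - r1 := min_choice _ _
  have eB2 : B2 = a2 - 2 * δ ∨ B2 = b2 - 2 * δ - r2 := min_choice _ _
  have ef1 : f1 = B1 ∨ f1 = a12 - 2 * δ - (c2 + 2 * δ - (R2 + ε) - r2) := min_choice _ _
  have ef2 : f2 = B2 ∨ f2 = a12 - 2 * δ - f1 := min_choice _ _
  have hA1 : c1 + 2 * δ - (R1 + ε) - r1 ≤ B1 := by
    rcases er1 with e | e <;> rcases eB1 with e' | e' <;> linarith
  have hA2 : c2 + 2 * δ - (R2 + ε) - r2 ≤ B2 := by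
    rcases er2 with e | e <;> rcases eB2 with e' | e' <;> linarith
  have hA12 : c12 + 2 * δ - (R1 + ε) - r1 - (R2 + ε) - r2 ≤ a12 - 2 * δ := by
    rcases er1 with e | e <;> rcases er2 with e' | e' <;> linarith
  have hB12 : c12 + 2 * δ - (R1 + ε) - r1 - (R2 + ε) - r2 ≤ B1 + B2 := by
    rcases er1 with e | e <;> rcases er2 with e' | e' <;> rcases eB1 with e2 | e2 <;>
      rcases eB2 with e3 | e3 <;> linarith
  have hL : c1 + 2 * δ - (R1 + ε) - r1 + (c2 + 2 * δ - (R2 + ε) - r2) ≤ a12 - 2 * δ := by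
    rcases er1 with e | e <;> rcases er2 with e' | e' <;> linarith
  refine ⟨?_, ?_, ?_⟩
  · rcases ef1 with e | e <;> linarith
  · rcases ef2 with e | e <;> rcases ef1 with e' | e' <;> linarith
  · rcases ef2 with e | e <;> rcases ef1 with e' | e' <;> linarith

/-! ### Numbers of bins and reduction of shared randomness -/

lemma cnum_ge (n : ℕ) (R : ℝ) : (2 : ℝ) ^ ((n : ℝ) * R) ≤ cnum n R := Nat.le_ceil _

lemma cnum_pos (n : ℕ) (R : ℝ) : 0 < cnum n R :=
  Nat.ceil_pos.2 (Real.rpow_pos_of_pos two_pos _)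

instance cnum_neZero (n : ℕ) (R : ℝ) : NeZero (cnum n R) := ⟨(cnum_pos n R).ne'⟩

lemma cnum_sub_one_le (n : ℕ) (R : ℝ) : (cnum n R : ℝ) - 1 ≤ (2 : ℝ) ^ ((n : ℝ) * R) := by
  have := (Nat.ceil_lt_add_one (Real.rpow_pos_of_pos two_pos ((n : ℝ) * R)).le).le
  unfold cnum
  linarith

lemma cnum_sub_one_nonneg (n : ℕ) (R : ℝ) : 0 ≤ (cnum n R : ℝ) - 1 := by
  have : (1 : ℝ) ≤ cnum n R := by exact_mod_cast cnum_pos n R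
  linarith

lemma cnum_mono (n : ℕ) {r R : ℝ} (h : r ≤ R) : cnum n r ≤ cnum n R :=
  Nat.ceil_mono (Real.rpow_le_rpow_of_exponent_le one_le_two
    (mul_le_mul_of_nonneg_left h n.cast_nonneg))

lemma cnum_of_nonpos (n : ℕ) {R : ℝ} (h : R ≤ 0) : cnum n R = 1 := by
  refine le_antisymm (Nat.ceil_le.2 ?_) (cnum_pos n R)
  rw [Nat.cast_one]
  exact Real.rpow_le_one_of_one_le_of_nonpos one_le_two
    (mul_nonpos_of_nonneg_of_nonpos n.cast_nonneg h)

lemma tendsto_two_rpow_neg {δ : ℝ} (hδ : 0 < δ) :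
    Filter.Tendsto (fun n : ℕ => (2 : ℝ) ^ (-((n : ℝ) * δ))) Filter.atTop (nhds 0) := by
  have e : (fun n : ℕ => (2 : ℝ) ^ (-((n : ℝ) * δ))) = fun n : ℕ => ((2 : ℝ) ^ (-δ)) ^ n := by
    funext n
    rw [← Real.rpow_natCast, ← Real.rpow_mul zero_le_two]
    congr 1; ring
  rw [e]
  exact tendsto_pow_atTop_nhds_zero_of_lt_one (Real.rpow_nonneg zero_le_two _)
    (Real.rpow_lt_one_of_one_lt_of_neg one_lt_two (by linarith))

/-- Reduction modulo `N` maps the uniform law on `N'` points to a nearly uniform law on `N`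
points. -/
lemma mod_uniform (N N' : ℕ) [NeZero N] [NeZero N'] :
    ∃ g : Fin N' → Fin N,
      ∑ s, |pm (fun _ => (N' : ℝ)⁻¹) g s - (Fintype.card (Fin N) : ℝ)⁻¹| ≤
        if N = N' then 0 else (N : ℝ) / N' := by
  have hN : 0 < N := Nat.pos_of_ne_zero (NeZero.ne N)
  have hN' : 0 < N' := Nat.pos_of_ne_zero (NeZero.ne N')
  have hNr : (0 : ℝ) < N := by exact_mod_cast hN
  have hNr' : (0 : ℝ) < N' := by exact_mod_cast hN'
  refine ⟨fun s => ⟨s % N, Nat.mod_lt _ hN⟩, ?_⟩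
  have key : ∀ s : Fin N, pm (fun _ => (N' : ℝ)⁻¹)
      (fun s : Fin N' => (⟨s % N, Nat.mod_lt _ hN⟩ : Fin N)) s =
      (N' : ℝ)⁻¹ * ((N' / N : ℕ) + if (s : ℕ) < N' % N then 1 else 0) := by
    intro s
    have h := Nat.count_modEq_card N' hN (s : ℕ)
    rw [Nat.mod_eq_of_lt s.2] at h
    have h2 : ((Nat.count (· ≡ (s : ℕ) [MOD N]) N' : ℕ) : ℝ) =
        ((N' / N : ℕ) + if (s : ℕ) < N' % N then 1 else 0) := by
      rw [h]; push_cast; rfl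
    rw [← h2, Nat.count_eq_card_filter_range, card_filter]
    unfold pm
    rw [← mul_sum]
    congr 1
    push_cast
    rw [← Fin.sum_univ_eq_sum_range (fun k => if k ≡ (s : ℕ) [MOD N] then (1 : ℝ) else 0)]
    refine sum_congr rfl fun k _ => ?_
    have e : ((⟨(k : ℕ) % N, Nat.mod_lt _ hN⟩ : Fin N) = s) ↔ (k : ℕ) ≡ (s : ℕ) [MOD N] := by
      rw [Fin.ext_iff, Nat.ModEq, Nat.mod_eq_of_lt s.2]
    by_cases hk : (k : ℕ) ≡ (s : ℕ) [MOD N]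
    · rw [ind_of (e.2 hk), if_pos hk]
    · rw [ind_not (fun h => hk (e.1 h)), if_neg hk]
  simp_rw [key, Fintype.card_fin]
  split_ifs with hE
  · subst hE
    simp [Nat.div_self hN]
  · have hb : ∀ s : Fin N, |(N' : ℝ)⁻¹ * ((N' / N : ℕ) + if (s : ℕ) < N' % N then 1 else 0) -
        (N : ℝ)⁻¹| ≤ (N' : ℝ)⁻¹ := by
      intro s
      have hd : (N' : ℝ) = N * (N' / N : ℕ) + (N' % N : ℕ) := by
        exact_mod_cast (Nat.div_add_mod N' N).symm
      have hm : ((N' % N : ℕ) : ℝ) ≤ N := by exact_mod_cast (Nat.mod_lt N' hN).le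
      have hm0 : (0 : ℝ) ≤ (N' % N : ℕ) := Nat.cast_nonneg _
      have e : (N' : ℝ)⁻¹ * ((N' / N : ℕ) + if (s : ℕ) < N' % N then 1 else 0) - (N : ℝ)⁻¹ =
          (N' : ℝ)⁻¹ * ((if (s : ℕ) < N' % N then 1 else 0) - (N' % N : ℕ) / N) := by
        have : (N : ℝ)⁻¹ = (N' : ℝ)⁻¹ * ((N' / N : ℕ) + (N' % N : ℕ) / N) := by
          field_simp
          linarith
        rw [this]; ring
      rw [e, abs_mul, abs_of_pos (inv_pos.2 hNr')]
      refine mul_le_of_le_one_right (inv_pos.2 hNr').le ?_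
      have h1 : ((N' % N : ℕ) : ℝ) / N ≤ 1 := (div_le_one hNr).2 hm
      have h0 : 0 ≤ ((N' % N : ℕ) : ℝ) / N := div_nonneg hm0 hNr.le
      rw [abs_le]
      split_ifs <;> constructor <;> linarith
    refine (sum_le_sum fun s _ => hb s).trans (le_of_eq ?_)
    rw [sum_const, card_univ, Fintype.card_fin, nsmul_eq_mul, div_eq_mul_inv]

/-- Shared randomness of rate `R` simulates shared randomness of any rate `r ≤ R` with vanishing
error. -/
lemma exists_share {r R : ℝ} (h : r ≤ R) :
    ∃ D : ℕ → ℝ, Filter.Tendsto D Filter.atTop (nhds 0) ∧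
      ∀ n, ∃ g : Fin (cnum n R) → Fin (cnum n r),
        ∑ s, |pm (fun _ => (cnum n R : ℝ)⁻¹) g s - (Fintype.card (Fin (cnum n r)) : ℝ)⁻¹| ≤ D n := by
  refine ⟨fun n => if cnum n r = cnum n R then 0 else (cnum n r : ℝ) / cnum n R, ?_,
    fun n => mod_uniform _ _⟩
  rcases h.eq_or_lt with rfl | hlt
  · simp
  rcases le_or_gt R 0 with hR | hR
  · simp [cnum_of_nonpos _ hR, cnum_of_nonpos _ (h.trans hR)]
  · refine squeeze_zero (g := fun n : ℕ => (2 : ℝ) ^ (-((n : ℝ) * (R - r))) +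
      (2 : ℝ) ^ (-((n : ℝ) * R))) (fun n => ?_) (fun n => ?_) ?_
    · split_ifs
      · exact le_rfl
      · positivity
    · have hp : (0 : ℝ) < 2 ^ ((n : ℝ) * R) := Real.rpow_pos_of_pos two_pos _
      split_ifs
      · positivity
      · calc (cnum n r : ℝ) / cnum n R ≤ (2 ^ ((n : ℝ) * r) + 1) / 2 ^ ((n : ℝ) * R) := by
              apply div_le_div₀ (by positivity) _ hp (cnum_ge n R)
              linarith [cnum_sub_one_le n r]
          _ = _ := by
              rw [add_div, ← Real.rpow_sub two_pos, one_div, ← Real.rpow_neg zero_le_two]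
              congr 2; ring
    · simpa using (tendsto_two_rpow_neg (sub_pos.2 hlt)).add (tendsto_two_rpow_neg hR)

/-! ### Block codes -/

/-- Tuples of sequences correspond to sequences of tuples. -/
def seqEquiv (n : ℕ) (X1 X2 Z T U1 U2 Y : Type) :
    ((Fin n → X1) × (Fin n → X2) × (Fin n → Z) × (Fin n → T) × (Fin n → U1) × (Fin n → U2) ×
      (Fin n → Y)) ≃ (Fin n → X1 × X2 × Z × T × U1 × U2 × Y) where
  toFun ω i := (ω.1 i, ω.2.1 i, ω.2.2.1 i, ω.2.2.2.1 i, ω.2.2.2.2.1 i, ω.2.2.2.2.2.1 i,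
    ω.2.2.2.2.2.2 i)
  invFun ω := (fun i => (ω i).1, fun i => (ω i).2.1, fun i => (ω i).2.2.1, fun i => (ω i).2.2.2.1,
    fun i => (ω i).2.2.2.2.1, fun i => (ω i).2.2.2.2.2.1, fun i => (ω i).2.2.2.2.2.2)
  left_inv _ := rfl
  right_inv _ := rfl

/-- The three-component version of `seqEquiv`. -/
def seqEquiv3 (n : ℕ) (X1 X2 Z : Type) :
    ((Fin n → X1) × (Fin n → X2) × (Fin n → Z)) ≃ (Fin n → X1 × X2 × Z) where
  toFun ω i := (ω.1 i, ω.2.1 i, ω.2.2 i)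
  invFun ω := (fun i => (ω i).1, fun i => (ω i).2.1, fun i => (ω i).2.2)
  left_inv _ := rfl
  right_inv _ := rfl

lemma isPMF_prod {n : ℕ} {α : Type*} [Fintype α] {P : Fin n → α → ℝ} (h : ∀ i, IsPMF (P i)) :
    IsPMF (fun a : Fin n → α => ∏ i, P i (a i)) := by
  refine ⟨fun a => prod_nonneg fun i _ => (h i).1 _, ?_⟩
  rw [← Fintype.prod_sum]
  exact prod_eq_one fun i _ => (h i).2

lemma isPMF_prod3 {n : ℕ} {X1 X2 Z : Type} [Fintype X1] [Fintype X2] [Fintype Z]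
    {q3 : X1 × X2 × Z → ℝ} (h : IsPMF q3) :
    IsPMF (fun x : (Fin n → X1) × (Fin n → X2) × (Fin n → Z) =>
      ∏ i, q3 (x.1 i, x.2.1 i, x.2.2 i)) := by
  refine ⟨fun a => prod_nonneg fun i _ => h.1 _, ?_⟩
  rw [← (isPMF_prod (n := n) fun _ => h).2]
  exact Equiv.sum_comp (seqEquiv3 n X1 X2 Z) fun a => ∏ i, q3 (a i)

lemma sum_pm_mul_two {Ω Ω' β γ : Type*} [Fintype Ω] [Fintype Ω'] [Fintype β] [Fintype γ]
    (P : Ω → ℝ) (f : Ω → β) (Q : Ω' → ℝ) (g : Ω' → γ) (F : β → γ → ℝ) :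
    ∑ b, ∑ c, pm P f b * (pm Q g c * F b c) = ∑ ω, ∑ ω', P ω * (Q ω' * F (f ω) (g ω')) := by
  simp_rw [← mul_sum, sum_pm_mul]

/-- The random-binning scheme as a code, each encoder deriving its bin index from the actual
shared randomness by a map `g`. -/
lemma exists_code {X1 X2 Z Y : Type} [Fintype X1] [Fintype X2] [Fintype Z] [Fintype Y]
    {n : ℕ} {U1 U2 S1 F1 S2 F2 : Type} [Fintype U1] [Fintype U2] [Fintype S1] [Fintype S2]
    {R1 R2 R01 R02 : ℝ} (q3 : X1 × X2 × Z → ℝ)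
    {K1 : (Fin n → X1) → U1 → ℝ} {K2 : (Fin n → X2) → U2 → ℝ}
    {KY : U1 × U2 → (Fin n → Z) → (Fin n → Y) → ℝ}
    (hK1 : ∀ x, IsPMF (K1 x)) (hK2 : ∀ x, IsPMF (K2 x)) (hKY : ∀ u z, IsPMF (KY u z))
    (h1 : U1 → (S1 × F1) × Fin (cnum n R1)) (h2 : U2 → (S2 × F2) × Fin (cnum n R2))
    (d : (S1 × F1) × Fin (cnum n R1) → (S2 × F2) × Fin (cnum n R2) → (Fin n → Z) → U1 × U2)
    (f1 : F1) (f2 : F2) (g1 : Fin (cnum n R01) → S1) (g2 : Fin (cnum n R02) → S2) :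
    ∃ C : MACCode X1 X2 Z Y n R1 R2 R01 R02, ∀ w, inducedPMF q3 C w =
      binOut (fun x : (Fin n → X1) × (Fin n → X2) × (Fin n → Z) =>
          ∏ i, q3 (x.1 i, x.2.1 i, x.2.2 i)) K1 K2 KY h1 h2 d
        (pm (fun _ => (cnum n R01 : ℝ)⁻¹) g1) (pm (fun _ => (cnum n R02 : ℝ)⁻¹) g2) f1 f2
        (w.1, w.2.1, w.2.2.1) w.2.2.2 := by
  refine ⟨⟨fun s x m => binEnc K1 h1 (g1 s, f1) x m, fun s x m => binEnc K2 h2 (g2 s, f2) x m,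
    fun s1 s2 m1 m2 z y => KY (d ((g1 s1, f1), m1) ((g2 s2, f2), m2) z) z y,
    fun s x => binEnc_pmf hK1 h1 _ x, fun s x => binEnc_pmf hK2 h2 _ x,
    fun s1 s2 m1 m2 z => hKY _ _⟩, fun w => ?_⟩
  have e := sum_pm_mul_two (fun _ : Fin (cnum n R01) => (cnum n R01 : ℝ)⁻¹) g1
    (fun _ : Fin (cnum n R02) => (cnum n R02 : ℝ)⁻¹) g2 (fun s1 s2 => ∑ m1, ∑ m2,
      (∏ i, q3 (w.1 i, w.2.1 i, w.2.2.1 i)) * binEnc K1 h1 (s1, f1) w.1 m1 *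
      binEnc K2 h2 (s2, f2) w.2.1 m2 * KY (d ((s1, f1), m1) ((s2, f2), m2) w.2.2.1) w.2.2.1 w.2.2.2)
  simp only [mul_sum] at e
  unfold inducedPMF binOut
  refine Eq.trans ?_ (e.symm.trans ?_)
  · refine sum_congr rfl fun s1 _ => sum_congr rfl fun s2 _ => sum_congr rfl fun m1 _ =>
      sum_congr rfl fun m2 _ => ?_
    rw [mul_inv]; ring
  · refine sum_congr rfl fun s1 _ => sum_congr rfl fun s2 _ => sum_congr rfl fun m1 _ =>
      sum_congr rfl fun m2 _ => ?_
    ring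

lemma tvDist_le {A B C D : Type} [Fintype A] [Fintype B] [Fintype C] [Fintype D]
    (P Q : A × B × C × D → ℝ) :
    tvDist P Q ≤ ∑ x : A × B × C, ∑ y,
      |P (x.1, x.2.1, x.2.2, y) - Q (x.1, x.2.1, x.2.2, y)| := by
  have e : ∑ w, |P w - Q w| = ∑ x : A × B × C, ∑ y,
      |P (x.1, x.2.1, x.2.2, y) - Q (x.1, x.2.1, x.2.2, y)| := by
    simp only [Fintype.sum_prod_type]
  unfold tvDist
  rw [← e]
  have : 0 ≤ ∑ w, |P w - Q w| := sum_nonneg fun _ _ => abs_nonneg _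
  linarith

/-! ### Exponential bounds on the error terms -/

lemma two_rpow_mul_le (n : ℕ) {A B δ : ℝ} (h : A ≤ B - 2 * δ) :
    (2 : ℝ) ^ ((n : ℝ) * A) * (2 : ℝ) ^ (-((n : ℝ) * (B - δ))) ≤ (2 : ℝ) ^ (-((n : ℝ) * δ)) := by
  rw [← Real.rpow_add two_pos]
  refine Real.rpow_le_rpow_of_exponent_le one_le_two ?_
  nlinarith [mul_le_mul_of_nonneg_left h (n.cast_nonneg : (0 : ℝ) ≤ n)]

lemma cnum_mul_le (n : ℕ) {A B δ : ℝ} (h : A ≤ B - 2 * δ) :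
    ((cnum n A : ℝ) - 1) * (2 : ℝ) ^ (-((n : ℝ) * (B - δ))) ≤ (2 : ℝ) ^ (-((n : ℝ) * δ)) :=
  (mul_le_mul_of_nonneg_right (cnum_sub_one_le n A) (Real.rpow_nonneg zero_le_two _)).trans
    (two_rpow_mul_le n h)

lemma cnum_mul_mul_le (n : ℕ) {A A' B δ : ℝ} (h : A + A' ≤ B - 2 * δ) :
    ((cnum n A : ℝ) - 1) * ((cnum n A' : ℝ) - 1) * (2 : ℝ) ^ (-((n : ℝ) * (B - δ))) ≤
      (2 : ℝ) ^ (-((n : ℝ) * δ)) := by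
  refine le_trans (mul_le_mul_of_nonneg_right (mul_le_mul (cnum_sub_one_le n A)
    (cnum_sub_one_le n A') (cnum_sub_one_nonneg n A') (Real.rpow_nonneg zero_le_two _))
    (Real.rpow_nonneg zero_le_two _)) ?_
  rw [← Real.rpow_add two_pos, ← mul_add]
  exact two_rpow_mul_le n h

/-- The bin index of one encoder is nearly uniform. -/
lemma bins_one_le (n : ℕ) {r f b δ : ℝ} (h1 : r ≤ b - 2 * δ) (h2 : f ≤ b - 2 * δ)
    (h3 : r + f ≤ b - 2 * δ) :
    ((Fintype.card (Fin (cnum n r) × Fin (cnum n f)) : ℝ) - 1) * (2 : ℝ) ^ (-((n : ℝ) * (b - δ))) ≤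
      3 * (2 : ℝ) ^ (-((n : ℝ) * δ)) := by
  have k1 := cnum_mul_le n h1
  have k2 := cnum_mul_le n h2
  have k3 := cnum_mul_mul_le n h3
  rw [Fintype.card_prod, Fintype.card_fin, Fintype.card_fin]
  push_cast
  linarith

lemma bins_two_le (n : ℕ) {f1 f2 a1 a2 a12 δ : ℝ} (h1 : f1 ≤ a1 - 2 * δ) (h2 : f2 ≤ a2 - 2 * δ)
    (h3 : f1 + f2 ≤ a12 - 2 * δ) :
    ((Fintype.card (Fin (cnum n f1)) : ℝ) - 1) * ((Fintype.card (Fin (cnum n f2)) : ℝ) - 1) *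
        (2 : ℝ) ^ (-((n : ℝ) * (a12 - δ))) +
      ((Fintype.card (Fin (cnum n f1)) : ℝ) - 1) * (2 : ℝ) ^ (-((n : ℝ) * (a1 - δ))) +
      ((Fintype.card (Fin (cnum n f2)) : ℝ) - 1) * (2 : ℝ) ^ (-((n : ℝ) * (a2 - δ))) ≤
      3 * (2 : ℝ) ^ (-((n : ℝ) * δ)) := by
  have k1 := cnum_mul_le n h1
  have k2 := cnum_mul_le n h2
  have k3 := cnum_mul_mul_le n h3
  simp only [Fintype.card_fin]
  linarith

lemma inv_card_le (n : ℕ) (r f R : ℝ) :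
    (Fintype.card ((Fin (cnum n r) × Fin (cnum n f)) × Fin (cnum n R)) : ℝ)⁻¹ ≤
      (2 : ℝ) ^ (-((n : ℝ) * (r + f + R))) := by
  rw [Real.rpow_neg zero_le_two]
  refine inv_anti₀ (Real.rpow_pos_of_pos two_pos _) ?_
  rw [mul_add, mul_add, Real.rpow_add two_pos, Real.rpow_add two_pos]
  simp only [Fintype.card_prod, Fintype.card_fin]
  push_cast
  have := cnum_ge n r
  have := cnum_ge n f
  have := cnum_ge n R
  gcongr

lemma two_rpow_decode (n : ℕ) {A c δ : ℝ} (h : c + 2 * δ ≤ A) :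
    (2 : ℝ) ^ (-((n : ℝ) * A)) * ((2 : ℝ) ^ (-((n : ℝ) * (c + δ))))⁻¹ ≤
      (2 : ℝ) ^ (-((n : ℝ) * δ)) := by
  rw [← Real.rpow_neg zero_le_two, ← Real.rpow_add two_pos]
  refine Real.rpow_le_rpow_of_exponent_le one_le_two ?_
  nlinarith [mul_le_mul_of_nonneg_left h (n.cast_nonneg : (0 : ℝ) ≤ n)]

lemma decode_one_le (n : ℕ) {r f R c δ : ℝ} (h : c + 2 * δ ≤ r + f + R) :
    (Fintype.card ((Fin (cnum n r) × Fin (cnum n f)) × Fin (cnum n R)) : ℝ)⁻¹ *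
      ((2 : ℝ) ^ (-((n : ℝ) * (c + δ))))⁻¹ ≤ (2 : ℝ) ^ (-((n : ℝ) * δ)) :=
  (mul_le_mul_of_nonneg_right (inv_card_le n r f R)
    (inv_nonneg.2 (Real.rpow_nonneg zero_le_two _))).trans (two_rpow_decode n h)

lemma decode_two_le (n : ℕ) {r f R r' f' R' c δ : ℝ} (h : c + 2 * δ ≤ r + f + R + (r' + f' + R')) :
    (Fintype.card ((Fin (cnum n r) × Fin (cnum n f)) × Fin (cnum n R)) : ℝ)⁻¹ *
      (Fintype.card ((Fin (cnum n r') × Fin (cnum n f')) × Fin (cnum n R')) : ℝ)⁻¹ *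
      ((2 : ℝ) ^ (-((n : ℝ) * (c + δ))))⁻¹ ≤ (2 : ℝ) ^ (-((n : ℝ) * δ)) := by
  refine le_trans (mul_le_mul_of_nonneg_right (mul_le_mul (inv_card_le n r f R)
    (inv_card_le n r' f' R') (by positivity) (Real.rpow_nonneg zero_le_two _))
    (inv_nonneg.2 (Real.rpow_nonneg zero_le_two _))) ?_
  rw [← Real.rpow_add two_pos, ← neg_add, ← mul_add]
  exact two_rpow_decode n h

/-! ### Achievability -/

lemma IsPMF.nonempty {α : Type*} [Fintype α] {P : α → ℝ} (h : IsPMF P) : Nonempty α := by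
  by_contra hc
  rw [not_nonempty_iff] at hc
  have := h.2
  simp at this

lemma margXXZ_pmf {X1 X2 Z Y : Type} [Fintype X1] [Fintype X2] [Fintype Z] [Fintype Y]
    {q : X1 × X2 × Z × Y → ℝ} (hq : IsPMF q) : IsPMF (margXXZ q) := by
  refine ⟨fun a => sum_nonneg fun y _ => hq.1 _, ?_⟩
  rw [← hq.2]
  simp only [margXXZ, Fintype.sum_prod_type]

lemma pm_pmf {Ω β : Type*} [Fintype Ω] [Fintype β] {P : Ω → ℝ} (hP : IsPMF P) (f : Ω → β) :
    IsPMF (pm P f) := by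
  refine ⟨fun b => pm_nonneg hP.1 f b, ?_⟩
  simpa [hP.2] using sum_pm_mul P f (fun _ => 1)

lemma uniform_pmf (N : ℕ) [NeZero N] : IsPMF (fun _ : Fin N => (N : ℝ)⁻¹) := by
  refine ⟨fun _ => by positivity, ?_⟩
  rw [sum_const, card_univ, Fintype.card_fin, nsmul_eq_mul, mul_inv_cancel₀]
  exact_mod_cast NeZero.ne N

/-- With rates exceeding the conditions by `ε`, the one-shot bound applied to product laws with
exponentially many bins vanishes as the block length grows. -/
lemma achievable_of_rateFacts {X1 X2 Z Y T U1 U2 : Type}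
    [Fintype X1] [Fintype X2] [Fintype Z] [Fintype Y] [Fintype T] [Fintype U1] [Fintype U2]
    {q : X1 × X2 × Z × Y → ℝ} (hq : IsPMF q)
    {pT : T → ℝ} {K1 : X1 → T → U1 → ℝ} {K2 : X2 → T → U2 → ℝ} {KY : U1 → U2 → Z → T → Y → ℝ}
    (hpT : IsPMF pT) (hK1 : ∀ x t, IsPMF (K1 x t)) (hK2 : ∀ x t, IsPMF (K2 x t))
    (hKY : ∀ u1 u2 z t, IsPMF (KY u1 u2 z t))
    {p : X1 × X2 × Z × T × U1 × U2 × Y → ℝ} (hp : p = fullLaw (margXXZ q) pT K1 K2 KY)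
    (hcons : ∀ t x1 x2 z y, (∑ u1 : U1, ∑ u2 : U2,
      margXXZ q (x1, x2, z) * K1 x1 t u1 * K2 x2 t u2 * KY u1 u2 z t y) = q (x1, x2, z, y))
    {a1 a2 a12 b1 b2 c1 c2 c12 R1 R2 R01 R02 ε : ℝ}
    (ha1 : a1 = hh p (fun ω => ((vT ω, (vX1 ω, vX2 ω, vZ ω), vY ω), vU1 ω)) -
        hh p (fun ω => (vT ω, (vX1 ω, vX2 ω, vZ ω), vY ω)))
    (ha2 : a2 = hh p (fun ω => ((vT ω, (vX1 ω, vX2 ω, vZ ω), vY ω), vU2 ω)) -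
        hh p (fun ω => (vT ω, (vX1 ω, vX2 ω, vZ ω), vY ω)))
    (ha12 : a12 = hh p (fun ω => ((vT ω, (vX1 ω, vX2 ω, vZ ω), vY ω), vU1 ω, vU2 ω)) -
        hh p (fun ω => (vT ω, (vX1 ω, vX2 ω, vZ ω), vY ω)))
    (hb1 : b1 = hh p (fun ω => ((vT ω, vX1 ω), vU1 ω)) - hh p (fun ω => (vT ω, vX1 ω)))
    (hb2 : b2 = hh p (fun ω => ((vT ω, vX2 ω), vU2 ω)) - hh p (fun ω => (vT ω, vX2 ω)))
    (hc1 : c1 = hh p (fun ω => ((vT ω, vZ ω), vU1 ω, vU2 ω)) -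
      hh p (fun ω => ((vT ω, vZ ω), vU2 ω)))
    (hc2 : c2 = hh p (fun ω => ((vT ω, vZ ω), vU1 ω, vU2 ω)) -
      hh p (fun ω => ((vT ω, vZ ω), vU1 ω)))
    (hc12 : c12 = hh p (fun ω => ((vT ω, vZ ω), vU1 ω, vU2 ω)) - hh p (fun ω => (vT ω, vZ ω)))
    (hR : RateFacts a1 a2 a12 b1 b2 c1 c2 c12 R1 R2 R01 R02) (hε : 0 < ε) :
    Achievable q (R1 + ε) (R2 + ε) (R01 + ε) (R02 + ε) := by
  have hq3 := margXXZ_pmf hq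
  have hpp : IsPMF p := hp ▸ fullLaw_pmf hq3 hpT hK1 hK2 hKY
  obtain ⟨⟨x1, x2, z0, y0⟩⟩ := hq.nonempty
  obtain ⟨t0⟩ := hpT.nonempty
  have : Nonempty U1 := (hK1 x1 t0).nonempty
  have : Nonempty U2 := (hK2 x2 t0).nonempty
  obtain ⟨δ, r1, r2, f1, f2, hδ, hr1, hr2, hrb1, hrb2, hfa1, hfa2, hrf1, hrf2, hf12, hd1, hd2, hd12⟩ :=
    hR.exists_bins hε
  have hfb1 : f1 ≤ b1 - 2 * δ := by linarith [hR.a1_le]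
  have hfb2 : f2 ≤ b2 - 2 * δ := by linarith [hR.a2_le]
  obtain ⟨D1, hD1, G1⟩ := exists_share hr1
  obtain ⟨D2, hD2, G2⟩ := exists_share hr2
  obtain ⟨θ1, θ1n, θ1l, H1⟩ := upTail_iid hpp _ _ hδ hb1
  obtain ⟨θ2, θ2n, θ2l, H2⟩ := upTail_iid hpp _ _ hδ hb2
  obtain ⟨θ3, θ3n, θ3l, H3⟩ := loTail_iid hpp _ _ hδ hc12
  obtain ⟨θ4, θ4n, θ4l, H4⟩ := loTail_iid hpp _ _ hδ hc1
  obtain ⟨θ5, θ5n, θ5l, H5⟩ := loTail_iid hpp _ _ hδ hc2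
  obtain ⟨θ6, θ6n, θ6l, H6⟩ := upTail_iid hpp _ _ hδ ha12
  obtain ⟨θ7, θ7n, θ7l, H7⟩ := upTail_iid hpp _ _ hδ ha1
  obtain ⟨θ8, θ8n, θ8l, H8⟩ := upTail_iid hpp _ _ hδ ha2
  let η : ℕ → ℝ := fun n => (2 : ℝ) ^ (-((n : ℝ) * δ))
  have hη : Filter.Tendsto η Filter.atTop (nhds 0) := tendsto_two_rpow_neg hδ
  let E : ℕ → ℝ := fun n => (2 * θ1 ^ n + √(3 * η n)) + (2 * θ2 ^ n + √(3 * η n)) +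
    2 * ((θ3 ^ n + θ4 ^ n + θ5 ^ n) + (η n + η n + η n)) +
    (2 * (θ6 ^ n + θ7 ^ n + θ8 ^ n) + √(3 * η n)) + D1 n + D2 n
  have hE : Filter.Tendsto E Filter.atTop (nhds 0) := by
    have hs : Filter.Tendsto (fun n => √(3 * η n)) Filter.atTop (nhds 0) := by
      have := (hη.const_mul 3).sqrt
      simpa using this
    have t1 := tendsto_pow_atTop_nhds_zero_of_lt_one θ1n θ1l
    have t2 := tendsto_pow_atTop_nhds_zero_of_lt_one θ2n θ2l
    have t3 := tendsto_pow_atTop_nhds_zero_of_lt_one θ3n θ3l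
    have t4 := tendsto_pow_atTop_nhds_zero_of_lt_one θ4n θ4l
    have t5 := tendsto_pow_atTop_nhds_zero_of_lt_one θ5n θ5l
    have t6 := tendsto_pow_atTop_nhds_zero_of_lt_one θ6n θ6l
    have t7 := tendsto_pow_atTop_nhds_zero_of_lt_one θ7n θ7l
    have t8 := tendsto_pow_atTop_nhds_zero_of_lt_one θ8n θ8l
    have := ((((((t1.const_mul 2).add hs).add ((t2.const_mul 2).add hs)).add
      ((((t3.add t4).add t5).add ((hη.add hη).add hη)).const_mul 2)).add
      ((((t6.add t7).add t8).const_mul 2).add hs)).add hD1).add hD2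
    simp only [mul_zero, add_zero] at this
    exact this
  have main : ∀ n, ∃ C : MACCode X1 X2 Z Y n (R1 + ε) (R2 + ε) (R01 + ε) (R02 + ε),
      tvDist (inducedPMF (margXXZ q) C) (iidPMF q n) ≤ E n := by
    intro n
    obtain ⟨g1, hg1⟩ := G1 n
    obtain ⟨g2, hg2⟩ := G2 n
    -- the `n`-letter law is the product of the single-letter one
    let q3n : (Fin n → X1) × (Fin n → X2) × (Fin n → Z) → ℝ :=
      fun x => ∏ i, margXXZ q (x.1 i, x.2.1 i, x.2.2 i)
    let pTn : (Fin n → T) → ℝ := fun t => ∏ i, pT (t i)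
    let K1n : (Fin n → X1) → (Fin n → T) → (Fin n → U1) → ℝ := fun x t u => ∏ i, K1 (x i) (t i) (u i)
    let K2n : (Fin n → X2) → (Fin n → T) → (Fin n → U2) → ℝ := fun x t u => ∏ i, K2 (x i) (t i) (u i)
    let KYn : (Fin n → U1) → (Fin n → U2) → (Fin n → Z) → (Fin n → T) → (Fin n → Y) → ℝ :=
      fun u1 u2 z t y => ∏ i, KY (u1 i) (u2 i) (z i) (t i) (y i)
    have hq3n : IsPMF q3n := isPMF_prod3 hq3
    have hpTn : IsPMF pTn := isPMF_prod fun _ => hpT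
    have hK1n : ∀ x t, IsPMF (K1n x t) := fun x t => isPMF_prod fun i => hK1 (x i) (t i)
    have hK2n : ∀ x t, IsPMF (K2n x t) := fun x t => isPMF_prod fun i => hK2 (x i) (t i)
    have hKYn : ∀ u1 u2 z t, IsPMF (KYn u1 u2 z t) := fun u1 u2 z t =>
      isPMF_prod fun i => hKY (u1 i) (u2 i) (z i) (t i)
    have hconsn : ∀ t x y, ∑ u1, ∑ u2,
        q3n x * (K1n x.1 t u1 * K2n x.2.1 t u2 * KYn u1 u2 x.2.2 t y) =
        iidPMF q n (x.1, x.2.1, x.2.2, y) := by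
      intro t x y
      unfold iidPMF
      rw [prod_congr rfl fun i _ => (hcons (t i) (x.1 i) (x.2.1 i) (x.2.2 i) (y i)).symm]
      simp_rw [Fintype.prod_sum]
      refine sum_congr rfl fun u1 _ => sum_congr rfl fun u2 _ => ?_
      simp only [q3n, K1n, K2n, KYn, ← prod_mul_distrib]
      exact prod_congr rfl fun i _ => by ring
    have hPn : ∀ ω, fullLaw q3n pTn K1n K2n KYn ω = ∏ i, p (seqEquiv n X1 X2 Z T U1 U2 Y ω i) := by
      intro ω
      rw [hp]
      simp only [fullLaw, q3n, pTn, K1n, K2n, KYn, ← prod_mul_distrib]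
      rfl
    have hpos : ∀ a : ℝ, (0 : ℝ) < 2 ^ a := fun a => Real.rpow_pos_of_pos two_pos a
    obtain ⟨t, h1, h2, d, k1, k2, hB⟩ := one_shot
      (S1 := Fin (cnum n r1)) (F1 := Fin (cnum n f1)) (M1 := Fin (cnum n (R1 + ε)))
      (S2 := Fin (cnum n r2)) (F2 := Fin (cnum n f2)) (M2 := Fin (cnum n (R2 + ε)))
      hq3n hpTn hK1n hK2n hKYn
      (fun x y => iidPMF q n (x.1, x.2.1, x.2.2, y)) hconsn
      (pm (fun _ => (cnum n (R01 + ε) : ℝ)⁻¹) g1) (pm (fun _ => (cnum n (R02 + ε) : ℝ)⁻¹) g2)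
      (pm_pmf (uniform_pmf _) g2)
      (β1 := 2 ^ (-((n : ℝ) * (b1 - δ)))) (β2 := 2 ^ (-((n : ℝ) * (b2 - δ))))
      (γ12 := 2 ^ (-((n : ℝ) * (a12 - δ)))) (γ1 := 2 ^ (-((n : ℝ) * (a1 - δ))))
      (γ2 := 2 ^ (-((n : ℝ) * (a2 - δ)))) (κ12 := 2 ^ (-((n : ℝ) * (c12 + δ))))
      (κ1 := 2 ^ (-((n : ℝ) * (c1 + δ)))) (κ2 := 2 ^ (-((n : ℝ) * (c2 + δ))))
      (hpos _).le (hpos _).le (hpos _).le (hpos _).le (hpos _).le (hpos _) (hpos _) (hpos _) rfl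
    obtain ⟨C, hC⟩ := exists_code (margXXZ q) (K1 := fun x => K1n x t) (K2 := fun x => K2n x t)
      (KY := fun u z => KYn u.1 u.2 z t) (fun x => hK1n x t) (fun x => hK2n x t)
      (fun u z => hKYn u.1 u.2 z t) h1 h2 d k1 k2 g1 g2
    refine ⟨C, (tvDist_le _ _).trans ?_⟩
    simp only [hC]
    refine hB.trans ?_
    have e1 := H1 n _ _ _ (seqEquiv n X1 X2 Z T U1 U2 Y) _
      (fun ω => ((vT ω, vX1 ω), vU1 ω)) (fun ω => (vT ω, vX1 ω)) hPn
      (fun ω ω' => by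
        simp only [Prod.mk.injEq, funext_iff, ← forall_and]; rfl)
      (fun ω ω' => by
        simp only [Prod.mk.injEq, funext_iff, ← forall_and]; rfl)
    have e2 := H2 n _ _ _ (seqEquiv n X1 X2 Z T U1 U2 Y) _
      (fun ω => ((vT ω, vX2 ω), vU2 ω)) (fun ω => (vT ω, vX2 ω)) hPn
      (fun ω ω' => by
        simp only [Prod.mk.injEq, funext_iff, ← forall_and]; rfl)
      (fun ω ω' => by
        simp only [Prod.mk.injEq, funext_iff, ← forall_and]; rfl)
    have e3 := H3 n _ _ _ (seqEquiv n X1 X2 Z T U1 U2 Y) _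
      (fun ω => ((vT ω, vZ ω), vU1 ω, vU2 ω)) (fun ω => (vT ω, vZ ω)) hPn
      (fun ω ω' => by
        simp only [Prod.mk.injEq, funext_iff, ← forall_and]; rfl)
      (fun ω ω' => by
        simp only [Prod.mk.injEq, funext_iff, ← forall_and]; rfl)
    have e4 := H4 n _ _ _ (seqEquiv n X1 X2 Z T U1 U2 Y) _
      (fun ω => ((vT ω, vZ ω), vU1 ω, vU2 ω)) (fun ω => ((vT ω, vZ ω), vU2 ω)) hPn
      (fun ω ω' => by
        simp only [Prod.mk.injEq, funext_iff, ← forall_and]; rfl)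
      (fun ω ω' => by
        simp only [Prod.mk.injEq, funext_iff, ← forall_and]; rfl)
    have e5 := H5 n _ _ _ (seqEquiv n X1 X2 Z T U1 U2 Y) _
      (fun ω => ((vT ω, vZ ω), vU1 ω, vU2 ω)) (fun ω => ((vT ω, vZ ω), vU1 ω)) hPn
      (fun ω ω' => by
        simp only [Prod.mk.injEq, funext_iff, ← forall_and]; rfl)
      (fun ω ω' => by
        simp only [Prod.mk.injEq, funext_iff, ← forall_and]; rfl)
    have e6 := H6 n _ _ _ (seqEquiv n X1 X2 Z T U1 U2 Y) _
      (fun ω => ((vT ω, (vX1 ω, vX2 ω, vZ ω), vY ω), vU1 ω, vU2 ω))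
      (fun ω => (vT ω, (vX1 ω, vX2 ω, vZ ω), vY ω)) hPn
      (fun ω ω' => by
        simp only [Prod.mk.injEq, funext_iff, ← forall_and]; rfl)
      (fun ω ω' => by
        simp only [Prod.mk.injEq, funext_iff, ← forall_and]; rfl)
    have e7 := H7 n _ _ _ (seqEquiv n X1 X2 Z T U1 U2 Y) _
      (fun ω => ((vT ω, (vX1 ω, vX2 ω, vZ ω), vY ω), vU1 ω))
      (fun ω => (vT ω, (vX1 ω, vX2 ω, vZ ω), vY ω)) hPn
      (fun ω ω' => by
        simp only [Prod.mk.injEq, funext_iff, ← forall_and]; rfl)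
      (fun ω ω' => by
        simp only [Prod.mk.injEq, funext_iff, ← forall_and]; rfl)
    have e8 := H8 n _ _ _ (seqEquiv n X1 X2 Z T U1 U2 Y) _
      (fun ω => ((vT ω, (vX1 ω, vX2 ω, vZ ω), vY ω), vU2 ω))
      (fun ω => (vT ω, (vX1 ω, vX2 ω, vZ ω), vY ω)) hPn
      (fun ω ω' => by
        simp only [Prod.mk.injEq, funext_iff, ← forall_and]; rfl)
      (fun ω ω' => by
        simp only [Prod.mk.injEq, funext_iff, ← forall_and]; rfl)
    have s1 := Real.sqrt_le_sqrt (bins_one_le n hrb1 hfb1 hrf1)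
    have s2 := Real.sqrt_le_sqrt (bins_one_le n hrb2 hfb2 hrf2)
    have s3 := Real.sqrt_le_sqrt (bins_two_le n hfa1 hfa2 hf12)
    have w1 := decode_one_le n hd1
    have w2 := decode_one_le n hd2
    have w3 := decode_two_le n hd12
    refine add_le_add (add_le_add (add_le_add (add_le_add (add_le_add
      (add_le_add (mul_le_mul_of_nonneg_left e1 zero_le_two) s1)
      (add_le_add (mul_le_mul_of_nonneg_left e2 zero_le_two) s2))
      (mul_le_mul_of_nonneg_left (add_le_add (add_le_add (add_le_add e3 e4) e5)
        (add_le_add (add_le_add w1 w2) w3)) zero_le_two))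
      (add_le_add (mul_le_mul_of_nonneg_left (add_le_add (add_le_add e6 e7) e8) zero_le_two) s3))
      hg1) hg2
  choose C hC using main
  exact ⟨C, squeeze_zero (fun n => mul_nonneg (by norm_num)
    (sum_nonneg fun _ _ => abs_nonneg _)) hC hE⟩

lemma mem_closure_of_add_eps {S : Set (ℝ × ℝ × ℝ × ℝ)} {a b c d : ℝ}
    (h : ∀ ε > 0, (a + ε, b + ε, c + ε, d + ε) ∈ S) : (a, b, c, d) ∈ closure S := by
  have hc : Continuous fun ε : ℝ => (a + ε, b + ε, c + ε, d + ε) := by fun_prop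
  have ht := (hc.tendsto' 0 (a, b, c, d) (by simp)).mono_left
    (nhdsWithin_le_nhds (s := Set.Ioi (0 : ℝ)))
  exact mem_closure_of_tendsto ht
    (Filter.eventually_of_mem self_mem_nhdsWithin fun ε hε => h ε hε)

/-- **Theorem 1 (Inner bound).**  If there are finite auxiliary alphabets `T, U₁, U₂` and a pmf
of the form `p(x₁,x₂,z,t,u₁,u₂,y) = q(x₁,x₂,z) p(t) p(u₁|x₁,t) p(u₂|x₂,t) p(y|u₁,u₂,z,t)`
satisfying `∑_{u₁,u₂} p(x₁,x₂,z,u₁,u₂,y|t) = q(x₁,x₂,z,y)` for every `t` and the eight rate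
inequalities, then `(R₁, R₂, R₀₁, R₀₂) ∈ R_MAC-coord`. -/
theorem mac_inner_bound
    {X1 X2 Z Y T U1 U2 : Type}
    [Fintype X1] [Fintype X2] [Fintype Z] [Fintype Y]
    [Fintype T] [Fintype U1] [Fintype U2]
    [DecidableEq X1] [DecidableEq X2] [DecidableEq Z] [DecidableEq Y]
    [DecidableEq T] [DecidableEq U1] [DecidableEq U2]
    (q : X1 × X2 × Z × Y → ℝ) (hq : IsPMF q)
    (pT : T → ℝ) (pU1c : X1 → T → U1 → ℝ) (pU2c : X2 → T → U2 → ℝ)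
    (pYc : U1 → U2 → Z → T → Y → ℝ)
    (hpT : IsPMF pT)
    (hpU1 : ∀ x1 t, IsPMF (pU1c x1 t))
    (hpU2 : ∀ x2 t, IsPMF (pU2c x2 t))
    (hpY : ∀ u1 u2 z t, IsPMF (pYc u1 u2 z t))
    (p : X1 × X2 × Z × T × U1 × U2 × Y → ℝ)
    (hpdef : ∀ x1 x2 z t u1 u2 y,
      p (x1, x2, z, t, u1, u2, y) =
        margXXZ q (x1, x2, z) * pT t * pU1c x1 t u1 * pU2c x2 t u2 * pYc u1 u2 z t y)
    (hcons : ∀ t x1 x2 z y,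
      (∑ u1 : U1, ∑ u2 : U2,
        margXXZ q (x1, x2, z) * pU1c x1 t u1 * pU2c x2 t u2 * pYc u1 u2 z t y)
        = q (x1, x2, z, y))
    (R1 R2 R01 R02 : ℝ)
    (h1 : cmi p vU1 vX1 (fun ω => (vU2 ω, vZ ω, vT ω)) ≤ R1)
    (h2 : cmi p vU2 vX2 (fun ω => (vU1 ω, vZ ω, vT ω)) ≤ R2)
    (h3 : cmi p (fun ω => (vU1 ω, vU2 ω)) (fun ω => (vX1 ω, vX2 ω))
        (fun ω => (vZ ω, vT ω)) ≤ R1 + R2)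
    (h4 : cmi p vU1 (fun ω => (vX1 ω, vX2 ω, vY ω)) (fun ω => (vZ ω, vT ω))
        - cmi p vU1 vU2 (fun ω => (vZ ω, vT ω)) ≤ R1 + R01)
    (h5 : cmi p vU2 (fun ω => (vX1 ω, vX2 ω, vY ω)) (fun ω => (vZ ω, vT ω))
        - cmi p vU1 vU2 (fun ω => (vZ ω, vT ω)) ≤ R2 + R02)
    (h6 : cmi p vU1 (fun ω => (vX1 ω, vX2 ω, vY ω)) (fun ω => (vZ ω, vT ω))
        + cmi p vU2 vX2 (fun ω => (vU1 ω, vZ ω, vT ω)) ≤ R1 + R2 + R01)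
    (h7 : cmi p vU2 (fun ω => (vX1 ω, vX2 ω, vY ω)) (fun ω => (vZ ω, vT ω))
        + cmi p vU1 vX1 (fun ω => (vU2 ω, vZ ω, vT ω)) ≤ R1 + R2 + R02)
    (h8 : cmi p (fun ω => (vU1 ω, vU2 ω)) (fun ω => (vX1 ω, vX2 ω, vY ω))
        (fun ω => (vZ ω, vT ω)) ≤ R1 + R2 + R01 + R02) :
    (R1, R2, R01, R02) ∈ RMACcoord q := by
  have hp : p = fullLaw (margXXZ q) pT pU1c pU2c pYc := by
    funext ω
    obtain ⟨x1, x2, z, t, u1, u2, y⟩ := ω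
    exact hpdef x1 x2 z t u1 u2 y
  have hpp : IsPMF p := hp ▸ fullLaw_pmf (margXXZ_pmf hq) hpT hpU1 hpU2 hpY
  exact mem_closure_of_add_eps fun ε hε =>
    achievable_of_rateFacts hq hpT hpU1 hpU2 hpY hp hcons rfl rfl rfl rfl rfl rfl rfl rfl
      (rateFacts p hpp R1 R2 R01 R02 h1 h2 h3 h4 h5 h6 h7 h8) hε
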